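/- If A and B are quasi-isomorphic finite-type differential Poincaré duality algebras of dimension n ≥ 7 with H^{≤3}(A) = H^{≤3}(B) = k and A^{≤2} = B^{≤2} = k, then there exists a differential Poincaré duality algebra C and quasi-isomorphisms of CDGAs A → C and B → C. -/

import Mathlib

namespace PDCDGA

variable {k : Type} [Field k]

/-- Graded commutativity with Koszul signs, together with the convention that
squares of odd-degree elements vanish (also in characteristic 2). -/
structure GradedComm {A : Type} [Ring A] [Algebra k A] (𝒜 : ℕ → Submodule k A) : Prop where
  mul_comm : ∀ (i j : ℕ) (a b : A), a ∈ 𝒜 i → b ∈ 𝒜 j →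
    a * b = ((-1 : k) ^ (i * j)) • (b * a)
  odd_sq : ∀ i : ℕ, Odd i → ∀ a ∈ 𝒜 i, a * a = 0

/-- A `k`-linear differential of degree `+1` satisfying the graded Leibniz rule. -/
structure IsDifferential {A : Type} [Ring A] [Algebra k A] (𝒜 : ℕ → Submodule k A)
    (d : A →ₗ[k] A) : Prop where
  grade : ∀ i : ℕ, ∀ a ∈ 𝒜 i, d a ∈ 𝒜 (i + 1)
  d_sq : ∀ a : A, d (d a) = 0
  leibniz : ∀ (i : ℕ) (a b : A), a ∈ 𝒜 i →
    d (a * b) = d a * b + ((-1 : k) ^ i) • (a * d b)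

/-- An orientation `ε : A → k`, concentrated in degree `n`, vanishing on boundaries
and inducing an epimorphism `Hⁿ(A) → k`. -/
structure IsOrientation {A : Type} [Ring A] [Algebra k A] (𝒜 : ℕ → Submodule k A)
    (d : A →ₗ[k] A) (n : ℕ) (ε : A →ₗ[k] k) : Prop where
  homog : ∀ i : ℕ, i ≠ n → ∀ a ∈ 𝒜 i, ε a = 0
  eps_d : ∀ a : A, ε (d a) = 0
  exists_cocycle : ∃ μ : A, μ ∈ 𝒜 n ∧ d μ = 0 ∧ ε μ = 1

/-- The orphan ideal `O = {a | ∀ b, ε (a·b) = 0}` (as a `k`-submodule). -/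
def Orphans {A : Type} [Ring A] [Algebra k A] (ε : A →ₗ[k] k) : Submodule k A :=
  ⨅ b : A, LinearMap.ker (ε ∘ₗ LinearMap.mulRight k b)

lemma mem_orphans {A : Type} [Ring A] [Algebra k A] (ε : A →ₗ[k] k) (a : A) :
    a ∈ Orphans ε ↔ ∀ b : A, ε (a * b) = 0 := by
  simp [Orphans]

/-- `H^*(A,d)` is a Poincaré duality algebra in dimension `n` with respect to the
orientation `ε`: every nonzero cohomology class pairs nontrivially with some class
in the complementary degree. -/
def CohomologyPD {A : Type} [Ring A] [Algebra k A] (𝒜 : ℕ → Submodule k A)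
    (d : A →ₗ[k] A) (n : ℕ) (ε : A →ₗ[k] k) : Prop :=
  ∀ (i : ℕ) (a : A), a ∈ 𝒜 i → d a = 0 → a ∉ LinearMap.range d →
    ∃ (j : ℕ) (b : A), i + j = n ∧ b ∈ 𝒜 j ∧ d b = 0 ∧ ε (a * b) ≠ 0

/-- The orphan ideal is `N`-half-acyclic: `Hⁱ(O) = 0` for `n/2 + 1 ≤ i ≤ N`
(the condition `n/2 + 1 ≤ i` is written as `n + 2 ≤ 2 * i`). -/
def OrphansHalfAcyclic {A : Type} [Ring A] [Algebra k A] (𝒜 : ℕ → Submodule k A)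
    (d : A →ₗ[k] A) (n : ℕ) (ε : A →ₗ[k] k) (N : ℕ) : Prop :=
  ∀ i : ℕ, n + 2 ≤ 2 * i → i ≤ N → ∀ a : A, a ∈ Orphans ε → a ∈ 𝒜 i → d a = 0 →
    ∃ b : A, b ∈ Orphans ε ∧ b ∈ 𝒜 (i - 1) ∧ a = d b

/-- A chain map is a quasi-isomorphism: it induces a bijection on cohomology. -/
def IsQuasiIso {A B : Type} [Ring A] [Algebra k A] [Ring B] [Algebra k B]
    (d : A →ₗ[k] A) (D : B →ₗ[k] B) (f : A → B) : Prop :=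
  (∀ a : A, d a = 0 → (∃ b : B, f a = D b) → ∃ a' : A, a = d a') ∧
  (∀ x : B, D x = 0 → ∃ (a : A) (b : B), d a = 0 ∧ x = f a + D b)

/-- Indices of the monomial basis of `Λ(c₁,…,c_l,w₁,…,w_l)`, where `c_i` has degree
`q+1` and `w_i` has degree `q`: exponents of odd-degree generators are at most 1. -/
def MonIdx (q l : ℕ) : Type :=
  {se : (Fin l → ℕ) × (Fin l → ℕ) //
    (Odd (q + 1) → ∀ i, se.1 i ≤ 1) ∧ (Odd q → ∀ i, se.2 i ≤ 1)}

/-- The monomial `c₁^{s₁} ⋯ c_l^{s_l} · w₁^{e₁} ⋯ w_l^{e_l}`. -/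
def monomial {B : Type} [Monoid B] {l : ℕ} (c w : Fin l → B)
    (μ : (Fin l → ℕ) × (Fin l → ℕ)) : B :=
  (((List.finRange l).map fun i => c i ^ μ.1 i).prod) *
    (((List.finRange l).map fun i => w i ^ μ.2 i).prod)

/-- A bundled CDGA over `k`. -/
structure CDGAPack (k : Type) [Field k] : Type 1 where
  carrier : Type
  [ringI : Ring carrier]
  [algI : Algebra k carrier]
  grading : ℕ → Submodule k carrier
  [gradedI : GradedRing grading]
  diff : carrier →ₗ[k] carrier
  gcomm : GradedComm grading
  isdiff : IsDifferential grading diff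

attribute [instance] CDGAPack.ringI CDGAPack.algI CDGAPack.gradedI

/-- A morphism of CDGAs (graded algebra chain map) which is a quasi-isomorphism. -/
def IsQuasiIsoMap {k : Type} [Field k] (X Y : CDGAPack k)
    (f : X.carrier →ₐ[k] Y.carrier) : Prop :=
  (∀ i : ℕ, ∀ a ∈ X.grading i, f a ∈ Y.grading i) ∧
  (∀ a : X.carrier, Y.diff (f a) = f (X.diff a)) ∧
  IsQuasiIso X.diff Y.diff ⇑f

/-- One step of a zig-zag: there is a quasi-isomorphism of CDGAs `X → Y`. -/
def QIStep {k : Type} [Field k] (X Y : CDGAPack k) : Prop :=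
  ∃ f : X.carrier →ₐ[k] Y.carrier, IsQuasiIsoMap X Y f

/-- Weak equivalence of CDGAs: connected by a zig-zag of quasi-isomorphisms. -/
def WeaklyEquivalent {k : Type} [Field k] (X Y : CDGAPack k) : Prop :=
  Relation.EqvGen QIStep X Y

/-!
Every zig-zag of quasi-isomorphisms between `X` and `Y` becomes a single cospan `X → A ← Y` whose
legs are isomorphisms on cohomology up to a prescribed degree, with `A` simply connected and of
finite type. The step replacing a span `A ← S → B` by a cospan factors the multiplication
`S ⊗ S → S` through a relative free extension `S ⊗ S → P`, built by adjoining generators that kill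
the cohomology of the mapping cone degree by degree, and pushes `P` out along `S ⊗ S → A ⊗ B`.

The orientation of `X` extends to a closed functional `ε` on `A`. Dividing by the orphans of `ε`,
the elements `a` with `ε (a * b) = 0` for all `b`, gives a Poincaré duality algebra, but the
quotient map may fail to be a quasi-isomorphism, because an orphan may be the boundary of an element
that is not an orphan. So `A` is first tensored with a contractible algebra whose generators pair
with a basis of these boundaries up to the middle degree; they are then no longer orphans, and every
cocycle of the quotient up to the middle degree comes from a cocycle of `A`.

By Poincaré duality of `X` and of the quotient `C`, where boundaries are the orthogonal complement
of cocycles, a map `X → C` preserving orientations is injective on cohomology, and it is surjective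
as soon as it is so up to the middle degree. The leg from `Y` is handled by two-out-of-three.
-/

/-! ### Graded algebras and their tensor products -/

section GradedAlgebra

open DirectSum
open GradedAlgebra (proj)

variable {A : Type} [Ring A] [Algebra k A]

lemma intUnits_neg_one_pow_smul {M : Type} [AddCommGroup M] [Module k M] (n : ℕ) (x : M) :
    (-1 : ℤˣ) ^ n • x = (-1 : k) ^ n • x := by
  rw [Units.smul_def, Units.val_pow_eq_pow_val, ← Int.cast_smul_eq_zsmul k]
  simp

section Projections

variable (𝒜 : ℕ → Submodule k A) [GradedRing 𝒜]

lemma proj_of_mem {i : ℕ} {a : A} (ha : a ∈ 𝒜 i) : proj 𝒜 i a = a := by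
  rw [GradedAlgebra.proj_apply, decompose_of_mem_same 𝒜 ha]

lemma proj_of_mem_ne {i j : ℕ} {a : A} (ha : a ∈ 𝒜 i) (hij : i ≠ j) : proj 𝒜 j a = 0 := by
  rw [GradedAlgebra.proj_apply, decompose_of_mem_ne 𝒜 ha hij]

lemma proj_mem (i : ℕ) (a : A) : proj 𝒜 i a ∈ 𝒜 i := by
  rw [GradedAlgebra.proj_apply]
  exact (decompose 𝒜 a i).2

@[elab_as_elim]
theorem homogeneous_induction {p : A → Prop} (a : A) (zero : p 0)
    (add : ∀ a b, p a → p b → p (a + b)) (homogeneous : ∀ i, ∀ a ∈ 𝒜 i, p a) : p a :=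
  Decomposition.inductionOn 𝒜 zero (fun {i} a => homogeneous i a a.2) add a

theorem linearMap_ext_homogeneous {M : Type} [AddCommGroup M] [Module k M] {f g : A →ₗ[k] M}
    (h : ∀ i, ∀ a ∈ 𝒜 i, f a = g a) : f = g :=
  decompose_lhom_ext 𝒜 fun i => LinearMap.ext fun a => h i a a.2

theorem exists_eq_sum_proj (a : A) :
    ∃ N, ∀ M ≥ N, a = ∑ i ∈ Finset.range M, proj 𝒜 i a := by
  classical
  refine ⟨((decompose 𝒜 a).support.sup id) + 1, fun M hM => ?_⟩
  conv_lhs => rw [← sum_support_decompose 𝒜 a]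
  refine Finset.sum_subset (fun i hi => ?_) fun i _ hi => ?_
  · exact Finset.mem_range.2 ((Nat.lt_succ_of_le (Finset.le_sup (f := id) hi)).trans_le hM)
  · simpa using hi

lemma mem_of_forall_proj_mem {S : Submodule k A} {a : A} (h : ∀ i, proj 𝒜 i a ∈ S) : a ∈ S := by
  obtain ⟨N, hN⟩ := exists_eq_sum_proj 𝒜 a
  rw [hN N le_rfl]
  exact S.sum_mem fun i _ => h i

end Projections

/-- The grading determined by a family of linear projections onto the pieces `𝒯 i`. -/
@[reducible] noncomputable def gradedRingOfProjections (𝒯 : ℕ → Submodule k A) (π : ℕ → A →ₗ[k] A)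
    (proj_same : ∀ i, ∀ a ∈ 𝒯 i, π i a = a) (proj_ne : ∀ i j, i ≠ j → ∀ a ∈ 𝒯 i, π j a = 0)
    (iSup_eq_top : ⨆ i, 𝒯 i = ⊤) (one_mem : (1 : A) ∈ 𝒯 0)
    (mul_mem : ∀ i j a b, a ∈ 𝒯 i → b ∈ 𝒯 j → a * b ∈ 𝒯 (i + j)) : GradedRing 𝒯 :=
  have independent : iSupIndep 𝒯 := by
    refine iSupIndep_def.2 fun i => Submodule.disjoint_def.2 fun x hx hx' => ?_
    have others_le : (⨆ j, ⨆ (_ : j ≠ i), 𝒯 j) ≤ LinearMap.ker (π i) :=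
      iSup_le fun j => iSup_le fun hj => proj_ne j i hj
    rw [← proj_same i x hx]
    exact others_le hx'
  letI := (isInternal_submodule_of_iSupIndep_of_iSup_eq_top
    independent iSup_eq_top).chooseDecomposition
  { one_mem := one_mem, mul_mem := fun {i j a b} => mul_mem i j a b }

section GradeInvolution

variable (𝒜 : ℕ → Submodule k A) [GradedRing 𝒜]

/-- The grade involution `a ↦ (-1)^{|a|} a`, which carries the Koszul signs. -/
noncomputable def gradeInvolution : A →ₗ[k] A :=
  toModule k ℕ A (fun i => (-1 : k) ^ i • (𝒜 i).subtype) ∘ₗ (decomposeLinearEquiv 𝒜).toLinearMap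

lemma gradeInvolution_of_mem {i : ℕ} {a : A} (ha : a ∈ 𝒜 i) :
    gradeInvolution 𝒜 a = (-1 : k) ^ i • a := by
  simp only [gradeInvolution, LinearMap.comp_apply, LinearEquiv.coe_coe,
    decomposeLinearEquiv_apply, decompose_of_mem 𝒜 ha]
  exact toModule_lof k i _

end GradeInvolution

end GradedAlgebra

section TensorGrading

open TensorProduct
open GradedAlgebra (proj)

variable {A : Type} [Ring A] [Algebra k A] (𝒜 : ℕ → Submodule k A) [GradedRing 𝒜]
variable {B : Type} [Ring B] [Algebra k B] (ℬ : ℕ → Submodule k B) [GradedRing ℬ]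

/-- The bilinear map `(a, b) ↦ a ⊗ b` into the graded tensor product. -/
noncomputable def tmul : A →ₗ[k] B →ₗ[k] 𝒜 ᵍ⊗[k] ℬ :=
  (TensorProduct.mk k A B).compr₂ (GradedTensorProduct.of k 𝒜 ℬ).toLinearMap

variable {𝒜 ℬ}

lemma tmul_one_one : tmul 𝒜 ℬ 1 1 = 1 := rfl

lemma tmul_mul_tmul {j i : ℕ} (a : A) {b : B} (hb : b ∈ ℬ j) {a' : A} (ha' : a' ∈ 𝒜 i) (b' : B) :
    tmul 𝒜 ℬ a b * tmul 𝒜 ℬ a' b' = (-1 : k) ^ (j * i) • tmul 𝒜 ℬ (a * a') (b * b') := by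
  refine (GradedTensorProduct.tmul_coe_mul_coe_tmul 𝒜 ℬ a ⟨b, hb⟩ ⟨a', ha'⟩ b').trans
    (intUnits_neg_one_pow_smul (k := k) _ _)

lemma tmul_one_mul_tmul (a a' : A) (b' : B) :
    tmul 𝒜 ℬ a 1 * tmul 𝒜 ℬ a' b' = tmul 𝒜 ℬ (a * a') b' := by
  induction a' using homogeneous_induction 𝒜 with
  | zero => simp
  | add x y hx hy => simp [mul_add, hx, hy]
  | homogeneous i x hx => simp [tmul_mul_tmul a (SetLike.GradedOne.one_mem : (1 : B) ∈ ℬ 0) hx]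

@[elab_as_elim]
theorem tmul_induction {p : 𝒜 ᵍ⊗[k] ℬ → Prop} (x : 𝒜 ᵍ⊗[k] ℬ) (zero : p 0)
    (add : ∀ x y, p x → p y → p (x + y))
    (tmul : ∀ i j, ∀ a ∈ 𝒜 i, ∀ b ∈ ℬ j, p (tmul 𝒜 ℬ a b)) : p x := by
  refine TensorProduct.induction_on (motive := p) x zero (fun a b => ?_) add
  change p (PDCDGA.tmul 𝒜 ℬ a b)
  induction a using homogeneous_induction 𝒜 with
  | zero => simpa using zero
  | add a a' ha ha' => simpa using add _ _ ha ha'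
  | homogeneous i a ha =>
    induction b using homogeneous_induction ℬ with
    | zero => simpa using zero
    | add b b' hb hb' => simpa using add _ _ hb hb'
    | homogeneous j b hb => exact tmul i j a ha b hb

theorem linearMap_ext_tmul {M : Type} [AddCommGroup M] [Module k M] {f g : 𝒜 ᵍ⊗[k] ℬ →ₗ[k] M}
    (h : ∀ i j, ∀ a ∈ 𝒜 i, ∀ b ∈ ℬ j, f (tmul 𝒜 ℬ a b) = g (tmul 𝒜 ℬ a b)) : f = g := by
  refine LinearMap.ext fun x => ?_
  induction x using tmul_induction with
  | zero => simp
  | add x y hx hy => simp [hx, hy]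
  | tmul i j a ha b hb => exact h i j a ha b hb

/-- The linear map out of the graded tensor product induced by a bilinear map. -/
noncomputable def tmulLift {M : Type} [AddCommGroup M] [Module k M] (f : A →ₗ[k] B →ₗ[k] M) :
    𝒜 ᵍ⊗[k] ℬ →ₗ[k] M :=
  TensorProduct.lift f ∘ₗ (GradedTensorProduct.of k 𝒜 ℬ).symm.toLinearMap

@[simp] lemma tmulLift_tmul {M : Type} [AddCommGroup M] [Module k M] (f : A →ₗ[k] B →ₗ[k] M)
    (a : A) (b : B) : tmulLift f (tmul 𝒜 ℬ a b) = f a b := by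
  simp [tmulLift, tmul]

variable (𝒜 ℬ) in
/-- The endomorphism `f ⊗ g` of the graded tensor product, without Koszul signs. -/
noncomputable def tmulMap (f : A →ₗ[k] A) (g : B →ₗ[k] B) : 𝒜 ᵍ⊗[k] ℬ →ₗ[k] 𝒜 ᵍ⊗[k] ℬ :=
  tmulLift ((tmul 𝒜 ℬ).compl₁₂ f g)

@[simp] lemma tmulMap_tmul (f : A →ₗ[k] A) (g : B →ₗ[k] B) (a : A) (b : B) :
    tmulMap 𝒜 ℬ f g (tmul 𝒜 ℬ a b) = tmul 𝒜 ℬ (f a) (g b) := by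
  simp [tmulMap]

variable (𝒜 ℬ)

/-- The total grading on the graded tensor product. -/
noncomputable def tensorGrading (n : ℕ) : Submodule k (𝒜 ᵍ⊗[k] ℬ) :=
  Submodule.span k {x | ∃ i j, i + j = n ∧ ∃ a ∈ 𝒜 i, ∃ b ∈ ℬ j, tmul 𝒜 ℬ a b = x}

variable {𝒜 ℬ}

lemma tmul_mem {i j n : ℕ} (h : i + j = n) {a : A} (ha : a ∈ 𝒜 i) {b : B} (hb : b ∈ ℬ j) :
    tmul 𝒜 ℬ a b ∈ tensorGrading 𝒜 ℬ n :=
  Submodule.subset_span ⟨i, j, h, a, ha, b, hb, rfl⟩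

@[elab_as_elim]
theorem tensorGrading_induction {n : ℕ} {p : ∀ x, x ∈ tensorGrading 𝒜 ℬ n → Prop}
    (zero : p 0 (Submodule.zero_mem _))
    (add : ∀ x y hx hy, p x hx → p y hy → p (x + y) (Submodule.add_mem _ hx hy))
    (tmul : ∀ i j (hij : i + j = n), ∀ a (ha : a ∈ 𝒜 i), ∀ b (hb : b ∈ ℬ j),
      p (tmul 𝒜 ℬ a b) (tmul_mem hij ha hb))
    {x : 𝒜 ᵍ⊗[k] ℬ} (hx : x ∈ tensorGrading 𝒜 ℬ n) : p x hx := by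
  -- The property is not assumed to be closed under scalars, so these are carried along.
  suffices smul : ∀ c : k, p (c • x) (Submodule.smul_mem _ c hx) by simpa using smul 1
  induction hx using Submodule.span_induction with
  | mem x hx =>
    obtain ⟨i, j, hij, a, ha, b, hb, rfl⟩ := hx
    intro c
    simpa using tmul i j hij (c • a) (Submodule.smul_mem _ c ha) b hb
  | zero => exact fun c => by simpa only [smul_zero] using zero
  | add x y hx hy ihx ihy =>
    intro c
    simpa only [smul_add] using add _ _ _ _ (ihx c) (ihy c)
  | smul c x _ ih => exact fun c' => by simpa only [smul_smul] using ih (c' * c)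

variable (𝒜 ℬ)

/-- The projection of the graded tensor product onto its part of total degree `n`. -/
noncomputable def tensorProj (n : ℕ) : 𝒜 ᵍ⊗[k] ℬ →ₗ[k] 𝒜 ᵍ⊗[k] ℬ :=
  ∑ p ∈ Finset.HasAntidiagonal.antidiagonal n, tmulMap 𝒜 ℬ (proj 𝒜 p.1) (proj ℬ p.2)

lemma tensorProj_tmul {i j n : ℕ} {a : A} (ha : a ∈ 𝒜 i) {b : B} (hb : b ∈ ℬ j) :
    tensorProj 𝒜 ℬ n (tmul 𝒜 ℬ a b) = if i + j = n then tmul 𝒜 ℬ a b else 0 := by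
  have proj_tmul (p : ℕ × ℕ) : tmul 𝒜 ℬ (proj 𝒜 p.1 a) (proj ℬ p.2 b) =
      if (i, j) = p then tmul 𝒜 ℬ a b else 0 := by
    by_cases hi : i = p.1
    · by_cases hj : j = p.2
      · rw [← hi, ← hj, proj_of_mem 𝒜 ha, proj_of_mem ℬ hb, if_pos (Prod.ext hi hj)]
      · rw [proj_of_mem_ne ℬ hb hj, map_zero, if_neg (by grind)]
    · rw [proj_of_mem_ne 𝒜 ha hi, map_zero, LinearMap.zero_apply, if_neg (by grind)]
  simp only [tensorProj, LinearMap.sum_apply, tmulMap_tmul, proj_tmul, Finset.sum_ite_eq,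
    Finset.HasAntidiagonal.mem_antidiagonal]

variable {𝒜 ℬ} in
lemma mul_mem_tensorGrading {m n : ℕ} {x y : 𝒜 ᵍ⊗[k] ℬ} (hx : x ∈ tensorGrading 𝒜 ℬ m)
    (hy : y ∈ tensorGrading 𝒜 ℬ n) : x * y ∈ tensorGrading 𝒜 ℬ (m + n) := by
  induction hx using tensorGrading_induction with
  | zero => simp
  | add x x' _ _ hx hx' => rw [add_mul]; exact Submodule.add_mem _ hx hx'
  | tmul i j hij a ha b hb =>
    induction hy using tensorGrading_induction with
    | zero => simp
    | add y y' _ _ hy hy' => rw [mul_add]; exact Submodule.add_mem _ hy hy'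
    | tmul i' j' hij' a' ha' b' hb' =>
      rw [tmul_mul_tmul a hb ha' b']
      exact Submodule.smul_mem _ _ <|
        tmul_mem (by omega) (SetLike.mul_mem_graded ha ha') (SetLike.mul_mem_graded hb hb')

noncomputable instance tensorGrading.gradedRing : GradedRing (tensorGrading 𝒜 ℬ) := by
  refine gradedRingOfProjections (tensorGrading 𝒜 ℬ) (tensorProj 𝒜 ℬ) ?_ ?_ ?_ ?_ ?_
  · intro n x hx
    induction hx using tensorGrading_induction with
    | zero => simp
    | add x y _ _ hx hy => rw [map_add, hx, hy]
    | tmul i j hij a ha b hb => rw [tensorProj_tmul 𝒜 ℬ ha hb, if_pos hij]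
  · intro n m hnm x hx
    induction hx using tensorGrading_induction with
    | zero => simp
    | add x y _ _ hx hy => rw [map_add, hx, hy, add_zero]
    | tmul i j hij a ha b hb => rw [tensorProj_tmul 𝒜 ℬ ha hb, if_neg (by omega)]
  · refine eq_top_iff.2 fun x _ => ?_
    induction x using tmul_induction with
    | zero => exact Submodule.zero_mem _
    | add x y hx hy => exact Submodule.add_mem _ (hx trivial) (hy trivial)
    | tmul i j a ha b hb => exact Submodule.mem_iSup_of_mem (i + j) (tmul_mem rfl ha hb)
  · exact tmul_mem (add_zero 0) SetLike.GradedOne.one_mem SetLike.GradedOne.one_mem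
  · exact fun i j a b => mul_mem_tensorGrading

variable {𝒜 ℬ}

lemma tensorGrading_mul_comm (hA : GradedComm 𝒜) (hB : GradedComm ℬ) {m n : ℕ}
    {x y : 𝒜 ᵍ⊗[k] ℬ} (hx : x ∈ tensorGrading 𝒜 ℬ m) (hy : y ∈ tensorGrading 𝒜 ℬ n) :
    x * y = (-1 : k) ^ (m * n) • (y * x) := by
  induction hx using tensorGrading_induction with
  | zero => simp
  | add x x' _ _ hx hx' => rw [add_mul, hx, hx', mul_add, smul_add]
  | tmul i j hij a ha b hb =>
    induction hy using tensorGrading_induction with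
    | zero => simp
    | add y y' _ _ hy hy' => rw [mul_add, hy, hy', add_mul, smul_add]
    | tmul i' j' hij' a' ha' b' hb' =>
      subst hij hij'
      rw [tmul_mul_tmul a hb ha' b', tmul_mul_tmul a' hb' ha b, hA.mul_comm i i' a a' ha ha',
        hB.mul_comm j j' b b' hb hb']
      simp only [map_smul, LinearMap.smul_apply, smul_smul, ← pow_add]
      congr 1
      apply neg_one_pow_congr
      simp only [Nat.even_add, Nat.even_mul]
      tauto

lemma leibniz_of_tmul {D : 𝒜 ᵍ⊗[k] ℬ →ₗ[k] 𝒜 ᵍ⊗[k] ℬ}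
    (h : ∀ i j, ∀ a ∈ 𝒜 i, ∀ b ∈ ℬ j, ∀ i' j', ∀ a' ∈ 𝒜 i', ∀ b' ∈ ℬ j',
      D (tmul 𝒜 ℬ a b * tmul 𝒜 ℬ a' b') = D (tmul 𝒜 ℬ a b) * tmul 𝒜 ℬ a' b' +
        (-1 : k) ^ (i + j) • (tmul 𝒜 ℬ a b * D (tmul 𝒜 ℬ a' b')))
    (n : ℕ) (x y : 𝒜 ᵍ⊗[k] ℬ) (hx : x ∈ tensorGrading 𝒜 ℬ n) :
    D (x * y) = D x * y + (-1 : k) ^ n • (x * D y) := by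
  induction hx using tensorGrading_induction with
  | zero => simp
  | add x x' _ _ hx hx' => simp only [add_mul, map_add, hx, hx', smul_add]; abel
  | tmul i j hij a ha b hb =>
    induction y using tmul_induction with
    | zero => simp
    | add y y' hy hy' => simp only [mul_add, map_add, hy, hy', smul_add]; abel
    | tmul i' j' a' ha' b' hb' => exact hij ▸ h i j a ha b hb i' j' a' ha' b' hb'

theorem gradedComm_tensorGrading (hA : GradedComm 𝒜) (hB : GradedComm ℬ) :
    GradedComm (tensorGrading 𝒜 ℬ) where
  mul_comm i j a b := tensorGrading_mul_comm hA hB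
  odd_sq n hn x hx := by
    induction hx using tensorGrading_induction with
    | zero => simp
    | add x y hx hy hxx hyy =>
      have anticomm : x * y = -(y * x) := by
        simpa [(hn.mul hn).neg_one_pow] using tensorGrading_mul_comm hA hB hx hy
      simp [add_mul, mul_add, hxx, hyy, anticomm]
    | tmul i j hij a ha b hb =>
      rw [tmul_mul_tmul a hb ha b]
      rcases Nat.even_or_odd i with hi | hi
      · have hj : Odd j := by grind
        simp [hB.odd_sq j hj b hb]
      · simp [hA.odd_sq i hi a ha]

end TensorGrading

/-! ### Morphisms and twisted tensor products -/

section Morphisms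

open GradedAlgebra (proj)

namespace CDGAPack

/-- Morphisms of CDGAs: algebra maps preserving the grading and commuting with the
differentials. -/
structure Hom (X Y : CDGAPack k) extends X.carrier →ₐ[k] Y.carrier where
  map_mem' : ∀ i, ∀ a ∈ X.grading i, toFun a ∈ Y.grading i
  diff_map' : ∀ a, Y.diff (toFun a) = toFun (X.diff a)

namespace Hom

variable {X Y Z : CDGAPack k}

instance : FunLike (X.Hom Y) X.carrier Y.carrier where
  coe f := f.toAlgHom
  coe_injective f g h := by
    obtain ⟨f, _, _⟩ := f
    obtain ⟨g, _, _⟩ := g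
    congr
    exact DFunLike.coe_injective h

instance : AlgHomClass (X.Hom Y) k X.carrier Y.carrier where
  map_mul f := map_mul f.toAlgHom
  map_one f := map_one f.toAlgHom
  map_add f := map_add f.toAlgHom
  map_zero f := map_zero f.toAlgHom
  commutes f := f.toAlgHom.commutes

lemma map_mem (f : X.Hom Y) {i : ℕ} {a : X.carrier} (ha : a ∈ X.grading i) : f a ∈ Y.grading i :=
  f.map_mem' i a ha

lemma diff_map (f : X.Hom Y) (a : X.carrier) : Y.diff (f a) = f (X.diff a) :=
  f.diff_map' a

lemma ext {f g : X.Hom Y} (h : ∀ a, f a = g a) : f = g :=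
  DFunLike.ext f g h

/-- The identity morphism. -/
def id (X : CDGAPack k) : X.Hom X where
  toAlgHom := AlgHom.id k X.carrier
  map_mem' _ _ ha := ha
  diff_map' _ := rfl

/-- Composition of morphisms. -/
def comp (g : Y.Hom Z) (f : X.Hom Y) : X.Hom Z where
  toAlgHom := g.toAlgHom.comp f.toAlgHom
  map_mem' _ _ ha := g.map_mem (f.map_mem ha)
  diff_map' a := (g.diff_map _).trans (congrArg g (f.diff_map a))

@[simp] lemma comp_apply (g : Y.Hom Z) (f : X.Hom Y) (a : X.carrier) : g.comp f a = g (f a) := rfl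

lemma comp_assoc {W : CDGAPack k} (h : Z.Hom W) (g : Y.Hom Z) (f : X.Hom Y) :
    (h.comp g).comp f = h.comp (g.comp f) := rfl

lemma proj_map (f : X.Hom Y) (i : ℕ) (a : X.carrier) :
    proj Y.grading i (f a) = f (proj X.grading i a) := by
  induction a using homogeneous_induction X.grading with
  | zero => simp only [map_zero]
  | add a b ha hb => simp only [map_add, ha, hb]
  | homogeneous j a ha =>
    by_cases h : j = i
    · subst h
      rw [proj_of_mem _ ha, proj_of_mem _ (f.map_mem ha)]
    · rw [proj_of_mem_ne _ ha h, proj_of_mem_ne _ (f.map_mem ha) h, map_zero]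

end Hom

variable (X : CDGAPack k)

lemma one_mem : (1 : X.carrier) ∈ X.grading 0 :=
  SetLike.GradedOne.one_mem

lemma diff_one : X.diff 1 = 0 := by
  simpa using X.isdiff.leibniz 0 1 1 X.one_mem

variable {X} in
lemma mul_mem {i j m : ℕ} {a b : X.carrier} (ha : a ∈ X.grading i) (hb : b ∈ X.grading j)
    (h : i + j = m) : a * b ∈ X.grading m :=
  h ▸ SetLike.mul_mem_graded ha hb

lemma proj_succ_diff (i : ℕ) (a : X.carrier) :
    proj X.grading (i + 1) (X.diff a) = X.diff (proj X.grading i a) := by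
  induction a using homogeneous_induction X.grading with
  | zero => simp only [map_zero]
  | add a b ha hb => simp only [map_add, ha, hb]
  | homogeneous j a ha =>
    by_cases h : j = i
    · subst h
      rw [proj_of_mem _ ha, proj_of_mem _ (X.isdiff.grade _ _ ha)]
    · rw [proj_of_mem_ne _ ha h, proj_of_mem_ne _ (X.isdiff.grade _ _ ha) (by omega), map_zero]

lemma proj_zero_diff (a : X.carrier) : proj X.grading 0 (X.diff a) = 0 := by
  induction a using homogeneous_induction X.grading with
  | zero => simp only [map_zero]
  | add a b ha hb => simp only [map_add, ha, hb, add_zero]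
  | homogeneous j a ha => rw [proj_of_mem_ne _ (X.isdiff.grade _ _ ha) (by omega)]

lemma proj_diff_mem_range (i : ℕ) {a : X.carrier} (ha : a ∈ LinearMap.range X.diff) :
    proj X.grading i a ∈ LinearMap.range X.diff := by
  obtain ⟨b, rfl⟩ := ha
  cases i with
  | zero => exact X.proj_zero_diff b ▸ zero_mem _
  | succ i => exact X.proj_succ_diff i b ▸ LinearMap.mem_range_self _ _

lemma diff_mul_of_diff_eq_zero (c : X.carrier) {z : X.carrier} (hz : X.diff z = 0) :
    X.diff (c * z) = X.diff c * z := by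
  refine LinearMap.congr_fun (linearMap_ext_homogeneous X.grading
    (f := X.diff ∘ₗ LinearMap.mulRight k z) (g := LinearMap.mulRight k z ∘ₗ X.diff)
    fun i a ha => ?_) c
  simp [X.isdiff.leibniz i a z ha, hz]

/-- The cocycles of degree `i`. -/
def cocycles (i : ℕ) : Submodule k X.carrier :=
  X.grading i ⊓ LinearMap.ker X.diff

lemma cocycles_eq_bot {i : ℕ} (h : X.grading i = ⊥) : X.cocycles i = ⊥ :=
  eq_bot_iff.2 (inf_le_left.trans h.le)

lemma proj_mem_cocycles (i : ℕ) {a : X.carrier} (ha : X.diff a = 0) :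
    proj X.grading i a ∈ X.cocycles i :=
  ⟨proj_mem _ _ _, LinearMap.mem_ker.2 (by rw [← X.proj_succ_diff, ha, map_zero])⟩

variable {X}

lemma mem_cocycles {i : ℕ} {a : X.carrier} :
    a ∈ X.cocycles i ↔ a ∈ X.grading i ∧ X.diff a = 0 := Iff.rfl

lemma Hom.map_mem_cocycles {Y : CDGAPack k} (f : X.Hom Y) {i : ℕ} {a : X.carrier}
    (ha : a ∈ X.cocycles i) : f a ∈ Y.cocycles i :=
  ⟨f.map_mem ha.1, (f.diff_map a).trans (by rw [LinearMap.mem_ker.1 ha.2, map_zero])⟩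

end CDGAPack

end Morphisms

section Twist

open TensorProduct

/-- A graded-commutative algebra with a derivation `δ` of degree `1 - e`. It serves as the fibre of
a tensor product twisted by a cocycle `z` of degree `e`, where `d b = z δ b`. The degree of `δ` is
expressed without subtraction; `δ` squares to zero unless `e` is odd, when `z² = 0` anyway. -/
structure TwistFiber (k : Type) [Field k] (e : ℕ) : Type 1 where
  carrier : Type
  [ring : Ring carrier]
  [algebra : Algebra k carrier]
  grading : ℕ → Submodule k carrier
  [gradedRing : GradedRing grading]
  gcomm : GradedComm grading
  deriv : carrier →ₗ[k] carrier
  deriv_mem : ∀ j, ∀ b ∈ grading j, (∃ m, m + e = j + 1 ∧ deriv b ∈ grading m) ∨ deriv b = 0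
  leibniz : ∀ j, ∀ b ∈ grading j, ∀ b',
    deriv (b * b') = deriv b * b' + (-1 : k) ^ ((e + 1) * j) • (b * deriv b')
  deriv_sq : Odd e ∨ ∀ b, deriv (deriv b) = 0

attribute [instance] TwistFiber.ring TwistFiber.algebra TwistFiber.gradedRing

/-- A CDGA as a fibre of degree `0`, twisted by the cocycle `1`. -/
abbrev CDGAPack.toTwistFiber (Y : CDGAPack k) : TwistFiber k 0 where
  carrier := Y.carrier
  grading := Y.grading
  gcomm := Y.gcomm
  deriv := Y.diff
  deriv_mem j b hb := Or.inl ⟨j + 1, rfl, Y.isdiff.grade j b hb⟩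
  leibniz j b hb b' := by simpa using Y.isdiff.leibniz j b b' hb
  deriv_sq := Or.inr Y.isdiff.d_sq

variable {e : ℕ}

lemma TwistFiber.deriv_one (F : TwistFiber k e) : F.deriv 1 = 0 := by
  simpa using F.leibniz 0 1 SetLike.GradedOne.one_mem 1

variable (X : CDGAPack k) (z : X.cocycles e) (F : TwistFiber k e)

/-- The differential `a ⊗ b ↦ da ⊗ b + (-1)^{|a|} a z ⊗ δ b`. -/
noncomputable def twistDiff : X.grading ᵍ⊗[k] F.grading →ₗ[k] X.grading ᵍ⊗[k] F.grading :=
  tmulMap X.grading F.grading X.diff LinearMap.id +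
    tmulMap X.grading F.grading (LinearMap.mulRight k z.1 ∘ₗ gradeInvolution X.grading) F.deriv

lemma twistDiff_tmul (a : X.carrier) (b : F.carrier) :
    twistDiff X z F (tmul X.grading F.grading a b) = tmul X.grading F.grading (X.diff a) b +
      tmul X.grading F.grading (gradeInvolution X.grading a * z) (F.deriv b) := by
  simp [twistDiff]

lemma twistDiff_tmul_of_mem {i : ℕ} {a : X.carrier} (ha : a ∈ X.grading i) (b : F.carrier) :
    twistDiff X z F (tmul X.grading F.grading a b) = tmul X.grading F.grading (X.diff a) b +
      (-1 : k) ^ i • tmul X.grading F.grading (a * z) (F.deriv b) := by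
  simp [twistDiff_tmul, gradeInvolution_of_mem _ ha]

lemma twistDiff_mem {n : ℕ} {x : X.grading ᵍ⊗[k] F.grading}
    (hx : x ∈ tensorGrading X.grading F.grading n) :
    twistDiff X z F x ∈ tensorGrading X.grading F.grading (n + 1) := by
  induction hx using tensorGrading_induction with
  | zero => simp
  | add x y _ _ hx hy => rw [map_add]; exact Submodule.add_mem _ hx hy
  | tmul i j hij a ha b hb =>
    rw [twistDiff_tmul_of_mem X z F ha]
    refine Submodule.add_mem _ (tmul_mem (by omega) (X.isdiff.grade i a ha) hb)
      (Submodule.smul_mem _ _ ?_)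
    obtain ⟨m, hm, hδb⟩ | hδb := F.deriv_mem j b hb
    · exact tmul_mem (by omega) (CDGAPack.mul_mem ha z.2.1 rfl) hδb
    · simp [hδb]

lemma twistDiff_twistDiff (x : X.grading ᵍ⊗[k] F.grading) :
    twistDiff X z F (twistDiff X z F x) = 0 := by
  induction x using tmul_induction with
  | zero => simp
  | add x y hx hy => simp [hx, hy]
  | tmul i _ a ha b _ =>
    have z_sq_deriv_sq :
        tmul X.grading F.grading (a * z * z) (F.deriv (F.deriv b)) = 0 := by
      obtain he | hδ := F.deriv_sq
      · simp [mul_assoc, X.gcomm.odd_sq e he z z.2.1]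
      · simp [hδ b]
    have diff_mul_z : X.diff (a * z) = X.diff a * z := by
      rw [X.isdiff.leibniz i a z ha, z.2.2, mul_zero, smul_zero, add_zero]
    rw [twistDiff_tmul_of_mem X z F ha, map_add, map_smul,
      twistDiff_tmul_of_mem X z F (X.isdiff.grade i a ha),
      twistDiff_tmul_of_mem X z F (CDGAPack.mul_mem ha z.2.1 rfl), z_sq_deriv_sq, diff_mul_z,
      X.isdiff.d_sq]
    simp [pow_succ]

lemma deriv_tmul_mul_tmul {j i' : ℕ} {a a' : X.carrier} {b : F.carrier} (b' : F.carrier)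
    (hb : b ∈ F.grading j) (ha' : a' ∈ X.grading i') :
    tmul X.grading F.grading (a * z) (F.deriv b) * tmul X.grading F.grading a' b' =
      (-1 : k) ^ ((j + 1) * i') • tmul X.grading F.grading (a * a' * z) (F.deriv b * b') := by
  obtain ⟨m, hm, hδb⟩ | hδb := F.deriv_mem j b hb
  · rw [tmul_mul_tmul _ hδb ha', mul_assoc, X.gcomm.mul_comm e i' z a' z.2.1 ha', mul_smul_comm,
      map_smul, LinearMap.smul_apply, smul_smul, ← pow_add, ← mul_assoc, ← add_mul, hm]
  · simp [hδb]

lemma twistDiff_leibniz (n : ℕ) (x y : X.grading ᵍ⊗[k] F.grading)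
    (hx : x ∈ tensorGrading X.grading F.grading n) :
    twistDiff X z F (x * y) =
      twistDiff X z F x * y + (-1 : k) ^ n • (x * twistDiff X z F y) := by
  refine leibniz_of_tmul (fun i j a ha b hb i' j' a' ha' b' _ => ?_) n x y hx
  rw [tmul_mul_tmul a hb ha' b', map_smul, twistDiff_tmul_of_mem X z F ha,
    twistDiff_tmul_of_mem X z F ha', twistDiff_tmul_of_mem X z F (CDGAPack.mul_mem ha ha' rfl),
    X.isdiff.leibniz i a a' ha, F.leibniz j b hb b', add_mul (tmul _ _ _ _), mul_add (tmul _ _ _ _),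
    smul_mul_assoc, mul_smul_comm, tmul_mul_tmul _ hb ha',
    tmul_mul_tmul a hb (X.isdiff.grade i' a' ha'),
    tmul_mul_tmul a hb (CDGAPack.mul_mem ha' z.2.1 rfl), deriv_tmul_mul_tmul X z F b' hb ha']
  simp only [map_add, map_smul, LinearMap.add_apply, LinearMap.smul_apply, smul_add, smul_smul,
    ← pow_add, ← mul_assoc]
  have sign₁ : (-1 : k) ^ (i + j + j * (i' + 1)) = (-1) ^ (j * i' + i) := by
    rw [show i + j + j * (i' + 1) = j * i' + i + 2 * j by ring, pow_add _ _ (2 * j), pow_mul _ 2]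
    simp
  have sign₂ : i + (j + 1) * i' = j * i' + (i + i') := by ring
  have sign₃ : i + j + (i' + j * (i' + e)) = j * i' + (i + i') + (e + 1) * j := by ring
  simp only [add_assoc] at sign₁ sign₂ sign₃ ⊢
  rw [sign₁, sign₂, sign₃]
  abel

/-- The twisted tensor product of a CDGA `X` with a fibre. -/
noncomputable abbrev twist : CDGAPack k where
  carrier := X.grading ᵍ⊗[k] F.grading
  grading := tensorGrading X.grading F.grading
  diff := twistDiff X z F
  gcomm := gradedComm_tensorGrading X.gcomm F.gcomm
  isdiff :=
    { grade := fun _ _ => twistDiff_mem X z F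
      d_sq := twistDiff_twistDiff X z F
      leibniz := twistDiff_leibniz X z F }

namespace twist

variable {X z F} in
@[elab_as_elim]
theorem induction {p : (twist X z F).carrier → Prop} (x : (twist X z F).carrier) (zero : p 0)
    (add : ∀ x y, p x → p y → p (x + y))
    (tmul : ∀ a b, p (tmul X.grading F.grading a b)) : p x :=
  tmul_induction x zero add fun _ _ a _ b _ => tmul a b

/-- The inclusion of the base of a twisted tensor product. -/
noncomputable def inl : X.Hom (twist X z F) where
  toAlgHom := GradedTensorProduct.includeLeft X.grading F.grading
  map_mem' i _ ha := tmul_mem (add_zero i) ha SetLike.GradedOne.one_mem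
  diff_map' a := by
    refine (twistDiff_tmul X z F a 1).trans ?_
    rw [F.deriv_one, map_zero, add_zero]
    rfl

variable {X z F} {Y : CDGAPack k}

/-- The algebra map `a ⊗ b ↦ f a * g b` out of a twisted tensor product. -/
noncomputable def liftAlgHom (f : X.Hom Y) (g : F.carrier →ₐ[k] Y.carrier)
    (hg : ∀ j, ∀ b ∈ F.grading j, g b ∈ Y.grading j) :
    X.grading ᵍ⊗[k] F.grading →ₐ[k] Y.carrier :=
  GradedTensorProduct.lift X.grading F.grading f.toAlgHom g fun i j a b => by
    refine (Y.gcomm.mul_comm i j _ _ (f.map_mem a.2) (hg j b b.2)).trans ?_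
    rw [intUnits_neg_one_pow_smul (k := k), mul_comm j i]
    rfl

@[simp] lemma liftAlgHom_tmul (f : X.Hom Y) (g : F.carrier →ₐ[k] Y.carrier)
    (hg : ∀ j, ∀ b ∈ F.grading j, g b ∈ Y.grading j) (a : X.carrier) (b : F.carrier) :
    liftAlgHom f g hg (tmul X.grading F.grading a b) = f a * g b :=
  GradedTensorProduct.lift_tmul ..

lemma liftAlgHom_mem (f : X.Hom Y) (g : F.carrier →ₐ[k] Y.carrier)
    (hg : ∀ j, ∀ b ∈ F.grading j, g b ∈ Y.grading j) {n : ℕ} {x : X.grading ᵍ⊗[k] F.grading}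
    (hx : x ∈ tensorGrading X.grading F.grading n) : liftAlgHom f g hg x ∈ Y.grading n := by
  induction hx using tensorGrading_induction with
  | zero => simp
  | add x y _ _ hx hy => rw [map_add]; exact Submodule.add_mem _ hx hy
  | tmul i j hij a ha b hb =>
    rw [liftAlgHom_tmul]
    exact CDGAPack.mul_mem (f.map_mem ha) (hg j b hb) hij

lemma diff_liftAlgHom (f : X.Hom Y) (g : F.carrier →ₐ[k] Y.carrier)
    (hg : ∀ j, ∀ b ∈ F.grading j, g b ∈ Y.grading j)
    (hgd : ∀ b, Y.diff (g b) = f z * g (F.deriv b)) (x : X.grading ᵍ⊗[k] F.grading) :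
    Y.diff (liftAlgHom f g hg x) = liftAlgHom f g hg (twistDiff X z F x) := by
  induction x using tmul_induction with
  | zero => simp
  | add x y hx hy => simp only [map_add, hx, hy]
  | tmul i _ a ha b _ =>
    rw [liftAlgHom_tmul, Y.isdiff.leibniz i _ _ (f.map_mem ha), hgd, f.diff_map,
      twistDiff_tmul_of_mem X z F ha]
    simp [mul_assoc]

/-- The morphism `a ⊗ b ↦ f a * g b` out of a twisted tensor product. -/
noncomputable def lift (f : X.Hom Y) (g : F.carrier →ₐ[k] Y.carrier)
    (hg : ∀ j, ∀ b ∈ F.grading j, g b ∈ Y.grading j)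
    (hgd : ∀ b, Y.diff (g b) = f z * g (F.deriv b)) : (twist X z F).Hom Y where
  toAlgHom := liftAlgHom f g hg
  map_mem' _ _ := liftAlgHom_mem f g hg
  diff_map' := diff_liftAlgHom f g hg hgd

@[simp] lemma lift_tmul (f : X.Hom Y) (g : F.carrier →ₐ[k] Y.carrier)
    (hg : ∀ j, ∀ b ∈ F.grading j, g b ∈ Y.grading j)
    (hgd : ∀ b, Y.diff (g b) = f z * g (F.deriv b)) (a : X.carrier) (b : F.carrier) :
    lift f g hg hgd (tmul X.grading F.grading a b) = f a * g b :=
  liftAlgHom_tmul f g hg a b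

/-- The base change `f ⊗ id` of twisted tensor products along a morphism `f` of the bases. -/
noncomputable def map (F : TwistFiber k e) (f : X.Hom Y) {w : Y.cocycles e} (h : f z = w) :
    (twist X z F).Hom (twist Y w F) :=
  lift ((inl Y w F).comp f) (GradedTensorProduct.includeRight Y.grading F.grading)
    (fun j _ hb => tmul_mem (zero_add j) Y.one_mem hb) fun b => by
      change twistDiff Y w F (tmul Y.grading F.grading 1 b) =
        tmul Y.grading F.grading (f z) 1 * tmul Y.grading F.grading 1 (F.deriv b)
      rw [twistDiff_tmul_of_mem Y w F Y.one_mem, tmul_one_mul_tmul, Y.diff_one, h]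
      simp

@[simp] lemma map_tmul (f : X.Hom Y) {w : Y.cocycles e} (h : f z = w) (a : X.carrier)
    (b : F.carrier) :
    map F f h (tmul X.grading F.grading a b) = tmul Y.grading F.grading (f a) b := by
  refine (lift_tmul ..).trans ((tmul_one_mul_tmul (f a) 1 b).trans ?_)
  rw [mul_one]

end twist

end Twist

section TensorProduct

open TensorProduct

/-- The unit as a cocycle of degree `0`. -/
abbrev CDGAPack.oneCocycle (X : CDGAPack k) : X.cocycles 0 :=
  ⟨1, X.one_mem, X.diff_one⟩

/-- The tensor product of CDGAs. -/
noncomputable abbrev tensor (X Y : CDGAPack k) : CDGAPack k :=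
  twist X X.oneCocycle Y.toTwistFiber

namespace tensor

variable {X Y Z X' Y' : CDGAPack k}

lemma diff_tmul_of_mem {i : ℕ} {a : X.carrier} (ha : a ∈ X.grading i) (b : Y.carrier) :
    (tensor X Y).diff (tmul X.grading Y.grading a b) = tmul X.grading Y.grading (X.diff a) b +
      (-1 : k) ^ i • tmul X.grading Y.grading a (Y.diff b) := by
  refine (twistDiff_tmul_of_mem X X.oneCocycle Y.toTwistFiber ha b).trans ?_
  rw [mul_one]

variable (X Y) in
/-- The left inclusion `a ↦ a ⊗ 1`. -/
noncomputable def inl : X.Hom (tensor X Y) :=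
  twist.inl X X.oneCocycle Y.toTwistFiber

variable (X Y) in
/-- The right inclusion `b ↦ 1 ⊗ b`. -/
noncomputable def inr : Y.Hom (tensor X Y) where
  toAlgHom := GradedTensorProduct.includeRight X.grading Y.grading
  map_mem' j _ hb := tmul_mem (zero_add j) X.one_mem hb
  diff_map' b := by
    refine (diff_tmul_of_mem X.one_mem b).trans ?_
    rw [X.diff_one, map_zero, LinearMap.zero_apply, zero_add, pow_zero, one_smul]
    rfl

lemma inl_apply (a : X.carrier) : inl X Y a = tmul X.grading Y.grading a 1 := rfl

lemma inr_apply (b : Y.carrier) : inr X Y b = tmul X.grading Y.grading 1 b := rfl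

lemma inl_mul_inr (a : X.carrier) (b : Y.carrier) :
    inl X Y a * inr X Y b = tmul X.grading Y.grading a b := by
  rw [inl_apply, inr_apply, tmul_one_mul_tmul, mul_one]

lemma apply_tmul (f : (tensor X Y).Hom Z) (a : X.carrier) (b : Y.carrier) :
    f (tmul X.grading Y.grading a b) = f (inl X Y a) * f (inr X Y b) :=
  (congrArg f (inl_mul_inr a b).symm).trans (map_mul f.toAlgHom _ _)

lemma hom_ext {f g : (tensor X Y).Hom Z} (hl : f.comp (inl X Y) = g.comp (inl X Y))
    (hr : f.comp (inr X Y) = g.comp (inr X Y)) : f = g := by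
  refine CDGAPack.Hom.ext fun x => ?_
  induction x using twist.induction with
  | zero => rw [map_zero, map_zero]
  | add x y hx hy => rw [map_add, map_add, hx, hy]
  | tmul a b =>
    refine (apply_tmul f a b).trans (Eq.trans ?_ (apply_tmul g a b).symm)
    exact congrArg₂ (· * ·) (DFunLike.congr_fun hl a) (DFunLike.congr_fun hr b)

/-- The morphism `a ⊗ b ↦ f a * g b`. -/
noncomputable def lift (f : X.Hom Z) (g : Y.Hom Z) : (tensor X Y).Hom Z :=
  twist.lift f g.toAlgHom (fun _ _ => g.map_mem) fun b => by
    rw [map_one, one_mul]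
    exact g.diff_map b

@[simp] lemma lift_tmul (f : X.Hom Z) (g : Y.Hom Z) (a : X.carrier) (b : Y.carrier) :
    lift f g (tmul X.grading Y.grading a b) = f a * g b :=
  twist.lift_tmul ..

@[simp] lemma lift_comp_inl (f : X.Hom Z) (g : Y.Hom Z) : (lift f g).comp (inl X Y) = f :=
  CDGAPack.Hom.ext fun a => (lift_tmul f g a 1).trans (by rw [map_one, mul_one])

@[simp] lemma lift_comp_inr (f : X.Hom Z) (g : Y.Hom Z) : (lift f g).comp (inr X Y) = g :=
  CDGAPack.Hom.ext fun b => (lift_tmul f g 1 b).trans (by rw [map_one, one_mul])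

variable (X Y) in
/-- The symmetry of the tensor product. -/
noncomputable def swap : (tensor X Y).Hom (tensor Y X) :=
  lift (inr Y X) (inl Y X)

lemma swap_comp_swap : (swap Y X).comp (swap X Y) = CDGAPack.Hom.id _ :=
  hom_ext (by simp only [swap, CDGAPack.Hom.comp_assoc, lift_comp_inl, lift_comp_inr]; rfl)
    (by simp only [swap, CDGAPack.Hom.comp_assoc, lift_comp_inl, lift_comp_inr]; rfl)

/-- The morphism `f ⊗ id`. -/
noncomputable def mapLeft (f : X.Hom X') (Y : CDGAPack k) : (tensor X Y).Hom (tensor X' Y) :=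
  twist.map (z := X.oneCocycle) (w := X'.oneCocycle) Y.toTwistFiber f (map_one f)

/-- The morphism `f ⊗ g`. -/
noncomputable def map (f : X.Hom X') (g : Y.Hom Y') : (tensor X Y).Hom (tensor X' Y') :=
  (swap Y' X').comp ((mapLeft g X').comp ((swap X' Y).comp (mapLeft f Y)))

lemma mapLeft_tmul (f : X.Hom X') (a : X.carrier) (b : Y.carrier) :
    mapLeft f Y (tmul X.grading Y.grading a b) = tmul X'.grading Y.grading (f a) b :=
  twist.map_tmul ..

lemma mapLeft_comp_inl (f : X.Hom X') : (mapLeft f Y).comp (inl X Y) = (inl X' Y).comp f :=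
  CDGAPack.Hom.ext fun a => mapLeft_tmul f a 1

lemma mapLeft_comp_inr (f : X.Hom X') : (mapLeft f Y).comp (inr X Y) = inr X' Y :=
  CDGAPack.Hom.ext fun b => (mapLeft_tmul f 1 b).trans (by rw [map_one, inr_apply])

lemma map_comp_inl (f : X.Hom X') (g : Y.Hom Y') :
    (map f g).comp (inl X Y) = (inl X' Y').comp f := by
  simp only [map, CDGAPack.Hom.comp_assoc, mapLeft_comp_inl]
  simp only [← CDGAPack.Hom.comp_assoc _ _ f, swap, lift_comp_inl, mapLeft_comp_inr, lift_comp_inr]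

lemma map_comp_inr (f : X.Hom X') (g : Y.Hom Y') :
    (map f g).comp (inr X Y) = (inr X' Y').comp g := by
  simp only [map, CDGAPack.Hom.comp_assoc, mapLeft_comp_inr, swap, lift_comp_inr, mapLeft_comp_inl]
  simp only [← CDGAPack.Hom.comp_assoc _ _ g, lift_comp_inl]

end tensor

end TensorProduct

/-! ### Square-zero algebras and free generators -/

section SquareZero

variable {ι : Type}

/-- The square-zero extension of `k` by a vector space with basis `ι`. -/
abbrev SquareZero (k ι : Type) : Type := TrivSqZeroExt k (ι → k)

namespace SquareZero

omit [Field k] in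
lemma ext {x y : SquareZero k ι} (hfst : x.fst = y.fst) (hsnd : ∀ t, x.snd t = y.snd t) : x = y :=
  TrivSqZeroExt.ext hfst (funext hsnd)

lemma snd_mul_apply (x y : SquareZero k ι) (t : ι) :
    (x * y).snd t = x.fst * y.snd t + y.fst * x.snd t := by
  simp [TrivSqZeroExt.snd_mul]

instance finiteDimensional [Finite ι] : FiniteDimensional k (SquareZero k ι) :=
  inferInstanceAs (Module.Finite k (k × (ι → k)))

/-- The grading of a square-zero extension in which the basis vector `t` has degree `deg t`. -/
def grading (deg : ι → ℕ) (n : ℕ) : Submodule k (SquareZero k ι) where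
  carrier := {x | (n ≠ 0 → x.fst = 0) ∧ ∀ t, deg t ≠ n → x.snd t = 0}
  add_mem' := fun ⟨hx, hx'⟩ ⟨hy, hy'⟩ =>
    ⟨fun h => by simp [hx h, hy h], fun t h => by simp [hx' t h, hy' t h]⟩
  zero_mem' := ⟨fun _ => rfl, fun _ _ => rfl⟩
  smul_mem' c _ := fun ⟨hx, hx'⟩ => ⟨fun h => by simp [hx h], fun t h => by simp [hx' t h]⟩

/-- The projection onto the piece of degree `n`. -/
def projection (deg : ι → ℕ) (n : ℕ) : SquareZero k ι →ₗ[k] SquareZero k ι where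
  toFun x := TrivSqZeroExt.inl (if n = 0 then x.fst else 0) +
    TrivSqZeroExt.inr fun t => if deg t = n then x.snd t else 0
  map_add' x y := ext (by simp; split_ifs <;> simp) fun t => by simp; split_ifs <;> simp
  map_smul' c x := ext (by simp) fun t => by simp

lemma fst_projection (deg : ι → ℕ) (n : ℕ) (x : SquareZero k ι) :
    (projection deg n x).fst = if n = 0 then x.fst else 0 := by
  simp [projection]

lemma snd_projection (deg : ι → ℕ) (n : ℕ) (x : SquareZero k ι) (t : ι) :
    (projection deg n x).snd t = if deg t = n then x.snd t else 0 := by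
  simp [projection]

lemma iSup_grading [Finite ι] (deg : ι → ℕ) : ⨆ n, grading (k := k) deg n = ⊤ := by
  classical
  cases nonempty_fintype ι
  refine eq_top_iff.2 fun x _ => ?_
  rw [← TrivSqZeroExt.inl_fst_add_inr_snd_eq x, ← Finset.univ_sum_single x.snd,
    ← TrivSqZeroExt.inrHom_apply (R := k), map_sum]
  refine Submodule.add_mem _ (Submodule.mem_iSup_of_mem 0 ?_)
    (Submodule.sum_mem _ fun t _ => Submodule.mem_iSup_of_mem (deg t) ?_)
  · exact ⟨fun h => absurd rfl h, fun _ _ => rfl⟩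
  · refine ⟨fun _ => rfl, fun s hs => ?_⟩
    exact Pi.single_eq_of_ne (M := fun _ => k) (i := t) (i' := s)
      (fun h => hs (congrArg deg h)) _

lemma mul_mem {deg : ι → ℕ} {i j : ℕ} {x y : SquareZero k ι} (hx : x ∈ grading deg i)
    (hy : y ∈ grading deg j) : x * y ∈ grading deg (i + j) := by
  refine ⟨fun hij => ?_, fun t ht => ?_⟩
  · rw [TrivSqZeroExt.fst_mul]
    obtain hi | hj : i ≠ 0 ∨ j ≠ 0 := by omega
    · rw [hx.1 hi, zero_mul]
    · rw [hy.1 hj, mul_zero]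
  · have hxy : x.fst * y.snd t = 0 := by
      by_cases hi : i = 0
      · rw [hy.2 t (by omega), mul_zero]
      · rw [hx.1 hi, zero_mul]
    have hyx : y.fst * x.snd t = 0 := by
      by_cases hj : j = 0
      · rw [hx.2 t (by omega), mul_zero]
      · rw [hy.1 hj, zero_mul]
    rw [snd_mul_apply, hxy, hyx, add_zero]

lemma projection_of_mem {deg : ι → ℕ} {i : ℕ} {x : SquareZero k ι} (hx : x ∈ grading deg i) :
    projection deg i x = x :=
  ext (by rw [fst_projection, ite_eq_left_iff]; exact fun h => (hx.1 h).symm)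
    fun t => by rw [snd_projection, ite_eq_left_iff]; exact fun h => (hx.2 t h).symm

lemma projection_of_mem_ne {deg : ι → ℕ} {i j : ℕ} (hij : i ≠ j) {x : SquareZero k ι}
    (hx : x ∈ grading deg i) : projection deg j x = 0 :=
  ext (by rw [fst_projection, TrivSqZeroExt.fst_zero, ite_eq_right_iff]
          exact fun h => hx.1 (by omega))
    fun t => by
      rw [snd_projection, TrivSqZeroExt.snd_zero, Pi.zero_apply, ite_eq_right_iff]
      exact fun h => hx.2 t (by omega)

lemma one_mem (deg : ι → ℕ) : (1 : SquareZero k ι) ∈ grading deg 0 :=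
  ⟨fun h => absurd rfl h, fun _ _ => rfl⟩

/-- The grading of a square-zero extension is a ring grading. -/
@[reducible] noncomputable def gradedRing [Finite ι] (deg : ι → ℕ) :
    GradedRing (grading (k := k) deg) :=
  gradedRingOfProjections (grading (k := k) deg) (projection deg) (fun _ _ => projection_of_mem)
    (fun _ _ hij _ => projection_of_mem_ne hij) (iSup_grading deg) (one_mem deg)
    fun _ _ _ _ => SquareZero.mul_mem

variable {deg : ι → ℕ} (hdeg : ∀ t, deg t ≠ 0)
include hdeg

lemma eq_smul_one {x : SquareZero k ι} (hx : x ∈ grading deg 0) : x = x.fst • 1 :=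
  ext (by simp) fun t => by simp [hx.2 t (hdeg t)]

omit hdeg in
lemma mul_eq_zero {i j : ℕ} (hi : i ≠ 0) (hj : j ≠ 0) {x y : SquareZero k ι}
    (hx : x ∈ grading deg i) (hy : y ∈ grading deg j) : x * y = 0 :=
  ext (by simp [hx.1 hi]) fun t => by rw [snd_mul_apply, hx.1 hi, hy.1 hj]; simp

lemma gradedComm : GradedComm (grading (k := k) deg) where
  mul_comm i j x y hx hy := by
    obtain rfl | hi := eq_or_ne i 0
    · rw [eq_smul_one hdeg hx]; simp
    obtain rfl | hj := eq_or_ne j 0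
    · rw [eq_smul_one hdeg hy]; simp
    rw [mul_eq_zero hi hj hx hy, mul_eq_zero hj hi hy hx, smul_zero]
  odd_sq _ hi _ hx := mul_eq_zero hi.pos.ne' hi.pos.ne' hx hx

/-- The square-zero extension as a CDGA, for a differential `δ` on its augmentation ideal. -/
noncomputable abbrev cdga [Finite ι] (δ : (ι → k) →ₗ[k] ι → k)
    (hδ : ∀ v t, (∀ s, deg s + 1 = deg t → v s = 0) → δ v t = 0) (hδδ : ∀ v, δ (δ v) = 0) :
    CDGAPack k where
  carrier := SquareZero k ι
  grading := grading deg
  gradedI := gradedRing deg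
  diff := TrivSqZeroExt.inrHom k (ι → k) ∘ₗ δ ∘ₗ TrivSqZeroExt.sndHom k (ι → k)
  gcomm := gradedComm hdeg
  isdiff :=
    { grade i x hx := ⟨fun _ => rfl, fun t ht => hδ _ t fun s hs => hx.2 s (by omega)⟩
      d_sq x := congrArg TrivSqZeroExt.inr (hδδ x.snd)
      leibniz i x y hx := by
        refine ext (by simp) fun t => ?_
        obtain rfl | hi := eq_or_ne i 0
        · rw [eq_smul_one hdeg hx]; simp
        · simp [hx.1 hi] }

end SquareZero

end SquareZero

section FreeGenerator

/-- The free graded commutative algebra on one generator of degree `q`, with the derivation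
sending the generator to `1`; twisting by it adjoins a generator of degree `q`. -/
structure FreeGenerator (k : Type) [Field k] (q : ℕ) extends TwistFiber k (q + 1) where
  gen : carrier
  gen_mem : gen ∈ grading q
  deriv_gen : deriv gen = 1
  eq_zero_or_eq_smul_pow : ∀ j, ∀ b ∈ grading j,
    b = 0 ∨ ∃ (m : ℕ) (c : k), q * m = j ∧ b = c • gen ^ m
  exists_algHom : ∀ (A : Type) [Ring A] [Algebra k A] (s : A), (Odd q → s * s = 0) →
    ∃ g : carrier →ₐ[k] A, g gen = s

namespace FreeGenerator

/-- The square-zero extension of `k` by a generator of odd degree `q`. -/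
noncomputable def odd {q : ℕ} (hq : Odd q) : FreeGenerator k q where
  carrier := SquareZero k Unit
  grading := SquareZero.grading fun _ => q
  gradedRing := SquareZero.gradedRing fun _ => q
  gcomm := SquareZero.gradedComm fun _ => hq.pos.ne'
  deriv := Algebra.linearMap k _ ∘ₗ LinearMap.proj () ∘ₗ TrivSqZeroExt.sndHom k (Unit → k)
  deriv_mem j b hb := by
    obtain rfl | hj := eq_or_ne q j
    · exact Or.inl ⟨0, by omega, fun h => absurd rfl h, fun _ _ => rfl⟩
    · right
      simp [hb.2 () hj]
  leibniz j b hb b' := by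
    have hsign : (-1 : k) ^ ((q + 1 + 1) * j) = (-1) ^ j := by
      rw [pow_mul, hq.add_one.add_one.neg_one_pow]
    rw [hsign]
    obtain rfl | hj := eq_or_ne j 0
    · rw [SquareZero.eq_smul_one (fun _ => hq.pos.ne') hb]
      simp
    refine SquareZero.ext ?_ fun t => ?_
    · obtain rfl | hqj := eq_or_ne q j
      · simp [hb.1 hj, TrivSqZeroExt.algebraMap_eq_inl, hq.neg_one_pow, mul_comm]
      · simp [hb.1 hj, hb.2 () hqj, TrivSqZeroExt.algebraMap_eq_inl]
    · obtain rfl | hqj := eq_or_ne q j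
      · simp [hb.1 hj, TrivSqZeroExt.algebraMap_eq_inl, hq.neg_one_pow, mul_comm]
      · simp [hb.1 hj, hb.2 () hqj, TrivSqZeroExt.algebraMap_eq_inl]
  deriv_sq := Or.inr fun b => by simp [TrivSqZeroExt.algebraMap_eq_inl]
  gen := TrivSqZeroExt.inr 1
  gen_mem := ⟨fun _ => rfl, fun _ h => absurd rfl h⟩
  deriv_gen := by simp
  eq_zero_or_eq_smul_pow j b hb := by
    obtain rfl | hj := eq_or_ne j 0
    · exact Or.inr ⟨0, _, rfl, by simpa using SquareZero.eq_smul_one (fun _ => hq.pos.ne') hb⟩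
    · obtain rfl | hj := eq_or_ne q j
      · refine Or.inr ⟨1, b.snd (), mul_one q, SquareZero.ext (by simp [hb.1 hj]) fun t => by simp⟩
      · exact Or.inl (SquareZero.ext (by simp [hb.1 ‹_›]) fun t => by simp [hb.2 t hj])
  exists_algHom A _ _ s hs :=
    ⟨TrivSqZeroExt.liftEquivOfComm ⟨LinearMap.toSpanSingleton k A s ∘ₗ LinearMap.proj (),
      fun x y => by simp [hs hq]⟩, by simp⟩

lemma eq_zero_or_eq_smul_X_pow {q : ℕ} (hq : q ≠ 0) {j : ℕ} {p : MvPolynomial Unit k}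
    (hp : p.IsWeightedHomogeneous (fun _ => q) j) :
    p = 0 ∨ ∃ (m : ℕ) (c : k), q * m = j ∧ p = c • MvPolynomial.X () ^ m := by
  have weight_eq (d : Unit →₀ ℕ) : Finsupp.weight (fun _ => q) d = q * d () := by
    rw [Finsupp.weight_apply, Finsupp.sum_fintype _ _ (by simp)]
    simp [mul_comm]
  obtain rfl | h0 := eq_or_ne p 0
  · exact Or.inl rfl
  obtain ⟨d, hd⟩ := MvPolynomial.ne_zero_iff.1 h0
  have hdj := (weight_eq d).symm.trans (hp hd)
  refine Or.inr ⟨d (), p.coeff d, hdj, ?_⟩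
  refine (hp.eq_monomial_of_unique_weight (d₀ := d) fun d' hd' => Finsupp.unique_ext ?_).trans ?_
  · exact Nat.eq_of_mul_eq_mul_left hq.pos ((weight_eq d').symm.trans (hd'.trans hdj.symm))
  · rw [MvPolynomial.monomial_eq, Finsupp.prod_fintype _ _ (by simp), MvPolynomial.smul_eq_C_mul]
    simp

/-- The polynomial algebra on a generator of even positive degree `q`. -/
noncomputable def even {q : ℕ} (hq : Even q) (hq0 : q ≠ 0) : FreeGenerator k q where
  carrier := MvPolynomial Unit k
  grading := MvPolynomial.weightedHomogeneousSubmodule k fun _ => q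
  gradedRing := MvPolynomial.weightedGradedAlgebra k fun _ => q
  gcomm :=
    { mul_comm i j a b ha _ := by
        obtain rfl | ⟨m, c, rfl, -⟩ := eq_zero_or_eq_smul_X_pow hq0 ha
        · simp
        · rw [((hq.mul_right m).mul_right j).neg_one_pow, one_smul, mul_comm]
      odd_sq i hi a ha := by
        obtain rfl | ⟨m, c, rfl, -⟩ := eq_zero_or_eq_smul_X_pow hq0 ha
        · simp
        · exact absurd (hq.mul_right m) (Nat.not_even_iff_odd.2 hi) }
  deriv := (MvPolynomial.pderiv ()).toLinearMap
  deriv_mem j b hb := by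
    obtain rfl | ⟨m, c, rfl, rfl⟩ := eq_zero_or_eq_smul_X_pow hq0 hb
    · simp
    cases m with
    | zero => simp
    | succ m =>
      have hX :
          MvPolynomial.X () ^ m ∈ MvPolynomial.weightedHomogeneousSubmodule k (fun _ => q) _ :=
        (MvPolynomial.isWeightedHomogeneous_X k (fun _ => q) ()).pow m
      refine Or.inl ⟨q * m, by ring, ?_⟩
      simpa [MvPolynomial.smul_eq_C_mul, Derivation.leibniz_pow, mul_comm q] using
        Submodule.smul_mem _ c (Submodule.smul_mem _ ((m : k) + 1) hX)
  leibniz j b _ b' := by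
    rw [((hq.add_one.add_one).mul_right j).neg_one_pow]
    simp [mul_comm, add_comm]
  deriv_sq := Or.inl hq.add_one
  gen := MvPolynomial.X ()
  gen_mem := MvPolynomial.isWeightedHomogeneous_X k (fun _ => q) ()
  deriv_gen := MvPolynomial.pderiv_X_self ()
  eq_zero_or_eq_smul_pow _ _ := eq_zero_or_eq_smul_X_pow hq0
  exists_algHom _ _ _ s _ :=
    ⟨(Polynomial.aeval s).comp (MvPolynomial.uniqueAlgEquiv k Unit), by simp⟩

variable {q : ℕ} (F : FreeGenerator k q)

lemma finite_grading (hq : q ≠ 0) (j : ℕ) : FiniteDimensional k (F.grading j) := by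
  refine Submodule.finiteDimensional_of_le (S₂ := k ∙ F.gen ^ (j / q)) fun b hb => ?_
  obtain rfl | ⟨m, c, rfl, rfl⟩ := F.eq_zero_or_eq_smul_pow j b hb
  · exact Submodule.zero_mem _
  · rw [Nat.mul_div_cancel_left m hq.pos]
    exact Submodule.smul_mem _ c (Submodule.mem_span_singleton_self _)

lemma eq_smul_one_of_mem (hq : q ≠ 0) {b : F.carrier} (hb : b ∈ F.grading 0) :
    ∃ c : k, b = c • 1 := by
  obtain rfl | ⟨m, c, hm, rfl⟩ := F.eq_zero_or_eq_smul_pow 0 b hb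
  · exact ⟨0, (zero_smul ..).symm⟩
  · obtain rfl := (Nat.mul_eq_zero.1 hm).resolve_left hq
    exact ⟨c, by rw [pow_zero]⟩

lemma eq_smul_gen_of_mem (hq : q ≠ 0) {b : F.carrier} (hb : b ∈ F.grading q) :
    ∃ c : k, b = c • F.gen := by
  obtain rfl | ⟨m, c, hm, rfl⟩ := F.eq_zero_or_eq_smul_pow q b hb
  · exact ⟨0, (zero_smul ..).symm⟩
  · obtain rfl := Nat.eq_of_mul_eq_mul_left hq.pos (hm.trans (mul_one q).symm)
    exact ⟨c, by rw [pow_one]⟩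

lemma eq_zero_of_mem {j : ℕ} (hj : ¬ q ∣ j) {b : F.carrier} (hb : b ∈ F.grading j) : b = 0 := by
  obtain rfl | ⟨m, c, rfl, -⟩ := F.eq_zero_or_eq_smul_pow j b hb
  · rfl
  · exact absurd (dvd_mul_right q m) hj

lemma homogeneous_induction {p : F.carrier → Prop} (b : F.carrier) (zero : p 0)
    (add : ∀ b b', p b → p b' → p (b + b')) (smul_pow : ∀ (c : k) (m : ℕ), p (c • F.gen ^ m)) :
    p b := by
  induction b using PDCDGA.homogeneous_induction F.grading with
  | zero => exact zero
  | add b b' hb hb' => exact add b b' hb hb'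
  | homogeneous i b hb =>
    obtain rfl | ⟨m, c, -, rfl⟩ := F.eq_zero_or_eq_smul_pow i b hb
    · exact zero
    · exact smul_pow c m

lemma diff_algHom {Y : CDGAPack k} (g : F.carrier →ₐ[k] Y.carrier) (hg : g F.gen ∈ Y.grading q)
    (b : F.carrier) : Y.diff (g b) = Y.diff (g F.gen) * g (F.deriv b) := by
  have hcomm : g F.gen * Y.diff (g F.gen) = Y.diff (g F.gen) * g F.gen := by
    rw [Y.gcomm.mul_comm q (q + 1) _ _ hg (Y.isdiff.grade q _ hg),
      (Nat.even_mul_succ_self q).neg_one_pow, one_smul]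
  have hsign : (-1 : k) ^ ((q + 1 + 1) * q) = (-1) ^ q := by
    rw [show (q + 1 + 1) * q = q * (q + 1) + q by ring, pow_add,
      (Nat.even_mul_succ_self q).neg_one_pow, one_mul]
  induction b using F.homogeneous_induction with
  | zero => simp
  | add b b' hb hb' => simp only [map_add, hb, hb', mul_add]
  | smul_pow c m =>
    rw [map_smul, map_smul, map_smul, map_smul, mul_smul_comm]
    congr 1
    induction m with
    | zero => rw [pow_zero, map_one, Y.diff_one, F.deriv_one, map_zero, mul_zero]
    | succ m ih =>
      rw [pow_succ', F.leibniz q _ F.gen_mem, map_mul, Y.isdiff.leibniz q _ _ hg, ih,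
        F.deriv_gen, one_mul, hsign, map_add, map_smul, map_mul, mul_add, mul_smul_comm,
        ← mul_assoc, ← mul_assoc, hcomm]

lemma exists_lift {Y : CDGAPack k} {s : Y.carrier} (hs : s ∈ Y.grading q) :
    ∃ g : F.carrier →ₐ[k] Y.carrier, g F.gen = s ∧ (∀ j, ∀ b ∈ F.grading j, g b ∈ Y.grading j) ∧
      ∀ b, Y.diff (g b) = Y.diff s * g (F.deriv b) := by
  obtain ⟨g, rfl⟩ := F.exists_algHom Y.carrier s fun hq => Y.gcomm.odd_sq q hq s hs
  refine ⟨g, rfl, fun j b hb => ?_, F.diff_algHom g hs⟩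
  obtain rfl | ⟨m, c, rfl, rfl⟩ := F.eq_zero_or_eq_smul_pow j b hb
  · simp
  · rw [map_smul, map_pow, mul_comm q m]
    exact Submodule.smul_mem _ c (SetLike.pow_mem_graded m hs)

end FreeGenerator

/-- The free graded commutative algebra on a generator of degree `q ≠ 0`. -/
noncomputable def freeGenerator (k : Type) [Field k] {q : ℕ} (hq : q ≠ 0) : FreeGenerator k q := by
  classical exact if h : Even q then .even h hq else .odd (Nat.not_even_iff_odd.1 h)

end FreeGenerator

/-! ### Cohomology equivalences below a degree -/

section DegreeLT

open GradedAlgebra (proj)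

variable {A : Type} [Ring A] [Algebra k A] (𝒜 : ℕ → Submodule k A) [GradedRing 𝒜]

/-- The elements whose homogeneous components all have degree `< m`. -/
noncomputable def degreeLT (m : ℕ) : Submodule k A :=
  ⨅ i ≥ m, LinearMap.ker (proj 𝒜 i)

variable {𝒜} in
lemma mem_degreeLT {m : ℕ} {a : A} : a ∈ degreeLT 𝒜 m ↔ ∀ i ≥ m, proj 𝒜 i a = 0 := by
  simp [degreeLT, Submodule.mem_iInf]

lemma degreeLT_mono : Monotone (degreeLT 𝒜) := fun _ _ h _ ha =>
  mem_degreeLT.2 fun i hi => mem_degreeLT.1 ha i (h.trans hi)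

lemma eq_zero_of_mem_degreeLT_zero {a : A} (ha : a ∈ degreeLT 𝒜 0) : a = 0 := by
  obtain ⟨N, h⟩ := exists_eq_sum_proj 𝒜 a
  rw [h N le_rfl]
  exact Finset.sum_eq_zero fun i _ => mem_degreeLT.1 ha i (Nat.zero_le i)

lemma mem_degreeLT_of_mem {i m : ℕ} (h : i < m) {a : A} (ha : a ∈ 𝒜 i) : a ∈ degreeLT 𝒜 m :=
  mem_degreeLT.2 fun j hj => proj_of_mem_ne 𝒜 ha (by omega)

/-- The projection onto the elements of degree `< m`. -/
noncomputable def truncate (m : ℕ) : A →ₗ[k] A := ∑ i ∈ Finset.range m, proj 𝒜 i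

lemma truncate_apply (m : ℕ) (a : A) : truncate 𝒜 m a = ∑ i ∈ Finset.range m, proj 𝒜 i a :=
  LinearMap.sum_apply ..

lemma truncate_mem (m : ℕ) (a : A) : truncate 𝒜 m a ∈ degreeLT 𝒜 m := by
  rw [truncate_apply]
  exact Submodule.sum_mem _ fun i hi =>
    mem_degreeLT_of_mem 𝒜 (Finset.mem_range.1 hi) (proj_mem 𝒜 i a)

lemma truncate_of_mem {m : ℕ} {a : A} (ha : a ∈ degreeLT 𝒜 m) : truncate 𝒜 m a = a := by
  obtain ⟨N, hN⟩ := exists_eq_sum_proj 𝒜 a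
  rw [truncate_apply]
  refine Eq.trans ?_ (hN (max m N) (le_max_right m N)).symm
  exact Finset.sum_subset (Finset.range_mono (le_max_left m N)) fun i _ hi =>
    mem_degreeLT.1 ha i (by simpa using hi)

end DegreeLT

section EquivBelow

variable {X Y Z : CDGAPack k}

lemma truncate_succ_diff (m : ℕ) (a : X.carrier) :
    truncate X.grading (m + 1) (X.diff a) = X.diff (truncate X.grading m a) := by
  rw [truncate_apply, truncate_apply, map_sum, Finset.sum_range_succ', X.proj_zero_diff, add_zero]
  exact Finset.sum_congr rfl fun i _ => X.proj_succ_diff i a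

lemma truncate_diff (m : ℕ) (a : X.carrier) :
    truncate X.grading m (X.diff a) = X.diff (truncate X.grading (m - 1) a) := by
  cases m with
  | zero => simp [truncate]
  | succ m => exact truncate_succ_diff m a

lemma truncate_map (f : X.Hom Y) (m : ℕ) (a : X.carrier) :
    truncate Y.grading m (f a) = f (truncate X.grading m a) := by
  rw [truncate_apply, truncate_apply, map_sum]
  exact Finset.sum_congr rfl fun i _ => f.proj_map i a

lemma map_mem_degreeLT (f : X.Hom Y) {m : ℕ} {a : X.carrier} (ha : a ∈ degreeLT X.grading m) :
    f a ∈ degreeLT Y.grading m := by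
  rw [← truncate_of_mem _ ha, ← truncate_map]
  exact truncate_mem _ _ _

lemma diff_mem_degreeLT_succ {m : ℕ} {a : X.carrier} (ha : a ∈ degreeLT X.grading m) :
    X.diff a ∈ degreeLT X.grading (m + 1) := by
  rw [← truncate_of_mem _ ha, ← truncate_succ_diff]
  exact truncate_mem _ _ _

lemma diff_mem_degreeLT {m : ℕ} {a : X.carrier} (ha : a ∈ degreeLT X.grading (m - 1)) :
    X.diff a ∈ degreeLT X.grading m := by
  rw [← truncate_of_mem _ ha, ← truncate_diff]
  exact truncate_mem _ _ _

/-- The morphism `f` is bijective on cohomology in degrees `< M` and injective in degree `M`.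
Equivalently, as stated here, the mapping cone of `f` is acyclic below degree `M`: a cocycle
`(a, x)` of the cone is the coboundary of some `(a', x')`, and truncation makes the degrees of
`a'` and `x'` no worse than expected. -/
def CDGAPack.Hom.IsEquivBelow (f : X.Hom Y) (M : ℕ) : Prop :=
  ∀ a ∈ degreeLT X.grading (M + 1), ∀ x ∈ degreeLT Y.grading M, X.diff a = 0 → f a = Y.diff x →
    ∃ a' ∈ degreeLT X.grading M, ∃ x' ∈ degreeLT Y.grading (M - 1),
      a = X.diff a' ∧ x = f a' + Y.diff x'

namespace CDGAPack.Hom.IsEquivBelow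

variable {f : X.Hom Y} {g : Y.Hom Z} {M : ℕ}

lemma of_exists (h : ∀ a ∈ degreeLT X.grading (M + 1), ∀ x ∈ degreeLT Y.grading M, X.diff a = 0 →
    f a = Y.diff x → ∃ a' x', a = X.diff a' ∧ x = f a' + Y.diff x') : f.IsEquivBelow M := by
  intro a ha x hx hd hf
  obtain ⟨a', x', had, hxd⟩ := h a ha x hx hd hf
  refine ⟨_, truncate_mem _ M a', _, truncate_mem _ (M - 1) x', ?_, ?_⟩
  · rw [← truncate_succ_diff, ← had, truncate_of_mem _ ha]
  · rw [← truncate_diff, ← truncate_map, ← map_add, ← hxd, truncate_of_mem _ hx]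

lemma mono {N : ℕ} (h : f.IsEquivBelow M) (hN : N ≤ M) : f.IsEquivBelow N :=
  of_exists fun a ha x hx hd hf =>
    have ⟨a', _, x', _, had, hxd⟩ := h a (degreeLT_mono _ (by omega) ha) x
      (degreeLT_mono _ hN hx) hd hf
    ⟨a', x', had, hxd⟩

lemma of_isQuasiIso (h : IsQuasiIso X.diff Y.diff f) (M : ℕ) : f.IsEquivBelow M := by
  refine of_exists fun a _ x _ hd hf => ?_
  obtain ⟨a', rfl⟩ := h.1 a hd ⟨x, hf⟩
  obtain ⟨b, y, hb, hxy⟩ := h.2 (x - f a') (by rw [map_sub, ← hf, f.diff_map, sub_self])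
  refine ⟨a' + b, y, by rw [map_add, hb, add_zero], ?_⟩
  rw [map_add, add_assoc, ← hxy, add_sub_cancel]

lemma of_inverse {g : Y.Hom X} (hgf : g.comp f = .id X) (hfg : f.comp g = .id Y) (M : ℕ) :
    f.IsEquivBelow M := by
  refine of_exists fun a _ x _ _ hf => ⟨g x, 0, ?_, ?_⟩
  · rw [g.diff_map, ← hf]
    exact (DFunLike.congr_fun hgf a).symm
  · rw [map_zero, add_zero]
    exact (DFunLike.congr_fun hfg x).symm

lemma id (X : CDGAPack k) (M : ℕ) : (Hom.id X).IsEquivBelow M :=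
  of_inverse (g := .id X) rfl rfl M

lemma comp (hg : g.IsEquivBelow M) (hf : f.IsEquivBelow M) : (g.comp f).IsEquivBelow M := by
  refine of_exists fun a ha x hx hd he => ?_
  obtain ⟨y, hy, x', _, hay, hxy⟩ := hg (f a) (map_mem_degreeLT f ha) x hx
    (by rw [f.diff_map, hd, map_zero]) he
  obtain ⟨a', _, y', _, haa, hya⟩ := hf a ha y hy hd hay
  refine ⟨a', g y' + x', haa, ?_⟩
  rw [hxy, hya, map_add, map_add, g.diff_map, comp_apply, add_assoc]

lemma of_comp_left (hg : g.IsEquivBelow M) (hgf : (g.comp f).IsEquivBelow M) :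
    f.IsEquivBelow M := by
  refine of_exists fun a ha x hx hd he => ?_
  obtain ⟨a', ha', x', hx', haa, hxa⟩ := hgf a ha (g x) (map_mem_degreeLT g hx) hd
    (by rw [comp_apply, he, g.diff_map])
  have hmem : x - f a' ∈ degreeLT Y.grading M :=
    Submodule.sub_mem _ hx (map_mem_degreeLT f ha')
  obtain ⟨y, _, _, _, hxy, _⟩ := hg (x - f a') (degreeLT_mono _ M.le_succ hmem) x'
    (degreeLT_mono _ M.pred_le hx') (by rw [map_sub, ← he, f.diff_map, haa, sub_self])
    (by rw [map_sub, hxa, comp_apply, add_sub_cancel_left])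
  exact ⟨a', y, haa, by rw [← hxy, add_sub_cancel]⟩

lemma of_comp_right (hf : f.IsEquivBelow (M + 1)) (hgf : (g.comp f).IsEquivBelow (M + 1)) :
    g.IsEquivBelow M := by
  refine of_exists fun b hb y hy hd he => ?_
  obtain ⟨a', ha', x', hx', had, hba⟩ := hf 0 (Submodule.zero_mem _) b hb (map_zero _)
    (by rw [hd, map_zero])
  have hmem : y - g x' ∈ degreeLT Z.grading M := Submodule.sub_mem _ hy (map_mem_degreeLT g hx')
  obtain ⟨a'', _, x'', _, haa, hya⟩ := hgf a' (degreeLT_mono _ M.succ.le_succ ha') (y - g x')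
    (degreeLT_mono _ M.le_succ hmem) had.symm
    (by rw [map_sub, ← he, g.diff_map, comp_apply, hba, map_add, add_sub_cancel_right])
  refine ⟨f a'' + x', x'', ?_, ?_⟩
  · rw [map_add, f.diff_map, ← haa, hba]
  · rw [map_add, add_right_comm, ← comp_apply, ← hya, sub_add_cancel]

end CDGAPack.Hom.IsEquivBelow

end EquivBelow

section BaseChange

open GradedAlgebra (proj)
open TensorProduct

section Coordinates

variable {A B : Type} [Ring A] [Algebra k A] [Ring B] [Algebra k B] (𝒜 : ℕ → Submodule k A)
  (ℬ : ℕ → Submodule k B) [GradedRing 𝒜] [GradedRing ℬ]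

/-- The index set of a homogeneous basis; the first component of an index is its degree. -/
abbrev HomogeneousIndex : Type := Σ i, Module.Basis.ofVectorSpaceIndex k (ℬ i)

/-- A basis of a graded algebra consisting of homogeneous elements. -/
noncomputable def homogeneousBasis : Module.Basis (HomogeneousIndex ℬ) k B :=
  (DirectSum.Decomposition.isInternal ℬ).collectedBasis fun i => .ofVectorSpace k (ℬ i)

lemma homogeneousBasis_mem (t : HomogeneousIndex ℬ) : homogeneousBasis ℬ t ∈ ℬ t.1 :=
  (DirectSum.Decomposition.isInternal ℬ).collectedBasis_mem _ t

variable {ℬ} in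
lemma homogeneousBasis_repr_of_ne {j : ℕ} {c : B} (hc : c ∈ ℬ j) {t : HomogeneousIndex ℬ}
    (ht : t.1 ≠ j) : (homogeneousBasis ℬ).repr c t = 0 :=
  (DirectSum.Decomposition.isInternal ℬ).collectedBasis_repr_of_mem_ne _ ht.symm hc

open scoped Classical in
/-- The coefficients in `A` of an element of `A ⊗ B` with respect to a homogeneous basis of `B`. -/
noncomputable def coords : 𝒜 ᵍ⊗[k] ℬ ≃ₗ[k] (HomogeneousIndex ℬ →₀ A) :=
  (GradedTensorProduct.of k 𝒜 ℬ).symm ≪≫ₗ equivFinsuppOfBasisRight (homogeneousBasis ℬ)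

open scoped Classical in
@[simp] lemma coords_tmul (a : A) (c : B) (t : HomogeneousIndex ℬ) :
    coords 𝒜 ℬ (tmul 𝒜 ℬ a c) t = (homogeneousBasis ℬ).repr c t • a :=
  equivFinsuppOfBasisRight_apply_tmul_apply ..

open scoped Classical in
lemma coords_symm_apply (p : HomogeneousIndex ℬ →₀ A) :
    (coords 𝒜 ℬ).symm p = p.sum fun t a => tmul 𝒜 ℬ a (homogeneousBasis ℬ t) :=
  congrArg (GradedTensorProduct.of k 𝒜 ℬ) (equivFinsuppOfBasisRight_symm_apply _ p)

lemma proj_coords (i : ℕ) (x : 𝒜 ᵍ⊗[k] ℬ) (t : HomogeneousIndex ℬ) :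
    proj 𝒜 i (coords 𝒜 ℬ x t) = coords 𝒜 ℬ (proj (tensorGrading 𝒜 ℬ) (i + t.1) x) t := by
  induction x using tmul_induction with
  | zero => simp
  | add x y hx hy => simp only [map_add, Finsupp.add_apply, hx, hy]
  | tmul i' j a ha c hc =>
    rw [coords_tmul, map_smul]
    by_cases ht : t.1 = j
    · by_cases hi : i' = i
      · rw [proj_of_mem _ (hi ▸ ha), proj_of_mem _ (tmul_mem (by omega) ha hc), coords_tmul]
      · rw [proj_of_mem_ne _ ha hi, proj_of_mem_ne _ (tmul_mem rfl ha hc) (by omega)]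
        simp
    · rw [homogeneousBasis_repr_of_ne hc ht, zero_smul]
      by_cases hi : i' + j = i + t.1
      · rw [proj_of_mem _ (tmul_mem hi ha hc), coords_tmul, homogeneousBasis_repr_of_ne hc ht,
          zero_smul]
      · rw [proj_of_mem_ne _ (tmul_mem rfl ha hc) hi]
        simp

variable {𝒜 ℬ}

lemma coords_mem_degreeLT {m : ℕ} {x : 𝒜 ᵍ⊗[k] ℬ} (hx : x ∈ degreeLT (tensorGrading 𝒜 ℬ) m)
    (t : HomogeneousIndex ℬ) : coords 𝒜 ℬ x t ∈ degreeLT 𝒜 (m - t.1) :=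
  mem_degreeLT.2 fun i hi => by
    rw [proj_coords, mem_degreeLT.1 hx _ (by omega), map_zero, Finsupp.zero_apply]

lemma coords_eq_zero {m : ℕ} {x : 𝒜 ᵍ⊗[k] ℬ} (hx : x ∈ degreeLT (tensorGrading 𝒜 ℬ) m)
    {t : HomogeneousIndex ℬ} (ht : m ≤ t.1) : coords 𝒜 ℬ x t = 0 :=
  eq_zero_of_mem_degreeLT_zero 𝒜 (Nat.sub_eq_zero_of_le ht ▸ coords_mem_degreeLT hx t)

lemma tmul_mem_degreeLT {m j : ℕ} {a : A} {c : B} (ha : a ∈ degreeLT 𝒜 (m - j)) (hc : c ∈ ℬ j) :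
    tmul 𝒜 ℬ a c ∈ degreeLT (tensorGrading 𝒜 ℬ) m := by
  rw [← truncate_of_mem 𝒜 ha, truncate_apply, map_sum, LinearMap.sum_apply]
  refine Submodule.sum_mem _ fun i hi => ?_
  have := Finset.mem_range.1 hi
  exact mem_degreeLT_of_mem _ (by omega) (tmul_mem rfl (proj_mem 𝒜 i a) hc)

lemma coords_symm_mem_degreeLT {m : ℕ} {p : HomogeneousIndex ℬ →₀ A}
    (hp : ∀ t, p t ∈ degreeLT 𝒜 (m - t.1)) :
    (coords 𝒜 ℬ).symm p ∈ degreeLT (tensorGrading 𝒜 ℬ) m := by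
  rw [coords_symm_apply]
  exact Submodule.sum_mem _ fun t _ => tmul_mem_degreeLT (hp t) (homogeneousBasis_mem ℬ t)

end Coordinates

variable {X Y : CDGAPack k} {e : ℕ} {z : X.cocycles e} {w : Y.cocycles e} {F : TwistFiber k e}

lemma coords_map (f : X.Hom Y) (h : f z = w) (x : X.grading ᵍ⊗[k] F.grading)
    (t : HomogeneousIndex F.grading) :
    coords Y.grading F.grading (twist.map F f h x) t = f (coords X.grading F.grading x t) := by
  induction x using tmul_induction with
  | zero => simp
  | add x y hx hy => simp only [map_add, Finsupp.add_apply, hx, hy]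
  | tmul _ _ a _ c _ => rw [twist.map_tmul, coords_tmul, coords_tmul, map_smul]

lemma homogeneousBasis_repr_deriv {s t : HomogeneousIndex F.grading} (h : t.1 + e ≠ s.1 + 1) :
    (homogeneousBasis F.grading).repr (F.deriv (homogeneousBasis F.grading s)) t = 0 := by
  obtain ⟨m, hm, hδ⟩ | hδ := F.deriv_mem s.1 _ (homogeneousBasis_mem F.grading s)
  · exact homogeneousBasis_repr_of_ne hδ (by omega)
  · rw [hδ, map_zero, Finsupp.zero_apply]

lemma coords_twistDiff {x : X.grading ᵍ⊗[k] F.grading} {t : HomogeneousIndex F.grading}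
    (hx : ∀ s : HomogeneousIndex F.grading, t.1 + e = s.1 + 1 →
      coords X.grading F.grading x s = 0) :
    coords X.grading F.grading (twistDiff X z F x) t =
      X.diff (coords X.grading F.grading x t) := by
  obtain ⟨p, rfl⟩ := (coords X.grading F.grading).symm.surjective x
  simp only [LinearEquiv.apply_symm_apply] at hx
  have hterm (s : HomogeneousIndex F.grading) :
      coords X.grading F.grading (twistDiff X z F (tmul X.grading F.grading (p s)
        (homogeneousBasis F.grading s))) t =
      X.diff (coords X.grading F.grading (tmul X.grading F.grading (p s)
        (homogeneousBasis F.grading s)) t) := by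
    by_cases hs : t.1 + e = s.1 + 1
    · simp [hx s hs]
    · rw [twistDiff_tmul, map_add, Finsupp.add_apply, coords_tmul, coords_tmul, coords_tmul,
        homogeneousBasis_repr_deriv hs, zero_smul, add_zero, map_smul]
  rw [coords_symm_apply]
  simp only [Finsupp.sum, map_sum, Finsupp.finsetSum_apply, hterm]

namespace CDGAPack.Hom.IsEquivBelow

variable {f : X.Hom Y} {M : ℕ}

lemma exists_finsupp (hf : f.IsEquivBelow M) {ι : Type} (deg : ι → ℕ) (s : Set ι)
    {α : ι →₀ X.carrier} {ξ : ι →₀ Y.carrier}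
    (hα : ∀ t ∈ s, α t ∈ degreeLT X.grading (M + 1 - deg t))
    (hξ : ∀ t ∈ s, ξ t ∈ degreeLT Y.grading (M - deg t)) (hd : ∀ t ∈ s, X.diff (α t) = 0)
    (he : ∀ t ∈ s, f (α t) = Y.diff (ξ t)) :
    ∃ (p : ι →₀ X.carrier) (q : ι →₀ Y.carrier),
      (∀ t, p t ∈ degreeLT X.grading (M - deg t) ∧ q t ∈ degreeLT Y.grading (M - 1 - deg t)) ∧
      (∀ t ∈ s, α t = X.diff (p t) ∧ ξ t = f (p t) + Y.diff (q t)) ∧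
      ∀ t ∉ s, p t = 0 ∧ q t = 0 := by
  have hpointwise (t : ι) : ∃ p q,
      (p ∈ degreeLT X.grading (M - deg t) ∧ q ∈ degreeLT Y.grading (M - 1 - deg t)) ∧
      (t ∈ s → α t = X.diff p ∧ ξ t = f p + Y.diff q) ∧
      (t ∉ s ∨ α t = 0 ∧ ξ t = 0 → p = 0 ∧ q = 0) := by
    by_cases h0 : t ∉ s ∨ α t = 0 ∧ ξ t = 0
    · exact ⟨0, 0, ⟨Submodule.zero_mem _, Submodule.zero_mem _⟩,
        fun ht => by simp [h0.resolve_left (not_not.2 ht)], fun _ => ⟨rfl, rfl⟩⟩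
    · have ht : t ∈ s := not_not.1 fun ht => h0 (.inl ht)
      obtain ⟨p, hp, q, hq, hαp, hξp⟩ := hf.mono (Nat.sub_le M (deg t)) (α t)
        (degreeLT_mono _ (by omega) (hα t ht)) (ξ t) (hξ t ht) (hd t ht) (he t ht)
      exact ⟨p, q, ⟨hp, degreeLT_mono _ (by omega) hq⟩, fun _ => ⟨hαp, hξp⟩, fun h => (h0 h).elim⟩
  choose p q hmem hs h0 using hpointwise
  classical
  have hsupp (t : ι) (ht : t ∉ α.support ∪ ξ.support) : p t = 0 ∧ q t = 0 := by
    rw [Finset.notMem_union, Finsupp.notMem_support_iff, Finsupp.notMem_support_iff] at ht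
    exact h0 t (.inr ht)
  exact ⟨.onFinset (α.support ∪ ξ.support) p fun t ht => not_not.1 fun h => ht (hsupp t h).1,
    .onFinset (α.support ∪ ξ.support) q fun t ht => not_not.1 fun h => ht (hsupp t h).2,
    hmem, hs, fun t ht => h0 t (.inl ht)⟩

/- The twisted differential does not preserve the degree in `F` unless `e = 1`; hence the layers of
constant degree in `F`, in a suitable order, filter the twisted tensor product. -/
lemma exists_weight {e : ℕ} (he : e ≠ 1) (M : ℕ) : ∃ ρ : ℕ → ℤ,
    (∀ i j, j + e = i + 1 → ρ j < ρ i) ∧ ∀ j ≤ M, 0 ≤ ρ j ∧ ρ j ≤ M := by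
  obtain rfl | he := Nat.eq_zero_or_pos e
  · exact ⟨fun j => M - j, by intros; dsimp only; omega, by intros; dsimp only; omega⟩
  · exact ⟨fun j => j, by intros; dsimp only; omega, by intros; dsimp only; omega⟩

lemma exists_layer (hf : f.IsEquivBelow M) (h : f z = w) {ρ : ℕ → ℤ}
    (hρ : ∀ i j, j + e = i + 1 → ρ j < ρ i) {r : ℤ} {a : (twist X z F).carrier}
    {x : (twist Y w F).carrier} (ha : a ∈ degreeLT (twist X z F).grading (M + 1))
    (hx : x ∈ degreeLT (twist Y w F).grading M) (hd : (twist X z F).diff a = 0)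
    (hax : twist.map F f h a = (twist Y w F).diff x)
    (har : ∀ t, r < ρ t.1 → coords X.grading F.grading a t = 0)
    (hxr : ∀ t, r < ρ t.1 → coords Y.grading F.grading x t = 0) :
    ∃ u ∈ degreeLT (twist X z F).grading M, ∃ v ∈ degreeLT (twist Y w F).grading (M - 1),
      (∀ t, r ≤ ρ t.1 → coords X.grading F.grading (a - (twist X z F).diff u) t = 0) ∧
      ∀ t, r ≤ ρ t.1 →
        coords Y.grading F.grading (x - (twist.map F f h u + (twist Y w F).diff v)) t = 0 := by
  have hclosed (t : HomogeneousIndex F.grading) (ht : ρ t.1 = r) :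
      X.diff (coords X.grading F.grading a t) = 0 := by
    rw [← coords_twistDiff fun s hs => har s (ht ▸ hρ _ _ hs)]
    exact (congrArg (coords X.grading F.grading · t) hd).trans (by simp)
  have hexact (t : HomogeneousIndex F.grading) (ht : ρ t.1 = r) :
      f (coords X.grading F.grading a t) = Y.diff (coords Y.grading F.grading x t) := by
    rw [← coords_map f h, ← coords_twistDiff fun s hs => hxr s (ht ▸ hρ _ _ hs)]
    exact congrArg (coords Y.grading F.grading · t) hax
  obtain ⟨p, q, hpq, hr, h0⟩ := hf.exists_finsupp Sigma.fst {t | ρ t.1 = r}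
    (fun t _ => coords_mem_degreeLT ha t) (fun t _ => coords_mem_degreeLT hx t) hclosed hexact
  refine ⟨_, coords_symm_mem_degreeLT fun t => (hpq t).1,
    _, coords_symm_mem_degreeLT fun t => (hpq t).2, fun t ht => ?_, fun t ht => ?_⟩
  · rw [map_sub, Finsupp.sub_apply, coords_twistDiff fun s hs => ?_, LinearEquiv.apply_symm_apply]
    · obtain ht | ht := ht.lt_or_eq
      · rw [har t ht, (h0 t ht.ne').1, map_zero, sub_zero]
      · rw [(hr t ht.symm).1, sub_self]
    · rw [LinearEquiv.apply_symm_apply]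
      exact (h0 s (ht.trans_lt (hρ _ _ hs)).ne').1
  · rw [map_sub, map_add, Finsupp.sub_apply, Finsupp.add_apply, coords_map,
      coords_twistDiff fun s hs => ?_, LinearEquiv.apply_symm_apply, LinearEquiv.apply_symm_apply]
    · obtain ht | ht := ht.lt_or_eq
      · rw [hxr t ht, (h0 t ht.ne').1, (h0 t ht.ne').2, map_zero, map_zero, add_zero, sub_zero]
      · rw [(hr t ht.symm).2, sub_self]
    · rw [LinearEquiv.apply_symm_apply]
      exact (h0 s (ht.trans_lt (hρ _ _ hs)).ne').2

lemma exists_approx (hf : f.IsEquivBelow M) (h : f z = w) {ρ : ℕ → ℤ}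
    (hρ : ∀ i j, j + e = i + 1 → ρ j < ρ i) (hρM : ∀ j ≤ M, ρ j ≤ M) {a : (twist X z F).carrier}
    {x : (twist Y w F).carrier} (ha : a ∈ degreeLT (twist X z F).grading (M + 1))
    (hx : x ∈ degreeLT (twist Y w F).grading M) (hd : (twist X z F).diff a = 0)
    (hax : twist.map F f h a = (twist Y w F).diff x) (r : ℕ) :
    ∃ u ∈ degreeLT (twist X z F).grading M, ∃ v ∈ degreeLT (twist Y w F).grading (M - 1),
      (∀ t, M - r < ρ t.1 → coords X.grading F.grading (a - (twist X z F).diff u) t = 0) ∧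
      ∀ t, M - r < ρ t.1 →
        coords Y.grading F.grading (x - (twist.map F f h u + (twist Y w F).diff v)) t = 0 := by
  induction r with
  | zero =>
    have hM (t : HomogeneousIndex F.grading) (ht : (M : ℤ) - (0 : ℕ) < ρ t.1) : M < t.1 :=
      not_le.1 fun h => by have := hρM t.1 h; omega
    refine ⟨0, Submodule.zero_mem _, 0, Submodule.zero_mem _, fun t ht => ?_, fun t ht => ?_⟩
    · rw [map_zero, sub_zero]
      exact coords_eq_zero ha (hM t ht)
    · rw [map_zero, map_zero, add_zero, sub_zero]
      exact coords_eq_zero hx (hM t ht).le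
  | succ r ih =>
    obtain ⟨u, hu, v, hv, hau, hxv⟩ := ih
    obtain ⟨u', hu', v', hv', hau', hxv'⟩ := hf.exists_layer h hρ (r := M - r)
      (Submodule.sub_mem _ ha (diff_mem_degreeLT_succ hu))
      (Submodule.sub_mem _ hx (Submodule.add_mem _ (map_mem_degreeLT _ hu) (diff_mem_degreeLT hv)))
      (by rw [map_sub, hd, (twist X z F).isdiff.d_sq, sub_zero])
      (by rw [map_sub, map_sub, map_add, hax, (twist.map F f h).diff_map,
        (twist Y w F).isdiff.d_sq, add_zero]) hau hxv
    refine ⟨u + u', Submodule.add_mem _ hu hu', v + v', Submodule.add_mem _ hv hv',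
      fun t ht => ?_, fun t ht => ?_⟩
    · rw [map_add, ← sub_sub]
      exact hau' t (by push_cast at ht; omega)
    · rw [map_add, map_add, add_add_add_comm, ← sub_sub]
      exact hxv' t (by push_cast at ht; omega)

lemma twistMap (hf : f.IsEquivBelow M) (he : e ≠ 1) (h : f z = w) :
    (twist.map F f h).IsEquivBelow M := by
  obtain ⟨ρ, hρ, hρM⟩ := exists_weight he M
  refine of_exists fun a ha x hx hd hax => ?_
  obtain ⟨u, hu, v, hv, hau, hxv⟩ := hf.exists_approx h hρ (fun j hj => (hρM j hj).2) ha hx hd hax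
    (M + 1)
  have hmem : x - (twist.map F f h u + (twist Y w F).diff v) ∈
      degreeLT (twist Y w F).grading M :=
    Submodule.sub_mem _ hx (Submodule.add_mem _ (map_mem_degreeLT _ hu) (diff_mem_degreeLT hv))
  refine ⟨u, v, sub_eq_zero.1 ?_, sub_eq_zero.1 ?_⟩
  · refine (coords X.grading F.grading).map_eq_zero_iff.1 (Finsupp.ext fun t => ?_)
    by_cases ht : t.1 ≤ M
    · exact hau t (by have := (hρM _ ht).1; push_cast; omega)
    · exact coords_eq_zero (Submodule.sub_mem _ ha (diff_mem_degreeLT_succ hu)) (not_le.1 ht)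
  · refine (coords Y.grading F.grading).map_eq_zero_iff.1 (Finsupp.ext fun t => ?_)
    by_cases ht : t.1 ≤ M
    · exact hxv t (by have := (hρM _ ht).1; push_cast; omega)
    · exact coords_eq_zero hmem (not_le.1 ht).le

lemma tensorMapLeft (hf : f.IsEquivBelow M) (Z : CDGAPack k) :
    (tensor.mapLeft f Z).IsEquivBelow M :=
  hf.twistMap zero_ne_one (map_one f)

lemma tensorMap {X' Y' : CDGAPack k} {g : X'.Hom Y'} (hf : f.IsEquivBelow M)
    (hg : g.IsEquivBelow M) : (tensor.map f g).IsEquivBelow M :=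
  have hswap (V W : CDGAPack k) : (tensor.swap V W).IsEquivBelow M :=
    of_inverse tensor.swap_comp_swap tensor.swap_comp_swap M
  (hswap _ _).comp ((hg.tensorMapLeft _).comp ((hswap _ _).comp (hf.tensorMapLeft _)))

end CDGAPack.Hom.IsEquivBelow

end BaseChange

/-! ### Simply connected algebras of finite type -/

section SimplyConnected

open TensorProduct

variable {A B : Type} [Ring A] [Algebra k A] [Ring B] [Algebra k B] {𝒜 : ℕ → Submodule k A}
  {ℬ : ℕ → Submodule k B} [GradedRing 𝒜] [GradedRing ℬ]

omit [GradedRing 𝒜] in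
/-- A graded algebra which is `k` in degree `0`, zero in degree `1` and finite-dimensional in each
degree. -/
structure SimplyConnectedOfFiniteType (𝒜 : ℕ → Submodule k A) : Prop where
  eq_smul_one : ∀ a ∈ 𝒜 0, ∃ c : k, a = c • (1 : A)
  one_eq_bot : 𝒜 1 = ⊥
  finite : ∀ i, FiniteDimensional k (𝒜 i)

lemma finite_tensorGrading (hA : ∀ i, FiniteDimensional k (𝒜 i))
    (hB : ∀ i, FiniteDimensional k (ℬ i)) (n : ℕ) :
    FiniteDimensional k (tensorGrading 𝒜 ℬ n) := by
  have hfg : (⨆ p ∈ Finset.HasAntidiagonal.antidiagonal n,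
      Submodule.map₂ (tmul 𝒜 ℬ) (𝒜 p.1) (ℬ p.2)).FG :=
    Submodule.fg_biSup _ _ fun _ _ =>
      (Module.Finite.iff_fg.1 (hA _)).map₂ _ (Module.Finite.iff_fg.1 (hB _))
  have := Module.Finite.iff_fg.2 hfg
  refine Submodule.finiteDimensional_of_le (S₂ := ⨆ p ∈ Finset.HasAntidiagonal.antidiagonal n,
    Submodule.map₂ (tmul 𝒜 ℬ) (𝒜 p.1) (ℬ p.2)) (Submodule.span_le.2 ?_)
  rintro x ⟨i, j, h, a, ha, b, hb, rfl⟩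
  exact Submodule.mem_iSup_of_mem (i, j) (Submodule.mem_iSup_of_mem (by simpa using h)
    (Submodule.apply_mem_map₂ _ ha hb))

lemma tmul_eq_zero {a : A} {b : B} : tmul 𝒜 ℬ a b = 0 ↔ a = 0 ∨ b = 0 := by
  refine ⟨fun h => or_iff_not_imp_left.2 fun ha => ?_, ?_⟩
  · refine (homogeneousBasis ℬ).repr.map_eq_zero_iff.1 (Finsupp.ext fun t => ?_)
    have hcoeff := coords_tmul 𝒜 ℬ a b t
    rw [h, map_zero] at hcoeff
    exact (smul_eq_zero.1 hcoeff.symm).resolve_right ha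
  · rintro (rfl | rfl) <;> simp

lemma tmul_one_eq_zero_of_add [Nontrivial B] {a : A} {b : B} {j : ℕ} (hj : j ≠ 0) (hb : b ∈ ℬ j)
    (h : tmul 𝒜 ℬ a 1 + tmul 𝒜 ℬ 1 b = 0) : a = 0 := by
  refine (tmul_eq_zero.1 ((coords 𝒜 ℬ).map_eq_zero_iff.1 (Finsupp.ext fun t => ?_))).resolve_right
    (one_ne_zero (α := B))
  by_cases ht : t.1 = 0
  · have hcoeff := congrArg (coords 𝒜 ℬ · t) h
    simpa [homogeneousBasis_repr_of_ne hb (ht.trans_ne hj.symm)] using hcoeff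
  · simp [homogeneousBasis_repr_of_ne (SetLike.GradedOne.one_mem : (1 : B) ∈ ℬ 0) ht]

namespace SimplyConnectedOfFiniteType

lemma exists_eq_tmul_one_add_one_tmul (hA : SimplyConnectedOfFiniteType 𝒜)
    (hB : ∀ b ∈ ℬ 0, ∃ c : k, b = c • 1) {q n : ℕ} (hq : ∀ j, 0 < j → j < q → ℬ j = ⊥)
    (hn : n ≤ q + 1) {x : 𝒜 ᵍ⊗[k] ℬ} (hx : x ∈ tensorGrading 𝒜 ℬ n) :
    ∃ a ∈ 𝒜 n, ∃ b ∈ ℬ n, x = tmul 𝒜 ℬ a 1 + tmul 𝒜 ℬ 1 b := by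
  induction hx using tensorGrading_induction with
  | zero => exact ⟨0, Submodule.zero_mem _, 0, Submodule.zero_mem _, by simp⟩
  | add x y _ _ hx hy =>
    obtain ⟨a, ha, b, hb, rfl⟩ := hx
    obtain ⟨a', ha', b', hb', rfl⟩ := hy
    refine ⟨a + a', Submodule.add_mem _ ha ha', b + b', Submodule.add_mem _ hb hb', ?_⟩
    rw [map_add, LinearMap.add_apply, map_add, add_add_add_comm]
  | tmul i j hij a ha b hb =>
    obtain rfl | hj := eq_or_ne j 0
    · obtain ⟨c, rfl⟩ := hB b hb
      exact ⟨c • a, Submodule.smul_mem _ c (hij ▸ ha), 0, Submodule.zero_mem _, by simp⟩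
    obtain rfl | hi := eq_or_ne i 0
    · obtain ⟨c, rfl⟩ := hA.eq_smul_one a ha
      exact ⟨0, Submodule.zero_mem _, c • b, Submodule.smul_mem _ c (by rwa [← hij, zero_add]),
        by simp⟩
    refine ⟨0, Submodule.zero_mem _, 0, Submodule.zero_mem _, ?_⟩
    suffices a = 0 ∨ b = 0 by simpa [tmul_eq_zero]
    obtain hi1 | hjq : i = 1 ∨ j < q := by omega
    · left; simpa [hi1, hA.one_eq_bot] using ha
    · right; simpa [hq j (by omega) hjq] using hb

lemma tensorGrading (hA : SimplyConnectedOfFiniteType 𝒜) (hB : SimplyConnectedOfFiniteType ℬ) :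
    SimplyConnectedOfFiniteType (tensorGrading 𝒜 ℬ) := by
  have low {n : ℕ} (hn : n ≤ 1) {x : 𝒜 ᵍ⊗[k] ℬ} (hx : x ∈ PDCDGA.tensorGrading 𝒜 ℬ n) :=
    exists_eq_tmul_one_add_one_tmul hA hB.eq_smul_one (q := 1) (by omega) (hn.trans one_le_two) hx
  refine ⟨fun x hx => ?_, (Submodule.eq_bot_iff _).2 fun x hx => ?_,
    finite_tensorGrading hA.finite hB.finite⟩
  · obtain ⟨a, ha, b, hb, rfl⟩ := low zero_le_one hx
    obtain ⟨c, rfl⟩ := hA.eq_smul_one a ha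
    obtain ⟨c', rfl⟩ := hB.eq_smul_one b hb
    exact ⟨c + c', by simp [add_smul, tmul_one_one]⟩
  · obtain ⟨a, ha, b, hb, rfl⟩ := low le_rfl hx
    rw [hA.one_eq_bot, Submodule.mem_bot] at ha
    rw [hB.one_eq_bot, Submodule.mem_bot] at hb
    simp [ha, hb]

end SimplyConnectedOfFiniteType

lemma tensor.cocycles_two {X Y : CDGAPack k} (hX : SimplyConnectedOfFiniteType X.grading)
    (hY : SimplyConnectedOfFiniteType Y.grading) [Nontrivial X.carrier] [Nontrivial Y.carrier]
    (hX2 : X.cocycles 2 = ⊥) (hY2 : Y.cocycles 2 = ⊥) : (tensor X Y).cocycles 2 = ⊥ := by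
  refine (Submodule.eq_bot_iff _).2 fun x hx => ?_
  obtain ⟨a, ha, b, hb, rfl⟩ :=
    hX.exists_eq_tmul_one_add_one_tmul hY.eq_smul_one (q := 1) (by omega) le_rfl hx.1
  have hdiff :
      tmul X.grading Y.grading (X.diff a) 1 + tmul X.grading Y.grading 1 (Y.diff b) = 0 := by
    refine Eq.trans ?_ ((map_add (tensor X Y).diff _ _).symm.trans hx.2)
    rw [diff_tmul_of_mem ha, diff_tmul_of_mem X.one_mem]
    simp [X.diff_one, Y.diff_one]
  have ha0 := tmul_one_eq_zero_of_add three_ne_zero (Y.isdiff.grade 2 b hb) hdiff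
  rw [ha0, map_zero, LinearMap.zero_apply, zero_add] at hdiff
  have hb0 := (tmul_eq_zero.1 hdiff).resolve_left one_ne_zero
  have ha' : a ∈ X.cocycles 2 := ⟨ha, ha0⟩
  have hb' : b ∈ Y.cocycles 2 := ⟨hb, hb0⟩
  rw [hX2, Submodule.mem_bot] at ha'
  rw [hY2, Submodule.mem_bot] at hb'
  rw [ha', hb', map_zero, map_zero, LinearMap.zero_apply, add_zero]

lemma FreeGenerator.simplyConnectedOfFiniteType {q : ℕ} (F : FreeGenerator k q) (hq : 2 ≤ q) :
    SimplyConnectedOfFiniteType F.grading where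
  eq_smul_one _ hb := F.eq_smul_one_of_mem (by omega) hb
  one_eq_bot := (Submodule.eq_bot_iff _).2 fun _ hb =>
    F.eq_zero_of_mem (Nat.not_dvd_of_pos_of_lt one_pos hq) hb
  finite := F.finite_grading (by omega)

end SimplyConnected

section GroundField

variable (k) in
/-- The field `k` as a CDGA concentrated in degree `0`, encoded as a square-zero extension by no
generators. -/
noncomputable abbrev groundField : CDGAPack k :=
  SquareZero.cdga (ι := Empty) (deg := fun _ => 1) (fun _ => one_ne_zero) 0 (fun _ _ _ => rfl)
    fun _ => rfl

lemma groundField.eq_smul_one (a : (groundField k).carrier) :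
    a = (TrivSqZeroExt.fst a : k) • (1 : (groundField k).carrier) :=
  SquareZero.ext (by simp) fun t => t.elim

lemma groundField.eq_zero_of_mem {i : ℕ} (hi : i ≠ 0) {a : (groundField k).carrier}
    (ha : a ∈ (groundField k).grading i) : a = 0 := by
  rw [groundField.eq_smul_one a, ha.1 hi, zero_smul]

lemma groundField.simplyConnectedOfFiniteType :
    SimplyConnectedOfFiniteType (groundField k).grading where
  eq_smul_one a _ := ⟨_, groundField.eq_smul_one a⟩
  one_eq_bot := (Submodule.eq_bot_iff _).2 fun _ ha => groundField.eq_zero_of_mem one_ne_zero ha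
  finite _ := inferInstance

/-- The unit of a CDGA as a morphism from the ground field. -/
noncomputable def unitHom (X : CDGAPack k) : (groundField k).Hom X where
  toAlgHom := (Algebra.ofId k X.carrier).comp (TrivSqZeroExt.fstHom k k (Empty → k))
  map_mem' i a ha := by
    change algebraMap k X.carrier (TrivSqZeroExt.fst a) ∈ X.grading i
    obtain rfl | hi := eq_or_ne i 0
    · rw [Algebra.algebraMap_eq_smul_one]
      exact Submodule.smul_mem _ _ X.one_mem
    · rw [ha.1 hi, map_zero]
      exact Submodule.zero_mem _
  diff_map' a := by
    change X.diff (algebraMap k X.carrier (TrivSqZeroExt.fst a)) = algebraMap k X.carrier 0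
    rw [Algebra.algebraMap_eq_smul_one, map_smul, X.diff_one, smul_zero, map_zero]

lemma FreeGenerator.nontrivial {q : ℕ} (F : FreeGenerator k q) :
    Nontrivial F.carrier := by
  obtain ⟨g, -⟩ := F.exists_lift (Submodule.zero_mem ((groundField k).grading q))
  exact g.toRingHom.domain_nontrivial

end GroundField

section Cohomology

open GradedAlgebra (proj)

variable {X Y : CDGAPack k}

namespace CDGAPack

/-- The cohomology in degree `i`, as a subspace of the algebra modulo all coboundaries. -/
def cohomology (X : CDGAPack k) (i : ℕ) : Submodule k (X.carrier ⧸ LinearMap.range X.diff) :=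
  (X.cocycles i).map (LinearMap.range X.diff).mkQ

/-- The map induced on the quotients by the coboundaries. -/
def Hom.mapCohomology (f : X.Hom Y) :
    X.carrier ⧸ LinearMap.range X.diff →ₗ[k] Y.carrier ⧸ LinearMap.range Y.diff :=
  Submodule.mapQ _ _ f.toAlgHom.toLinearMap (by
    rintro _ ⟨a, rfl⟩
    exact ⟨f a, f.diff_map a⟩)

lemma diff_eq_zero_of_mem_zero {a : X.carrier} (ha : X.diff a ∈ X.grading 0) : X.diff a = 0 := by
  rw [← proj_of_mem X.grading ha, X.proj_zero_diff]

namespace Hom.IsEquivBelow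

variable {f : X.Hom Y} {M i : ℕ}

lemma exists_cocycle_add_diff (h : f.IsEquivBelow M) (hi : i < M) {x : Y.carrier}
    (hx : x ∈ Y.cocycles i) : ∃ a ∈ X.cocycles i, ∃ y, x = f a + Y.diff y := by
  obtain ⟨a, -, y, -, ha, hxa⟩ := h 0 (Submodule.zero_mem _) x (mem_degreeLT_of_mem _ hi hx.1)
    (map_zero _) (by rw [hx.2, map_zero])
  obtain ⟨y', hy'⟩ := Y.proj_diff_mem_range i (LinearMap.mem_range_self _ y)
  refine ⟨proj X.grading i a, X.proj_mem_cocycles i ha.symm, y', ?_⟩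
  rw [hy', ← f.proj_map, ← map_add, ← hxa, proj_of_mem _ hx.1]

lemma mem_range_diff (h : f.IsEquivBelow M) (hi : i ≤ M) {a : X.carrier} (ha : a ∈ X.cocycles i)
    (hfa : f a ∈ LinearMap.range Y.diff) : a ∈ LinearMap.range X.diff := by
  obtain ⟨x, hx⟩ := hfa
  have hfx : f a = Y.diff (truncate Y.grading M x) := by
    rw [← truncate_succ_diff, hx, truncate_of_mem _ (mem_degreeLT_of_mem _ (by omega)
      (f.map_mem ha.1))]
  obtain ⟨b, -, -, -, hb, -⟩ := h a (mem_degreeLT_of_mem _ (by omega) ha.1) _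
    (truncate_mem _ M x) ha.2 hfx
  exact ⟨b, hb.symm⟩

lemma eq_zero_of_map_eq_zero (h : f.IsEquivBelow M) {a : X.carrier} (ha : a ∈ X.cocycles 0)
    (hfa : f a = 0) : a = 0 := by
  obtain ⟨b, rfl⟩ := h.mem_range_diff (Nat.zero_le M) ha (hfa ▸ Submodule.zero_mem _)
  exact diff_eq_zero_of_mem_zero ha.1

lemma map_cohomology (h : f.IsEquivBelow M) (hi : i < M) :
    (X.cohomology i).map f.mapCohomology = Y.cohomology i := by
  refine le_antisymm ?_ ?_
  · rintro _ ⟨_, ⟨a, ha, rfl⟩, rfl⟩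
    exact ⟨f a, f.map_mem_cocycles ha, rfl⟩
  · rintro _ ⟨x, hx, rfl⟩
    obtain ⟨a, ha, y, rfl⟩ := h.exists_cocycle_add_diff hi hx
    refine ⟨_, ⟨a, ha, rfl⟩, (Submodule.Quotient.eq _).2 ⟨-y, ?_⟩⟩
    rw [map_neg]
    exact (sub_add_cancel_left _ _).symm

lemma disjoint_ker_mapCohomology (h : f.IsEquivBelow M) (hi : i ≤ M) :
    Disjoint (X.cohomology i) (LinearMap.ker f.mapCohomology) := by
  rw [Submodule.disjoint_def]
  rintro _ ⟨a, ha, rfl⟩ hfa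
  exact (Submodule.Quotient.mk_eq_zero _).2
    (h.mem_range_diff hi ha ((Submodule.Quotient.mk_eq_zero _).1 hfa))

lemma fg_cohomology_iff (h : f.IsEquivBelow M) (hi : i < M) :
    (X.cohomology i).FG ↔ (Y.cohomology i).FG := by
  rw [← h.map_cohomology hi]
  refine ⟨fun hX => hX.map _, fun hY => Submodule.fg_of_fg_map_of_fg_inf_ker _ hY ?_⟩
  rw [(h.disjoint_ker_mapCohomology hi.le).eq_bot]
  exact Submodule.fg_bot

end Hom.IsEquivBelow

/-- The CDGA has `H⁰ = k`, `H¹ = H² = 0` and finite-dimensional cohomology in degrees `≤ N`. -/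
structure TwoConnectedCohomology (X : CDGAPack k) (N : ℕ) : Prop where
  nontrivial : Nontrivial X.carrier
  eq_smul_one : ∀ a ∈ X.cocycles 0, ∃ c : k, a = c • (1 : X.carrier)
  mem_range_diff : ∀ i, 1 ≤ i → i ≤ 2 → ∀ a ∈ X.cocycles i, a ∈ LinearMap.range X.diff
  fg_cohomology : ∀ i ≤ N, (X.cohomology i).FG

namespace TwoConnectedCohomology

variable {f : X.Hom Y} {M N : ℕ}

lemma of_isEquivBelow (h : f.IsEquivBelow M) (hN : N < M) (h3 : 3 ≤ M)
    (hX : X.TwoConnectedCohomology N) : Y.TwoConnectedCohomology N where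
  nontrivial := by
    have := hX.nontrivial
    refine nontrivial_of_ne (1 : Y.carrier) 0 fun h1 => one_ne_zero (α := X.carrier) ?_
    exact h.eq_zero_of_map_eq_zero ⟨X.one_mem, X.diff_one⟩ (by rw [map_one, h1])
  eq_smul_one a ha := by
    obtain ⟨b, hb, y, rfl⟩ := h.exists_cocycle_add_diff (by omega) ha
    have hy : Y.diff y ∈ Y.grading 0 := by
      simpa using Submodule.sub_mem _ ha.1 (f.map_mem hb.1)
    obtain ⟨c, rfl⟩ := hX.eq_smul_one b hb
    exact ⟨c, by rw [diff_eq_zero_of_mem_zero hy, add_zero, map_smul, map_one]⟩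
  mem_range_diff i h1 h2 a ha := by
    obtain ⟨b, hb, y, rfl⟩ := h.exists_cocycle_add_diff (by omega) ha
    obtain ⟨c, rfl⟩ := hX.mem_range_diff i h1 h2 b hb
    exact ⟨f c + y, by rw [map_add, f.diff_map]⟩
  fg_cohomology i hi := (h.fg_cohomology_iff (by omega)).1 (hX.fg_cohomology i hi)

lemma of_isEquivBelow_right (h : f.IsEquivBelow M) (hN : N < M) (h3 : 3 ≤ M)
    (hY : Y.TwoConnectedCohomology N) : X.TwoConnectedCohomology N where
  nontrivial := have := hY.nontrivial; f.toAlgHom.toRingHom.domain_nontrivial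
  eq_smul_one a ha := by
    obtain ⟨c, hc⟩ := hY.eq_smul_one (f a) (f.map_mem_cocycles ha)
    have hmem : a - c • 1 ∈ X.cocycles 0 :=
      Submodule.sub_mem _ ha (Submodule.smul_mem _ c ⟨X.one_mem, X.diff_one⟩)
    exact ⟨c, sub_eq_zero.1 (h.eq_zero_of_map_eq_zero hmem
      (by rw [map_sub, map_smul, map_one, hc, sub_self]))⟩
  mem_range_diff i h1 h2 a ha :=
    h.mem_range_diff (by omega) ha (hY.mem_range_diff i h1 h2 _ (f.map_mem_cocycles ha))
  fg_cohomology i hi := (h.fg_cohomology_iff (by omega)).2 (hY.fg_cohomology i hi)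

end TwoConnectedCohomology

end CDGAPack

lemma exists_add_of_mem_degreeLT_succ {A : Type} [Ring A] [Algebra k A] {𝒜 : ℕ → Submodule k A}
    [GradedRing 𝒜] {m : ℕ} {a : A} (ha : a ∈ degreeLT 𝒜 (m + 1)) :
    ∃ b ∈ degreeLT 𝒜 m, ∃ c ∈ 𝒜 m, a = b + c := by
  refine ⟨truncate 𝒜 m a, truncate_mem 𝒜 m a, proj 𝒜 m a, proj_mem 𝒜 m a, ?_⟩
  rw [truncate_apply, ← Finset.sum_range_succ, ← truncate_apply, truncate_of_mem _ ha]

lemma exists_cocycle_add_of_mem_degreeLT_succ {m : ℕ} {a : X.carrier}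
    (ha : a ∈ degreeLT X.grading (m + 1)) (hd : X.diff a = 0) :
    ∃ b ∈ degreeLT X.grading m, ∃ c ∈ X.cocycles m, X.diff b = 0 ∧ a = b + c := by
  obtain ⟨b, hb, c, hc, rfl⟩ := exists_add_of_mem_degreeLT_succ ha
  have hdc : X.diff c = 0 := by
    have hproj := X.proj_succ_diff m (b + c)
    rwa [hd, map_zero, map_add, mem_degreeLT.1 hb m le_rfl, proj_of_mem _ hc, zero_add,
      eq_comm] at hproj
  exact ⟨b, hb, c, ⟨hc, hdc⟩, by rwa [map_add, hdc, add_zero] at hd, rfl⟩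

lemma eq_smul_one_of_mem_degreeLT_three (hX : SimplyConnectedOfFiniteType X.grading)
    (hX2 : X.cocycles 2 = ⊥) {a : X.carrier} (ha : a ∈ degreeLT X.grading 3) (hd : X.diff a = 0) :
    ∃ c : k, a = c • 1 := by
  obtain ⟨b, hb, a₂, ha₂, -, rfl⟩ := exists_cocycle_add_of_mem_degreeLT_succ ha hd
  obtain ⟨b', hb', a₁, ha₁, rfl⟩ := exists_add_of_mem_degreeLT_succ hb
  obtain ⟨b'', hb'', a₀, ha₀, rfl⟩ := exists_add_of_mem_degreeLT_succ hb'
  rw [hX2, Submodule.mem_bot] at ha₂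
  rw [hX.one_eq_bot, Submodule.mem_bot] at ha₁
  rw [eq_zero_of_mem_degreeLT_zero _ hb'', zero_add, ha₁, ha₂, add_zero, add_zero]
  exact hX.eq_smul_one a₀ ha₀

lemma CDGAPack.TwoConnectedCohomology.exists_smul_one_add_diff {N : ℕ}
    (hX : X.TwoConnectedCohomology N) {a : X.carrier} (ha : a ∈ degreeLT X.grading 2)
    (hd : X.diff a = 0) : ∃ (c : k) (y : X.carrier), a = c • 1 + X.diff y := by
  obtain ⟨b, hb, a₁, ha₁, hdb, rfl⟩ := exists_cocycle_add_of_mem_degreeLT_succ ha hd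
  obtain ⟨b', hb', a₀, ha₀, -, rfl⟩ := exists_cocycle_add_of_mem_degreeLT_succ hb hdb
  obtain ⟨y, rfl⟩ := hX.mem_range_diff 1 le_rfl one_le_two a₁ ha₁
  obtain ⟨c, rfl⟩ := hX.eq_smul_one a₀ ha₀
  exact ⟨c, y, by rw [eq_zero_of_mem_degreeLT_zero _ hb', zero_add]⟩

lemma CDGAPack.Hom.IsEquivBelow.two (f : X.Hom Y) (hX : SimplyConnectedOfFiniteType X.grading)
    (hX2 : X.cocycles 2 = ⊥) {N : ℕ} (hY : Y.TwoConnectedCohomology N) : f.IsEquivBelow 2 := by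
  have := hY.nontrivial
  refine .of_exists fun a ha x hx hd hax => ?_
  obtain ⟨c, rfl⟩ := eq_smul_one_of_mem_degreeLT_three hX hX2 ha hd
  rw [map_smul, map_one] at hax
  have hx0 : Y.diff x = 0 :=
    diff_eq_zero_of_mem_zero (hax ▸ Submodule.smul_mem _ c Y.one_mem)
  obtain rfl := (smul_eq_zero.1 (hax.trans hx0)).resolve_right one_ne_zero
  obtain ⟨c', y, rfl⟩ := hY.exists_smul_one_add_diff hx hx0
  exact ⟨c' • 1, y, by rw [map_smul, X.diff_one, smul_zero, zero_smul],
    by rw [map_smul, map_one]⟩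

end Cohomology

/-! ### Mapping cones and relative free extensions -/

section MappingCone

open GradedAlgebra (proj)

variable {X X' Y : CDGAPack k}

/-- The cocycles `(a, x)` of degree `M` in the mapping cone of `f`, with `a` of degree `M + 1`. -/
def coneCocycles (f : X.Hom Y) (M : ℕ) : Submodule k (X.carrier × Y.carrier) where
  carrier := {p | p.1 ∈ X.cocycles (M + 1) ∧ p.2 ∈ Y.grading M ∧ f p.1 = Y.diff p.2}
  add_mem' hp hp' := ⟨add_mem hp.1 hp'.1, add_mem hp.2.1 hp'.2.1, by simp [hp.2.2, hp'.2.2]⟩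
  zero_mem' := ⟨zero_mem _, zero_mem _, by simp⟩
  smul_mem' c _ hp :=
    ⟨Submodule.smul_mem _ c hp.1, Submodule.smul_mem _ c hp.2.1, by simp [hp.2.2]⟩

/-- The coboundaries `(d a, f a + d x)` of the mapping cone of `f`. -/
def coneCoboundaries (f : X.Hom Y) : Submodule k (X.carrier × Y.carrier) :=
  LinearMap.range ((X.diff ∘ₗ .fst k _ _).prod
    (f.toAlgHom.toLinearMap ∘ₗ .fst k _ _ + Y.diff ∘ₗ .snd k _ _))

lemma mem_coneCoboundaries {f : X.Hom Y} {p : X.carrier × Y.carrier} :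
    p ∈ coneCoboundaries f ↔ ∃ a x, p.1 = X.diff a ∧ p.2 = f a + Y.diff x := by
  constructor
  · rintro ⟨⟨a, x⟩, rfl⟩
    exact ⟨a, x, rfl, rfl⟩
  · rintro ⟨a, x, h₁, h₂⟩
    exact ⟨(a, x), Prod.ext h₁.symm h₂.symm⟩

/-- The map of mapping cones induced by a morphism of the sources. -/
def coneMap (i : X.Hom X') (Y : CDGAPack k) :
    X.carrier × Y.carrier →ₗ[k] X'.carrier × Y.carrier :=
  i.toAlgHom.toLinearMap.prodMap .id

lemma coneMap_apply (i : X.Hom X') (p : X.carrier × Y.carrier) : coneMap i Y p = (i p.1, p.2) :=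
  rfl

variable {f : X.Hom Y} {g : X'.Hom Y} {i : X.Hom X'}

lemma coneMap_mem_coneCocycles (h : g.comp i = f) {M : ℕ} {p : X.carrier × Y.carrier}
    (hp : p ∈ coneCocycles f M) : coneMap i Y p ∈ coneCocycles g M :=
  ⟨i.map_mem_cocycles hp.1, hp.2.1, (DFunLike.congr_fun h p.1).trans hp.2.2⟩

lemma map_coneCoboundaries_le (h : g.comp i = f) :
    (coneCoboundaries f).map (coneMap i Y) ≤ coneCoboundaries g := by
  rintro _ ⟨p, hp, rfl⟩
  obtain ⟨a, x, h₁, h₂⟩ := mem_coneCoboundaries.1 hp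
  refine mem_coneCoboundaries.2 ⟨i a, x, ?_, ?_⟩
  · rw [coneMap_apply, h₁, i.diff_map]
  · rw [coneMap_apply, h₂, ← h, CDGAPack.Hom.comp_apply]

lemma CDGAPack.Hom.IsEquivBelow.succ {M : ℕ} (h : f.IsEquivBelow M)
    (hM : coneCocycles f M ≤ coneCoboundaries f) : f.IsEquivBelow (M + 1) := by
  refine .of_exists fun a ha x hx hd hax => ?_
  obtain ⟨b, hb, a', ha', hdb, rfl⟩ := exists_cocycle_add_of_mem_degreeLT_succ ha hd
  obtain ⟨y, hy, x', hx', rfl⟩ := exists_add_of_mem_degreeLT_succ hx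
  have hax' : f a' = Y.diff x' := by
    have hproj := congrArg (proj Y.grading (M + 1)) hax
    rwa [Y.proj_succ_diff, map_add, map_add, map_add, mem_degreeLT.1 hy M le_rfl,
      proj_of_mem _ hx', mem_degreeLT.1 (map_mem_degreeLT f hb) (M + 1) le_rfl,
      proj_of_mem _ (f.map_mem ha'.1), zero_add, zero_add] at hproj
  have hby : f b = Y.diff y := by
    rw [map_add, map_add, hax'] at hax
    exact add_right_cancel hax
  obtain ⟨c, -, z, -, rfl, rfl⟩ := h b hb y hy hdb hby
  obtain ⟨c', z', h₁, h₂⟩ :=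
    mem_coneCoboundaries.1 (hM (show (a', x') ∈ coneCocycles f M from ⟨ha', hx', hax'⟩))
  dsimp only at h₁ h₂
  refine ⟨c + c', z + z', by rw [map_add, h₁], ?_⟩
  rw [h₂, map_add, map_add, add_add_add_comm]

lemma exists_cocycle_sub_mem_coneCoboundaries (f : X.Hom Y) (M : ℕ) {p : X.carrier × Y.carrier}
    (hp : p ∈ coneCocycles f M) (hp₁ : p.1 ∈ LinearMap.range X.diff) :
    ∃ x ∈ Y.cocycles M, p - (0, x) ∈ coneCoboundaries f := by
  obtain ⟨a, ha⟩ := hp₁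
  have hda : X.diff (proj X.grading M a) = p.1 := by
    rw [← X.proj_succ_diff, ha, proj_of_mem _ hp.1.1]
  refine ⟨p.2 - f (proj X.grading M a),
    ⟨sub_mem hp.2.1 (f.map_mem (proj_mem _ M a)), ?_⟩, mem_coneCoboundaries.2
    ⟨proj X.grading M a, 0, (sub_zero _).trans hda.symm, ?_⟩⟩
  · change Y.diff _ = 0
    rw [map_sub, ← hp.2.2, f.diff_map, hda, sub_self]
  · rw [map_zero, add_zero]
    exact sub_sub_cancel _ _

lemma fg_map_mkQ_coneCocycles (f : X.Hom Y) (M : ℕ) [FiniteDimensional k (X.grading (M + 1))]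
    (hY : (Y.cohomology M).FG) : ((coneCocycles f M).map (coneCoboundaries f).mkQ).FG := by
  let fstQ : (X.carrier × Y.carrier) ⧸ coneCoboundaries f →ₗ[k]
      X.carrier ⧸ LinearMap.range X.diff :=
    Submodule.mapQ _ _ (.fst k _ _) fun p hp =>
      have ⟨a, _, ha, _⟩ := mem_coneCoboundaries.1 hp
      ⟨a, ha.symm⟩
  let inrQ : Y.carrier ⧸ LinearMap.range Y.diff →ₗ[k]
      (X.carrier × Y.carrier) ⧸ coneCoboundaries f :=
    Submodule.mapQ _ _ (.inr k _ _) fun x ⟨y, hy⟩ =>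
      mem_coneCoboundaries.2 ⟨0, y, by simp, by simp [hy]⟩
  refine Submodule.fg_of_fg_map_of_fg_inf_ker fstQ ?_ ?_
  · have hX := (Module.Finite.iff_fg.1 ‹_›).map (LinearMap.range X.diff).mkQ
    have := Module.Finite.iff_fg.2 hX
    refine Submodule.FG.of_le_of_isNoetherian
      (T := (X.grading (M + 1)).map (LinearMap.range X.diff).mkQ) ?_
    rintro _ ⟨_, ⟨p, hp, rfl⟩, rfl⟩
    exact ⟨p.1, hp.1.1, rfl⟩
  · have := Module.Finite.iff_fg.2 (hY.map inrQ)
    refine Submodule.FG.of_le_of_isNoetherian (T := (Y.cohomology M).map inrQ) ?_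
    rintro _ ⟨⟨p, hp, rfl⟩, hker⟩
    obtain ⟨x, hx, hpx⟩ := exists_cocycle_sub_mem_coneCoboundaries f M hp
      ((Submodule.Quotient.mk_eq_zero _).1 hker)
    exact ⟨_, ⟨x, hx, rfl⟩, ((Submodule.Quotient.eq _).2 hpx).symm⟩

lemma exists_coneCocycles_le_span_sup (f : X.Hom Y) (M : ℕ)
    [FiniteDimensional k (X.grading (M + 1))] (hY : (Y.cohomology M).FG) :
    ∃ (r : ℕ) (w : Fin r → X.carrier × Y.carrier), (∀ i, w i ∈ coneCocycles f M) ∧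
      coneCocycles f M ≤ Submodule.span k (Set.range w) ⊔ coneCoboundaries f := by
  obtain ⟨r, s, hs⟩ :=
    Submodule.fg_iff_exists_fin_generating_family.1 (fg_map_mkQ_coneCocycles f M hY)
  have hlift : ∀ i, ∃ w ∈ coneCocycles f M, (coneCoboundaries f).mkQ w = s i := fun i =>
    (hs ▸ Submodule.subset_span ⟨i, rfl⟩ : s i ∈ (coneCocycles f M).map (coneCoboundaries f).mkQ)
  choose w hw hws using hlift
  refine ⟨r, w, hw, ?_⟩
  have hmap : (coneCoboundaries f).mkQ '' Set.range w = Set.range s := by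
    rw [← Set.range_comp]
    exact congrArg Set.range (funext hws)
  rw [sup_comm, ← Submodule.comap_map_mkQ, ← Submodule.map_le_iff_le_comap, ← hs,
    Submodule.map_span, hmap]

end MappingCone

section AttachGenerator

open TensorProduct

variable {X Y : CDGAPack k} {q : ℕ}

variable (X) in
/-- The CDGA obtained from `X` by freely adjoining a generator of degree `q` with differential
`z`. -/
noncomputable def attach (z : X.cocycles (q + 1)) (F : FreeGenerator k q) : CDGAPack k :=
  twist X z F.toTwistFiber

namespace attach

variable {z : X.cocycles (q + 1)} {F : FreeGenerator k q}

variable (X z F) in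
/-- The inclusion of `X` into the algebra with one more generator. -/
noncomputable def inl : X.Hom (attach X z F) := twist.inl X z F.toTwistFiber

variable (X z F) in
/-- The adjoined generator. -/
noncomputable def gen : (attach X z F).carrier := tmul X.grading F.grading 1 F.gen

lemma inl_apply (a : X.carrier) : inl X z F a = tmul X.grading F.grading a 1 := rfl

lemma diff_gen : (attach X z F).diff (gen X z F) = inl X z F z := by
  refine (twistDiff_tmul_of_mem X z F.toTwistFiber X.one_mem F.gen).trans ?_
  rw [X.diff_one, F.deriv_gen]
  simp [inl_apply]

lemma inl_eq_zero {a : X.carrier} : inl X z F a = 0 ↔ a = 0 := by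
  have := F.nontrivial
  exact tmul_eq_zero.trans (or_iff_left one_ne_zero)

lemma exists_lift (f : X.Hom Y) {s : Y.carrier} (hs : s ∈ Y.grading q) (hz : f z = Y.diff s) :
    ∃ g : (attach X z F).Hom Y, g.comp (inl X z F) = f ∧ g (gen X z F) = s := by
  obtain ⟨g, hgen, hg, hgd⟩ := F.exists_lift hs
  have hgd' : ∀ b, Y.diff (g b) = f z * g (F.deriv b) := fun b => by rw [hgd, hz]
  refine ⟨twist.lift f g hg hgd', CDGAPack.Hom.ext fun a => ?_, ?_⟩
  · exact (twist.lift_tmul f g hg hgd' a 1).trans (by rw [map_one, mul_one])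
  · exact (twist.lift_tmul f g hg hgd' 1 F.gen).trans (by rw [map_one, one_mul, hgen])

lemma simplyConnectedOfFiniteType (hX : SimplyConnectedOfFiniteType X.grading) (hq : 2 ≤ q) :
    SimplyConnectedOfFiniteType (attach X z F).grading :=
  hX.tensorGrading (F.simplyConnectedOfFiniteType hq)

lemma exists_eq_inl_add_smul_gen (hX : SimplyConnectedOfFiniteType X.grading) (hq : 2 ≤ q) {n : ℕ}
    (hn : n ≤ q + 1) {x : (attach X z F).carrier} (hx : x ∈ (attach X z F).grading n) :
    ∃ a ∈ X.grading n, ∃ c : k, (n ≠ q → c = 0) ∧ x = inl X z F a + c • gen X z F := by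
  obtain ⟨a, ha, b, hb, rfl⟩ :=
    hX.exists_eq_tmul_one_add_one_tmul (F.simplyConnectedOfFiniteType hq).eq_smul_one (q := q)
      (fun j h0 hj => (Submodule.eq_bot_iff _).2 fun _ hb =>
        F.eq_zero_of_mem (Nat.not_dvd_of_pos_of_lt h0 hj) hb) hn hx
  obtain rfl | hn0 := eq_or_ne n 0
  · obtain ⟨c, rfl⟩ := F.eq_smul_one_of_mem (by omega) hb
    refine ⟨a + c • 1, add_mem ha (Submodule.smul_mem _ c X.one_mem), 0, fun _ => rfl, ?_⟩
    rw [map_add, map_smul, zero_smul, add_zero, map_smul]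
    rfl
  obtain rfl | hnq := eq_or_ne n q
  · obtain ⟨c, rfl⟩ := F.eq_smul_gen_of_mem (by omega) hb
    exact ⟨a, ha, c, absurd rfl, by rw [map_smul]; rfl⟩
  have hdvd : ¬ q ∣ n := by
    obtain hlt | rfl : n < q ∨ n = q + 1 := by omega
    · exact Nat.not_dvd_of_pos_of_lt (Nat.pos_of_ne_zero hn0) hlt
    · rw [Nat.dvd_add_right dvd_rfl, Nat.dvd_one]
      omega
  refine ⟨a, ha, 0, fun _ => rfl, ?_⟩
  rw [F.eq_zero_of_mem hdvd hb, map_zero, zero_smul]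
  rfl

lemma exists_eq_inl_add_smul_gen_of_mem_degreeLT (hX : SimplyConnectedOfFiniteType X.grading)
    (hq : 2 ≤ q) {n : ℕ} (hn : n ≤ q + 2) {x : (attach X z F).carrier}
    (hx : x ∈ degreeLT (attach X z F).grading n) :
    ∃ a ∈ degreeLT X.grading n, ∃ c : k, x = inl X z F a + c • gen X z F := by
  induction n generalizing x with
  | zero => exact ⟨0, zero_mem _, 0, by simp [eq_zero_of_mem_degreeLT_zero _ hx]⟩
  | succ n ih =>
    obtain ⟨y, hy, b, hb, rfl⟩ := exists_add_of_mem_degreeLT_succ hx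
    obtain ⟨a, ha, c, rfl⟩ := ih (by omega) hy
    obtain ⟨a', ha', c', -, rfl⟩ := exists_eq_inl_add_smul_gen hX hq (by omega) hb
    refine ⟨a + a', add_mem (degreeLT_mono _ n.le_succ ha)
      (mem_degreeLT_of_mem _ n.lt_succ_self ha'), c + c', ?_⟩
    rw [map_add, add_smul, add_add_add_comm]

variable {f : X.Hom Y} {g : (attach X z F).Hom Y}

lemma coneMap_mem_coneCoboundaries :
    coneMap (inl X z F) Y (z, g (gen X z F)) ∈ coneCoboundaries g :=
  mem_coneCoboundaries.2 ⟨gen X z F, 0, diff_gen.symm, by rw [map_zero, add_zero]; rfl⟩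

lemma coneCocycles_le_map (hX : SimplyConnectedOfFiniteType X.grading) (hq : 2 ≤ q)
    (hg : g.comp (inl X z F) = f) :
    coneCocycles g q ≤ (coneCocycles f q).map (coneMap (inl X z F) Y) := by
  rintro ⟨b, x⟩ ⟨⟨hb, hdb⟩, hx, hbx⟩
  obtain ⟨a, ha, c, hc, rfl⟩ := exists_eq_inl_add_smul_gen hX hq le_rfl hb
  obtain rfl := hc (by omega)
  simp only [zero_smul, add_zero] at hdb hbx ⊢
  have hda : X.diff a = 0 :=
    inl_eq_zero.1 (((inl X z F).diff_map a).symm.trans hdb)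
  exact ⟨(a, x), ⟨⟨ha, hda⟩, hx, (DFunLike.congr_fun hg a).symm.trans hbx⟩, rfl⟩

lemma isEquivBelow (hX : SimplyConnectedOfFiniteType X.grading) (hq : 2 ≤ q)
    (hf : f.IsEquivBelow q) (hg : g.comp (inl X z F) = f)
    (hz : ((z : X.carrier), g (gen X z F)) ∉ coneCoboundaries f) : g.IsEquivBelow q := by
  refine .of_exists fun b hb x hx hd hbx => ?_
  obtain ⟨a, ha, c, rfl⟩ := exists_eq_inl_add_smul_gen_of_mem_degreeLT hX hq (by omega) hb
  have hgf (a : X.carrier) : g (inl X z F a) = f a := DFunLike.congr_fun hg a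
  have hda : X.diff a + c • z = 0 := by
    rw [map_add, map_smul, diff_gen, (inl X z F).diff_map, ← map_smul, ← map_add] at hd
    exact inl_eq_zero.1 hd
  rw [map_add, map_smul, hgf] at hbx
  obtain rfl : c = 0 := by
    by_contra hc
    refine hz ((Submodule.smul_mem_iff _ hc).1 (mem_coneCoboundaries.2 ⟨-a, x, ?_, ?_⟩))
    · rw [map_neg]
      exact eq_neg_of_add_eq_zero_right hda
    · rw [map_neg, ← hbx]
      exact (neg_add_cancel_left _ _).symm
  rw [zero_smul, add_zero] at hda hbx
  obtain ⟨a', -, x', -, rfl, rfl⟩ := hf a ha x hx hda hbx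
  exact ⟨inl X z F a', x', by rw [zero_smul, add_zero, (inl X z F).diff_map], by rw [hgf]⟩

end attach

end AttachGenerator

section Factorization

variable {W D T : CDGAPack k}

/-- The morphism `φ : P → D` is the second factor of a factorization `W → P → D` of `μ` whose first
factor admits a cobase change along `τ : W → T`, as a commutative square `W → P → Q`, `W → T → Q`
in which `P → Q` is again an equivalence below degree `M`. -/
def FactorsWithSquare (μ : W.Hom D) (τ : W.Hom T) (M : ℕ) {P : CDGAPack k} (φ : P.Hom D) : Prop :=
  ∃ ι : W.Hom P, φ.comp ι = μ ∧
    ∃ (Q : CDGAPack k) (κ : P.Hom Q) (j : T.Hom Q), κ.IsEquivBelow M ∧ κ.comp ι = j.comp τ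

variable {μ : W.Hom D} {τ : W.Hom T} {M q : ℕ}

lemma FactorsWithSquare.attach {P : CDGAPack k} {φ : P.Hom D} (h : FactorsWithSquare μ τ M φ)
    (hq : q ≠ 0) {z : P.cocycles (q + 1)} {F : FreeGenerator k q} {ψ : (attach P z F).Hom D}
    (hψ : ψ.comp (attach.inl P z F) = φ) : FactorsWithSquare μ τ M ψ := by
  obtain ⟨ι, rfl, Q, κ, j, hκ, hsq⟩ := h
  let w : Q.cocycles (q + 1) := ⟨κ z, κ.map_mem_cocycles z.2⟩
  refine ⟨(attach.inl P z F).comp ι, by rw [← CDGAPack.Hom.comp_assoc, hψ], PDCDGA.attach Q w F,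
    twist.map F.toTwistFiber κ rfl, (attach.inl Q w F).comp j, hκ.twistMap (by omega) rfl,
    CDGAPack.Hom.ext fun a => ?_⟩
  exact (twist.map_tmul κ rfl (ι a) 1).trans
    (congrArg (attach.inl Q w F) (DFunLike.congr_fun hsq a))

lemma FactorsWithSquare.exists_isEquivBelow_succ (hq : 2 ≤ q) {P : CDGAPack k} {φ : P.Hom D}
    (hP : SimplyConnectedOfFiniteType P.grading) (hφ : φ.IsEquivBelow q)
    (hsq : FactorsWithSquare μ τ M φ) {r : ℕ} (w : Fin r → P.carrier × D.carrier)
    (hw : ∀ i, w i ∈ coneCocycles φ q)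
    (hspan : coneCocycles φ q ≤ Submodule.span k (Set.range w) ⊔ coneCoboundaries φ) :
    ∃ (P' : CDGAPack k) (ψ : P'.Hom D), SimplyConnectedOfFiniteType P'.grading ∧
      ψ.IsEquivBelow (q + 1) ∧ FactorsWithSquare μ τ M ψ := by
  induction r generalizing P with
  | zero => exact ⟨P, φ, hP, hφ.succ (by simpa using hspan), hsq⟩
  | succ r ih =>
    rw [← Fin.cons_self_tail w, Fin.range_cons, Submodule.span_insert, sup_assoc] at hspan
    by_cases hb : w 0 ∈ coneCoboundaries φ
    · refine ih hP hφ hsq (Fin.tail w) (fun i => hw i.succ) (hspan.trans (sup_le ?_ le_rfl))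
      exact (Submodule.span_singleton_le_iff_mem ..).2 (Submodule.mem_sup_right hb)
    let z : P.cocycles (q + 1) := ⟨(w 0).1, (hw 0).1⟩
    let F := freeGenerator k (q := q) (by omega)
    obtain ⟨ψ, hψ, hgen⟩ := attach.exists_lift (z := z) (F := F) φ (hw 0).2.1 (hw 0).2.2
    have hw0 : w 0 = (↑z, ψ (attach.gen P z F)) := Prod.ext rfl hgen.symm
    refine ih (attach.simplyConnectedOfFiniteType hP hq)
      (attach.isEquivBelow hP hq hφ hψ (hw0 ▸ hb)) (hsq.attach (by omega) hψ)
      (coneMap (attach.inl P z F) D ∘ Fin.tail w)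
      (fun i => coneMap_mem_coneCocycles hψ (hw i.succ)) ?_
    refine (attach.coneCocycles_le_map hP hq hψ).trans ((Submodule.map_mono hspan).trans ?_)
    rw [Submodule.map_sup, Submodule.map_sup, Submodule.map_span, Submodule.map_span,
      ← Set.range_comp, Set.image_singleton, hw0]
    refine sup_le ?_ (sup_le_sup le_rfl (map_coneCoboundaries_le hψ))
    exact (Submodule.span_singleton_le_iff_mem ..).2
      (Submodule.mem_sup_right attach.coneMap_mem_coneCoboundaries)

theorem exists_factorsWithSquare (μ : W.Hom D) (τ : W.Hom T)
    (hW : SimplyConnectedOfFiniteType W.grading) (hμ : μ.IsEquivBelow 2) (hτ : τ.IsEquivBelow M)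
    {N : ℕ} (hD : D.TwoConnectedCohomology N) :
    ∃ (P : CDGAPack k) (ψ : P.Hom D), SimplyConnectedOfFiniteType P.grading ∧
      ψ.IsEquivBelow (N + 1) ∧ FactorsWithSquare μ τ M ψ := by
  have hμτ : FactorsWithSquare μ τ M μ := ⟨.id W, rfl, T, τ, .id T, hτ, rfl⟩
  suffices ∀ j ≤ N + 1, ∃ (P : CDGAPack k) (ψ : P.Hom D), SimplyConnectedOfFiniteType P.grading ∧
      ψ.IsEquivBelow j ∧ FactorsWithSquare μ τ M ψ from this _ le_rfl
  intro j
  induction j with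
  | zero => exact fun _ => ⟨W, μ, hW, hμ.mono (Nat.zero_le 2), hμτ⟩
  | succ j ih =>
    intro hj
    obtain hj2 | hj2 := lt_or_ge j 2
    · exact ⟨W, μ, hW, hμ.mono hj2, hμτ⟩
    obtain ⟨P, ψ, hP, hψ, hsq⟩ := ih (by omega)
    have := hP.finite (j + 1)
    obtain ⟨r, w, hw, hspan⟩ :=
      exists_coneCocycles_le_span_sup ψ j (hD.fg_cohomology j (by omega))
    exact hsq.exists_isEquivBelow_succ hj2 hP hψ w hw hspan

end Factorization

/-! ### Cospans from zig-zags -/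

section CommonTarget

variable {X Y A B S E : CDGAPack k} {M N : ℕ}

namespace CDGAPack

namespace Hom.IsEquivBelow

lemma cocycles_two {σ : S.Hom A} (h : σ.IsEquivBelow M) (hM : 2 ≤ M) (hS : S.grading 1 = ⊥)
    (hA : A.TwoConnectedCohomology N) : S.cocycles 2 = ⊥ := by
  refine (Submodule.eq_bot_iff _).2 fun a ha => ?_
  obtain ⟨c, rfl⟩ :=
    h.mem_range_diff hM ha (hA.mem_range_diff 2 one_le_two le_rfl _ (σ.map_mem_cocycles ha))
  have hc : _root_.GradedAlgebra.proj S.grading 1 c ∈ S.grading 1 := proj_mem _ 1 c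
  rw [hS, Submodule.mem_bot] at hc
  rw [← proj_of_mem _ ha.1, S.proj_succ_diff, hc, map_zero]

end Hom.IsEquivBelow

namespace TwoConnectedCohomology

lemma exists_model (hA : A.TwoConnectedCohomology N) :
    ∃ (S : CDGAPack k) (σ : S.Hom A), SimplyConnectedOfFiniteType S.grading ∧
      σ.IsEquivBelow (N + 1) := by
  have hk2 : (groundField k).cocycles 2 = ⊥ :=
    (Submodule.eq_bot_iff _).2 fun _ ha => groundField.eq_zero_of_mem two_ne_zero ha.1
  obtain ⟨S, σ, hS, hσ, -⟩ := exists_factorsWithSquare (unitHom A) (.id _)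
    groundField.simplyConnectedOfFiniteType (.two _ groundField.simplyConnectedOfFiniteType hk2 hA)
    (.id _ 0) hA
  exact ⟨S, σ, hS, hσ⟩

lemma of_cocycles_two (hA : SimplyConnectedOfFiniteType A.grading) [Nontrivial A.carrier]
    (hA2 : A.cocycles 2 = ⊥) : A.TwoConnectedCohomology N where
  nontrivial := ‹_›
  eq_smul_one a ha := hA.eq_smul_one a ha.1
  mem_range_diff i h1 h2 a ha := by
    obtain rfl | rfl : i = 1 ∨ i = 2 := by omega
    · exact (hA.one_eq_bot.le ha.1 : a = 0) ▸ zero_mem _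
    · exact (hA2.le ha : a = 0) ▸ zero_mem _
  fg_cohomology i _ := by
    have := hA.finite i
    exact (Module.Finite.iff_fg.1 (Submodule.finiteDimensional_of_le inf_le_left)).map _

end TwoConnectedCohomology

end CDGAPack

open CDGAPack

theorem exists_cospan_of_span {α : S.Hom A} {β : S.Hom B}
    (hS : SimplyConnectedOfFiniteType S.grading) (hS2 : S.cocycles 2 = ⊥)
    (hSM : S.TwoConnectedCohomology M) (hα : α.IsEquivBelow (M + 1))
    (hβ : β.IsEquivBelow (M + 1)) :
    ∃ (Q : CDGAPack k) (u : A.Hom Q) (v : B.Hom Q), u.IsEquivBelow M ∧ v.IsEquivBelow M := by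
  have := hSM.nontrivial
  have hSS := hS.tensorGrading hS
  obtain ⟨P, ψ, -, hψ, ι, hι, Q, κ, j, hκ, hsq⟩ := exists_factorsWithSquare
    (tensor.lift (.id S) (.id S)) (tensor.map α β) hSS
    (.two _ hSS (tensor.cocycles_two hS hS hS2 hS2) hSM) (hα.tensorMap hβ) hSM
  have hleft : (ι.comp (tensor.inl S S)).IsEquivBelow (M + 1) := by
    refine .of_comp_left hψ ?_
    rw [← Hom.comp_assoc, hι, tensor.lift_comp_inl]
    exact .id S _
  have hright : (ι.comp (tensor.inr S S)).IsEquivBelow (M + 1) := by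
    refine .of_comp_left hψ ?_
    rw [← Hom.comp_assoc, hι, tensor.lift_comp_inr]
    exact .id S _
  refine ⟨Q, j.comp (tensor.inl A B), j.comp (tensor.inr A B), .of_comp_right hα ?_,
    .of_comp_right hβ ?_⟩
  · rw [Hom.comp_assoc, ← tensor.map_comp_inl, ← Hom.comp_assoc, ← hsq, Hom.comp_assoc]
    exact hκ.comp hleft
  · rw [Hom.comp_assoc, ← tensor.map_comp_inr, ← Hom.comp_assoc, ← hsq, Hom.comp_assoc]
    exact hκ.comp hright

/-- The algebras `X` and `Y` map to a common CDGA by equivalences below degree `N`. -/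
def ExistsCospan (X Y : CDGAPack k) (N : ℕ) : Prop :=
  ∃ (E : CDGAPack k) (u : X.Hom E) (v : Y.Hom E), u.IsEquivBelow N ∧ v.IsEquivBelow N

namespace ExistsCospan

lemma comp_right {f : A.Hom B} (hf : f.IsEquivBelow N) (h : ExistsCospan X B N) :
    ExistsCospan X A N :=
  have ⟨E, u, v, hu, hv⟩ := h
  ⟨E, u, v.comp f, hu, hv.comp hf⟩

lemma of_hom (hX : ∀ N, X.TwoConnectedCohomology N) {f : A.Hom B} (hf : ∀ M, f.IsEquivBelow M)
    (h : ∀ N, ExistsCospan X A N) (N : ℕ) : ExistsCospan X B N := by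
  obtain ⟨E, u, v, hu, hv⟩ := h (N + 4)
  have hA : A.TwoConnectedCohomology (N + 3) :=
    .of_isEquivBelow_right hv (by omega) (by omega)
      (.of_isEquivBelow hu (by omega) (by omega) (hX (N + 3)))
  obtain ⟨S, σ, hS, hσ⟩ := hA.exists_model
  have hS' : S.TwoConnectedCohomology (N + 3) := .of_isEquivBelow_right hσ (by omega) (by omega) hA
  obtain ⟨Q, a, b, ha, hb⟩ := exists_cospan_of_span hS (hσ.cocycles_two (by omega) hS.one_eq_bot hA)
    hS' (hv.comp hσ) ((hf _).comp hσ)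
  exact ⟨Q, a.comp u, b, (ha.mono (by omega)).comp (hu.mono (by omega)), hb.mono (by omega)⟩

end ExistsCospan

lemma QIStep.exists_hom (h : QIStep A B) : ∃ f : A.Hom B, ∀ M, f.IsEquivBelow M :=
  have ⟨f, hf, hfd, hqi⟩ := h
  ⟨⟨f, hf, hfd⟩, .of_isQuasiIso hqi⟩

namespace WeaklyEquivalent

lemma forall_existsCospan_iff (hX : ∀ N, X.TwoConnectedCohomology N) (h : WeaklyEquivalent A B) :
    (∀ N, ExistsCospan X A N) ↔ ∀ N, ExistsCospan X B N := by
  induction h with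
  | rel A B h =>
    obtain ⟨f, hf⟩ := h.exists_hom
    exact ⟨ExistsCospan.of_hom hX hf, fun h N => (h N).comp_right (hf N)⟩
  | refl A => rfl
  | symm A B _ ih => exact ih.symm
  | trans A B C _ _ ih₁ ih₂ => exact ih₁.trans ih₂

lemma existsCospan (hX : ∀ N, X.TwoConnectedCohomology N) (h : WeaklyEquivalent X Y) (N : ℕ) :
    ExistsCospan X Y N :=
  (h.forall_existsCospan_iff hX).1 (fun N => ⟨X, .id X, .id X, .id X N, .id X N⟩) N

lemma one_eq_zero_iff (h : WeaklyEquivalent X Y) :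
    (1 : X.carrier) = 0 ↔ (1 : Y.carrier) = 0 := by
  induction h with
  | rel A B h =>
    obtain ⟨f, hf⟩ := h.exists_hom
    refine ⟨fun hA => by rw [← map_one f, hA, map_zero], fun hB => ?_⟩
    exact (hf 0).eq_zero_of_map_eq_zero ⟨A.one_mem, A.diff_one⟩ (by rw [map_one, hB])
  | refl A => rfl
  | symm A B _ ih => exact ih.symm
  | trans A B C _ _ ih₁ ih₂ => exact ih₁.trans ih₂

theorem exists_common_target (h : WeaklyEquivalent X Y) [Nontrivial X.carrier]
    (hX : SimplyConnectedOfFiniteType X.grading) (hY : SimplyConnectedOfFiniteType Y.grading)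
    (hX2 : X.cocycles 2 = ⊥) (hY2 : Y.cocycles 2 = ⊥) (N : ℕ) :
    ∃ (A : CDGAPack k) (f : X.Hom A) (g : Y.Hom A), SimplyConnectedOfFiniteType A.grading ∧
      f.IsEquivBelow N ∧ g.IsEquivBelow N := by
  have hXH := fun N => TwoConnectedCohomology.of_cocycles_two (N := N) hX hX2
  obtain ⟨E, u, v, hu, hv⟩ := h.existsCospan hXH (N + 3)
  have hE : E.TwoConnectedCohomology (N + 2) :=
    .of_isEquivBelow hu (by omega) (by omega) (hXH _)
  have := (hE.of_isEquivBelow_right hv (by omega) (by omega)).nontrivial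
  have hXY := hX.tensorGrading hY
  obtain ⟨A, ψ, hA, hψ, ι, hι, -⟩ := exists_factorsWithSquare (tensor.lift u v) (.id _) hXY
    (.two _ hXY (tensor.cocycles_two hX hY hX2 hY2) hE) (.id _ 0) hE
  refine ⟨A, ι.comp (tensor.inl X Y), ι.comp (tensor.inr X Y), hA,
    .mono (M := N + 3) (.of_comp_left hψ ?_) (by omega),
    .mono (M := N + 3) (.of_comp_left hψ ?_) (by omega)⟩
  · rwa [← Hom.comp_assoc, hι, tensor.lift_comp_inl]
  · rwa [← Hom.comp_assoc, hι, tensor.lift_comp_inr]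

end WeaklyEquivalent

end CommonTarget

/-! ### Poincaré duality and orphans -/

section ClosedFunctional

open GradedAlgebra (proj)

lemma exists_dual_comp_eq {V W : Type} [AddCommGroup V] [Module k V] [AddCommGroup W] [Module k W]
    (g : V →ₗ[k] W) (φ : V →ₗ[k] k) (h : ∀ v, g v = 0 → φ v = 0) : ∃ ψ : W →ₗ[k] k, ψ ∘ₗ g = φ := by
  change φ ∈ LinearMap.range g.dualMap
  rw [LinearMap.range_dualMap_eq_dualAnnihilator_ker, Submodule.mem_dualAnnihilator]
  exact h

/-- A cocycle of degree `-n` in the dual complex: a linear functional concentrated in degree `n`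
that vanishes on boundaries. -/
structure IsClosedFunctional (X : CDGAPack k) (n : ℕ) (ε : X.carrier →ₗ[k] k) : Prop where
  eq_zero_of_mem : ∀ i, i ≠ n → ∀ a ∈ X.grading i, ε a = 0
  map_diff : ∀ a, ε (X.diff a) = 0

namespace IsClosedFunctional

variable {X : CDGAPack k} {n : ℕ} {ε : X.carrier →ₗ[k] k} (h : IsClosedFunctional X n ε)
include h

lemma map_mul_eq_zero {i j : ℕ} (hij : i + j ≠ n) {a b : X.carrier} (ha : a ∈ X.grading i)
    (hb : b ∈ X.grading j) : ε (a * b) = 0 :=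
  h.eq_zero_of_mem _ hij _ (CDGAPack.mul_mem ha hb rfl)

lemma map_mul_comm {i : ℕ} {a : X.carrier} (ha : a ∈ X.grading i) (b : X.carrier) :
    ε (a * b) = (-1) ^ (i * (n - i)) * ε (b * a) := by
  refine LinearMap.congr_fun (linearMap_ext_homogeneous X.grading
    (f := ε ∘ₗ LinearMap.mulLeft k a) (g := (-1 : k) ^ (i * (n - i)) • ε ∘ₗ LinearMap.mulRight k a)
    fun j b hb => ?_) b
  change ε (a * b) = (-1) ^ (i * (n - i)) * ε (b * a)
  by_cases hij : i + j = n
  · obtain rfl : n - i = j := by omega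
    rw [X.gcomm.mul_comm _ _ _ _ ha hb, map_smul, smul_eq_mul]
  · rw [h.map_mul_eq_zero hij ha hb, h.map_mul_eq_zero (by omega) hb ha, mul_zero]

lemma map_proj_mul {i j : ℕ} (hij : i + j = n) (a : X.carrier) {b : X.carrier}
    (hb : b ∈ X.grading j) : ε (proj X.grading i a * b) = ε (a * b) := by
  refine LinearMap.congr_fun (linearMap_ext_homogeneous X.grading
    (f := ε ∘ₗ LinearMap.mulRight k b ∘ₗ proj X.grading i) (g := ε ∘ₗ LinearMap.mulRight k b)
    fun m a ha => ?_) a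
  change ε (proj X.grading i a * b) = ε (a * b)
  obtain rfl | hmi := eq_or_ne m i
  · rw [proj_of_mem _ ha]
  · rw [proj_of_mem_ne _ ha hmi, zero_mul, map_zero, h.map_mul_eq_zero (by omega) ha hb]

lemma map_diff_mul {i : ℕ} {a : X.carrier} (ha : a ∈ X.grading i) (b : X.carrier) :
    ε (X.diff a * b) = -((-1) ^ i * ε (a * X.diff b)) := by
  have hab := h.map_diff (a * b)
  rw [X.isdiff.leibniz i a b ha, map_add, map_smul, smul_eq_mul] at hab
  exact eq_neg_of_add_eq_zero_left hab

lemma map_mul_of_mem_orphans {a : X.carrier} (ha : a ∈ Orphans ε) (c : X.carrier) :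
    ε (c * a) = 0 := by
  refine LinearMap.congr_fun (linearMap_ext_homogeneous X.grading
    (f := ε ∘ₗ LinearMap.mulRight k a) (g := 0) fun i c hc => ?_) c
  exact (h.map_mul_comm hc a).trans (by rw [(mem_orphans ε a).1 ha, mul_zero]; rfl)

lemma mul_mem_orphans_right {a : X.carrier} (ha : a ∈ Orphans ε) (c : X.carrier) :
    c * a ∈ Orphans ε := by
  refine (mem_orphans ε _).2 fun b => ?_
  rw [mul_assoc]
  exact h.map_mul_of_mem_orphans
    ((mem_orphans ε _).2 fun b' => by rw [mul_assoc]; exact (mem_orphans ε a).1 ha _) c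

lemma proj_mem_orphans {a : X.carrier} (ha : a ∈ Orphans ε) (i : ℕ) :
    proj X.grading i a ∈ Orphans ε := by
  refine (mem_orphans ε _).2 fun b => ?_
  refine LinearMap.congr_fun (linearMap_ext_homogeneous X.grading
    (f := ε ∘ₗ LinearMap.mulLeft k (proj X.grading i a)) (g := 0) fun j b hb => ?_) b
  change ε (proj X.grading i a * b) = 0
  by_cases hij : i + j = n
  · rw [h.map_proj_mul hij a hb, (mem_orphans ε a).1 ha]
  · exact h.map_mul_eq_zero hij (proj_mem _ _ _) hb

lemma diff_mem_orphans {a : X.carrier} (ha : a ∈ Orphans ε) : X.diff a ∈ Orphans ε := by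
  refine mem_of_forall_proj_mem X.grading (S := (Orphans ε).comap X.diff) fun i => ?_
  refine (mem_orphans ε _).2 fun b => ?_
  rw [h.map_diff_mul (proj_mem _ _ _), (mem_orphans ε _).1 (h.proj_mem_orphans ha i)]
  simp

lemma exists_mul_ne_zero {i : ℕ} {a : X.carrier} (ha : a ∈ X.grading i) (ha' : a ∉ Orphans ε) :
    ∃ j b, i + j = n ∧ b ∈ X.grading j ∧ ε (a * b) ≠ 0 := by
  by_contra! hε
  refine ha' ((mem_orphans ε a).2 fun b => ?_)
  refine LinearMap.congr_fun (linearMap_ext_homogeneous X.grading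
    (f := ε ∘ₗ LinearMap.mulLeft k a) (g := 0) fun j b hb => ?_) b
  by_cases hij : i + j = n
  · exact hε j b hij hb
  · exact h.map_mul_eq_zero hij ha hb

end IsClosedFunctional

end ClosedFunctional

section PoincareDuality

open GradedAlgebra (proj)

/-- Differential Poincaré duality algebras of dimension `n` with orientation `ε`. Only left
non-degeneracy is recorded; it implies the right one by graded commutativity. -/
structure IsPoincareDuality (X : CDGAPack k) (n : ℕ) (ε : X.carrier →ₗ[k] k) : Prop
    extends IsClosedFunctional X n ε where
  finite : ∀ i, FiniteDimensional k (X.grading i)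
  nondegenerate : ∀ i a, a ∈ X.grading i → a ≠ 0 →
    ∃ j b, i + j = n ∧ b ∈ X.grading j ∧ ε (a * b) ≠ 0

namespace IsPoincareDuality

variable {X : CDGAPack k} {n : ℕ} {ε : X.carrier →ₗ[k] k} (h : IsPoincareDuality X n ε)
include h

lemma eq_zero_of_lt {i : ℕ} (hi : n < i) {a : X.carrier} (ha : a ∈ X.grading i) : a = 0 := by
  by_contra ha0
  obtain ⟨j, b, hij, -⟩ := h.nondegenerate i a ha ha0
  omega

lemma grading_eq_bot {i : ℕ} (hi : n < i) : X.grading i = ⊥ :=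
  (Submodule.eq_bot_iff _).2 fun _ ha => h.eq_zero_of_lt hi ha

lemma exists_mul_ne_zero {i j : ℕ} (hij : i + j = n) {a : X.carrier} (ha : a ∈ X.grading i)
    (ha0 : a ≠ 0) : ∃ b ∈ X.grading j, ε (a * b) ≠ 0 := by
  obtain ⟨j', b, hij', hb, hab⟩ := h.nondegenerate i a ha ha0
  obtain rfl : j = j' := by omega
  exact ⟨b, hb, hab⟩

lemma exists_mul_ne_zero_right {i j : ℕ} (hij : i + j = n) {b : X.carrier} (hb : b ∈ X.grading j)
    (hb0 : b ≠ 0) : ∃ a ∈ X.grading i, ε (a * b) ≠ 0 := by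
  obtain ⟨a, ha, hba⟩ := h.exists_mul_ne_zero (by omega : j + i = n) hb hb0
  rw [h.map_mul_comm hb] at hba
  exact ⟨a, ha, right_ne_zero_of_mul hba⟩

lemma eq_zero_of_forall_mul {i j : ℕ} (hij : i + j = n) {a : X.carrier} (ha : a ∈ X.grading i)
    (hab : ∀ b ∈ X.grading j, ε (a * b) = 0) : a = 0 := by
  by_contra ha0
  obtain ⟨b, hb, hne⟩ := h.exists_mul_ne_zero hij ha ha0
  exact hne (hab b hb)

lemma exists_represents {i j : ℕ} (hij : i + j = n) (φ : X.carrier →ₗ[k] k) :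
    ∃ y ∈ X.grading i, ∀ w ∈ X.grading j, ε (y * w) = φ w := by
  have := h.finite i
  let pairing : X.grading i →ₗ[k] X.grading j →ₗ[k] k :=
    ((LinearMap.mul k X.carrier).compr₂ ε).compl₁₂ (X.grading i).subtype (X.grading j).subtype
  have left_injective : Function.Injective pairing := by
    refine (injective_iff_map_eq_zero _).2 fun a ha => Subtype.ext ?_
    exact h.eq_zero_of_forall_mul hij a.2 fun b hb => LinearMap.congr_fun ha ⟨b, hb⟩
  have right_injective : Function.Injective pairing.flip := by
    refine (injective_iff_map_eq_zero _).2 fun b hb => Subtype.ext ?_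
    by_contra hb0
    obtain ⟨a, ha, hne⟩ := h.exists_mul_ne_zero_right hij b.2 hb0
    exact hne (LinearMap.congr_fun hb ⟨a, ha⟩)
  have perfect := LinearMap.IsPerfPair.of_injective left_injective right_injective
  obtain ⟨y, hy⟩ := perfect.bijective_left.2 (φ ∘ₗ (X.grading j).subtype)
  exact ⟨y, y.2, fun w hw => LinearMap.congr_fun hy ⟨w, hw⟩⟩

lemma mem_range_diff_of_forall_cocycles {i j : ℕ} (hij : i + j = n) {x : X.carrier}
    (hx : x ∈ X.grading i) (hxz : ∀ z ∈ X.cocycles j, ε (x * z) = 0) :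
    x ∈ LinearMap.range X.diff := by
  obtain _ | i := i
  · have : x = 0 := h.eq_zero_of_forall_mul hij hx fun b hb => hxz b (CDGAPack.mem_cocycles.2
      ⟨hb, h.eq_zero_of_lt (by omega) (X.isdiff.grade _ _ hb)⟩)
    exact this ▸ zero_mem _
  obtain ⟨φ, hφ⟩ := exists_dual_comp_eq (X.diff ∘ₗ (X.grading j).subtype)
    (ε ∘ₗ LinearMap.mulLeft k x ∘ₗ (X.grading j).subtype)
    fun v hv => hxz v (CDGAPack.mem_cocycles.2 ⟨v.2, hv⟩)
  obtain ⟨y, hy, hyφ⟩ := h.exists_represents (by omega : i + (j + 1) = n) φ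
  refine ⟨(-(-1 : k) ^ i) • y, ?_⟩
  rw [eq_comm, ← sub_eq_zero, map_smul]
  refine h.eq_zero_of_forall_mul hij
    (sub_mem hx (Submodule.smul_mem _ _ (X.isdiff.grade _ _ hy))) fun b hb => ?_
  have hφb : φ (X.diff b) = ε (x * b) := LinearMap.congr_fun hφ ⟨b, hb⟩
  rw [sub_mul, map_sub, smul_mul_assoc, map_smul, h.map_diff_mul hy, hyφ _ (X.isdiff.grade _ _ hb),
    hφb, smul_eq_mul, neg_mul_neg, ← mul_assoc, ← pow_add, Even.neg_one_pow ⟨i, rfl⟩, one_mul,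
    sub_self]

lemma exists_extension {A : CDGAPack k} {f : X.Hom A} {N : ℕ} (hf : f.IsEquivBelow N)
    (hN : n ≤ N) : ∃ φ, IsClosedFunctional A n φ ∧ ∀ x, φ (f x) = ε x := by
  obtain ⟨ψ, hψ⟩ := exists_dual_comp_eq
    ((LinearMap.range A.diff).mkQ ∘ₗ f.toAlgHom.toLinearMap ∘ₗ (X.grading n).subtype)
    (ε ∘ₗ (X.grading n).subtype) (by
      rintro ⟨x, hx⟩ hfx
      obtain ⟨b, rfl⟩ := hf.mem_range_diff hN (CDGAPack.mem_cocycles.2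
        ⟨hx, h.eq_zero_of_lt n.lt_succ_self (X.isdiff.grade _ _ hx)⟩)
        ((Submodule.Quotient.mk_eq_zero _).1 hfx)
      exact h.map_diff b)
  refine ⟨ψ ∘ₗ (LinearMap.range A.diff).mkQ ∘ₗ proj A.grading n, ⟨fun i hi a ha => ?_,
    fun a => ?_⟩, fun x => ?_⟩
  · simp only [LinearMap.comp_apply, proj_of_mem_ne _ ha hi, map_zero]
  · simp only [LinearMap.comp_apply, Submodule.mkQ_apply, (Submodule.Quotient.mk_eq_zero _).2
      (A.proj_diff_mem_range n (LinearMap.mem_range_self A.diff a)), map_zero]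
  · rw [LinearMap.comp_apply, LinearMap.comp_apply, f.proj_map]
    refine (LinearMap.congr_fun hψ ⟨proj X.grading n x, proj_mem _ _ _⟩).trans ?_
    simpa using h.map_proj_mul (add_zero n) x X.one_mem

end IsPoincareDuality

end PoincareDuality

section Quotient

open GradedAlgebra (proj)

variable (X : CDGAPack k) (I : Ideal X.carrier) [I.IsTwoSided]

/-- The linear map induced on `X ⧸ I` by a linear map that vanishes on the ideal `I`. -/
noncomputable def quotientLift {V : Type} [AddCommGroup V] [Module k V] (φ : X.carrier →ₗ[k] V)
    (hφ : ∀ a ∈ I, φ a = 0) : X.carrier ⧸ I →ₗ[k] V :=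
  (I.restrictScalars k).liftQ φ hφ ∘ₗ (Submodule.Quotient.restrictScalarsEquiv k I).symm

variable {X I} in
@[simp] lemma quotientLift_mk {V : Type} [AddCommGroup V] [Module k V] (φ : X.carrier →ₗ[k] V)
    (hφ : ∀ a ∈ I, φ a = 0) (a : X.carrier) :
    quotientLift X I φ hφ (Ideal.Quotient.mkₐ k I a) = φ a := rfl

/-- The image of the grading of `X` in `X ⧸ I`. -/
noncomputable def quotientGrading (i : ℕ) : Submodule k (X.carrier ⧸ I) :=
  (X.grading i).map (Ideal.Quotient.mkₐ k I).toLinearMap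

variable {X I}

/-- Homogeneity of `I` makes `quotientGrading` a grading. -/
@[reducible] noncomputable def quotientGradedRing
    (hproj : ∀ i, ∀ a ∈ I, proj X.grading i a ∈ I) : GradedRing (quotientGrading X I) :=
  gradedRingOfProjections (quotientGrading X I)
    (fun i => quotientLift X I ((Ideal.Quotient.mkₐ k I).toLinearMap ∘ₗ proj X.grading i)
      fun a ha => Ideal.Quotient.eq_zero_iff_mem.2 (hproj i a ha))
    (by
      rintro i _ ⟨a, ha, rfl⟩
      exact (quotientLift_mk _ _ a).trans (by rw [LinearMap.comp_apply, proj_of_mem _ ha]))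
    (by
      rintro i j hij _ ⟨a, ha, rfl⟩
      exact (quotientLift_mk _ _ a).trans
        (by rw [LinearMap.comp_apply, proj_of_mem_ne _ ha hij, map_zero]))
    (by
      refine eq_top_iff.2 fun x _ => ?_
      obtain ⟨a, rfl⟩ := Ideal.Quotient.mkₐ_surjective k I x
      exact mem_of_forall_proj_mem X.grading
        (S := (⨆ i, quotientGrading X I i).comap (Ideal.Quotient.mkₐ k I).toLinearMap)
        fun i => le_iSup (quotientGrading X I) i ⟨_, proj_mem _ _ _, rfl⟩)
    ⟨1, X.one_mem, map_one (Ideal.Quotient.mkₐ k I)⟩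
    (by
      rintro i j _ _ ⟨a, ha, rfl⟩ ⟨b, hb, rfl⟩
      exact ⟨a * b, CDGAPack.mul_mem ha hb rfl, map_mul (Ideal.Quotient.mkₐ k I) a b⟩)

lemma gradedComm_quotientGrading : GradedComm (quotientGrading X I) where
  mul_comm := by
    rintro i j _ _ ⟨a, ha, rfl⟩ ⟨b, hb, rfl⟩
    exact (congrArg (Ideal.Quotient.mkₐ k I) (X.gcomm.mul_comm i j a b ha hb)).trans
      (map_smul _ _ _)
  odd_sq := by
    rintro i hi _ ⟨a, ha, rfl⟩
    exact (congrArg (Ideal.Quotient.mkₐ k I) (X.gcomm.odd_sq i hi a ha)).trans (map_zero _)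

/-- The quotient of a CDGA by a homogeneous differential ideal. -/
noncomputable def CDGAPack.quotient (hproj : ∀ i, ∀ a ∈ I, proj X.grading i a ∈ I)
    (hdiff : ∀ a ∈ I, X.diff a ∈ I) : CDGAPack k :=
  letI := quotientGradedRing hproj
  { carrier := X.carrier ⧸ I
    grading := quotientGrading X I
    diff := quotientLift X I ((Ideal.Quotient.mkₐ k I).toLinearMap ∘ₗ X.diff)
      fun a ha => Ideal.Quotient.eq_zero_iff_mem.2 (hdiff a ha)
    gcomm := gradedComm_quotientGrading
    isdiff :=
      { grade := by
          rintro i _ ⟨a, ha, rfl⟩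
          exact ⟨X.diff a, X.isdiff.grade i a ha, rfl⟩
        d_sq := fun x => by
          obtain ⟨a, rfl⟩ := Ideal.Quotient.mkₐ_surjective k I x
          exact (congrArg (Ideal.Quotient.mkₐ k I) (X.isdiff.d_sq a)).trans (map_zero _)
        leibniz := by
          rintro i _ x ⟨a, ha, rfl⟩
          obtain ⟨b, rfl⟩ := Ideal.Quotient.mkₐ_surjective k I x
          exact (congrArg (Ideal.Quotient.mkₐ k I) (X.isdiff.leibniz i a b ha)).trans
            ((map_add _ _ _).trans (congrArg _ (map_smul _ _ _))) } }

/-- The projection onto the quotient CDGA. -/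
noncomputable def CDGAPack.quotientMk (hproj : ∀ i, ∀ a ∈ I, proj X.grading i a ∈ I)
    (hdiff : ∀ a ∈ I, X.diff a ∈ I) : X.Hom (X.quotient hproj hdiff) where
  toAlgHom := Ideal.Quotient.mkₐ k I
  map_mem' _ a ha := ⟨a, ha, rfl⟩
  diff_map' _ := rfl

end Quotient

section OrphanQuotient

namespace IsClosedFunctional

variable {X : CDGAPack k} {n : ℕ} {ε : X.carrier →ₗ[k] k} (h : IsClosedFunctional X n ε)

/-- The orphans of a closed functional, as an ideal. -/
def orphanIdeal : Ideal X.carrier :=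
  { (Orphans ε).toAddSubmonoid with
    smul_mem' := fun c _ ha => h.mul_mem_orphans_right ha c }

instance : h.orphanIdeal.IsTwoSided :=
  ⟨fun b ha => (mem_orphans ε _).2 fun c => by
    rw [mul_assoc]
    exact (mem_orphans ε _).1 ha _⟩

/-- The quotient of `X` by the orphans of `ε`: the universal quotient on which `ε` induces a
non-degenerate pairing. -/
noncomputable def orphanQuotient : CDGAPack k :=
  X.quotient (I := h.orphanIdeal) (fun i _ ha => h.proj_mem_orphans ha i)
    fun _ => h.diff_mem_orphans

/-- The projection onto the orphan quotient. -/
noncomputable def orphanMk : X.Hom h.orphanQuotient :=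
  CDGAPack.quotientMk _ _

/-- The functional induced by `ε` on the orphan quotient. -/
noncomputable def orphanFunctional : h.orphanQuotient.carrier →ₗ[k] k :=
  quotientLift X h.orphanIdeal ε fun a ha => by simpa using (mem_orphans ε a).1 ha 1

@[simp] lemma orphanFunctional_orphanMk (a : X.carrier) : h.orphanFunctional (h.orphanMk a) = ε a :=
  rfl

lemma orphanMk_surjective : Function.Surjective h.orphanMk :=
  Ideal.Quotient.mkₐ_surjective k h.orphanIdeal

lemma orphanMk_eq_zero_iff {a : X.carrier} : h.orphanMk a = 0 ↔ a ∈ Orphans ε :=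
  Ideal.Quotient.eq_zero_iff_mem

lemma exists_orphanMk_eq {i : ℕ} {x : h.orphanQuotient.carrier}
    (hx : x ∈ h.orphanQuotient.grading i) : ∃ a ∈ X.grading i, h.orphanMk a = x := hx

theorem isPoincareDuality_orphanFunctional (hX : ∀ i, FiniteDimensional k (X.grading i)) :
    IsPoincareDuality h.orphanQuotient n h.orphanFunctional where
  eq_zero_of_mem i hi x hx := by
    obtain ⟨a, ha, rfl⟩ := h.exists_orphanMk_eq hx
    exact h.eq_zero_of_mem i hi a ha
  map_diff x := by
    obtain ⟨a, rfl⟩ := h.orphanMk_surjective x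
    rw [h.orphanMk.diff_map]
    exact h.map_diff a
  finite i := by
    have := hX i
    exact Module.Finite.map (X.grading i) h.orphanMk.toAlgHom.toLinearMap
  nondegenerate i x hx hx0 := by
    obtain ⟨a, ha, rfl⟩ := h.exists_orphanMk_eq hx
    obtain ⟨j, b, hij, hb, hab⟩ := h.exists_mul_ne_zero ha (mt h.orphanMk_eq_zero_iff.2 hx0)
    refine ⟨j, h.orphanMk b, hij, h.orphanMk.map_mem hb, ?_⟩
    rwa [← map_mul, orphanFunctional_orphanMk]

end IsClosedFunctional

end OrphanQuotient

/-! ### Making boundaries into non-orphans -/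

section OrphanBoundaries

open GradedAlgebra (proj)

lemma exists_dual_functionals {V : Type*} [AddCommGroup V] [Module k V] (W : Submodule k V)
    [FiniteDimensional k W] :
    ∃ (m : ℕ) (w : Fin m → V) (φ : Fin m → V →ₗ[k] k), (∀ s, w s ∈ W) ∧ (∀ s, φ s (w s) = 1) ∧
      (∀ s t, s ≠ t → φ t (w s) = 0) ∧ ∀ v ∈ W, (∀ s, φ s v = 0) → v = 0 := by
  let basis := Module.finBasis k W
  choose φ φ_comp using fun s => LinearMap.exists_extend (basis.coord s)
  have φ_apply (s) (w : W) : φ s w = basis.coord s w := LinearMap.congr_fun (φ_comp s) w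
  refine ⟨_, fun s => basis s, φ, fun s => (basis s).2, fun s => ?_, fun s t hst => ?_,
    fun v hv hφ => ?_⟩
  · rw [φ_apply, Module.Basis.coord_apply, Module.Basis.repr_self, Finsupp.single_eq_same]
  · rw [φ_apply, Module.Basis.coord_apply, Module.Basis.repr_self, Finsupp.single_eq_of_ne hst.symm]
  · have : (⟨v, hv⟩ : W) = 0 := basis.forall_coord_eq_zero_iff.1 fun s =>
      (φ_apply s ⟨v, hv⟩).symm.trans (hφ s)
    exact congrArg Subtype.val this

/-- Finitely many elements `prim t`, of degree `deg t ≤ n / 2`, whose differentials form a basis of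
the orphan boundaries `d(Aⁱ) ∩ O`, `i ≤ n / 2`, together with the dual functionals `form t`. -/
structure OrphanBoundaryBasis (A : CDGAPack k) (n : ℕ) (ε : A.carrier →ₗ[k] k) where
  ι : Type
  [fintype : Fintype ι]
  deg : ι → ℕ
  prim : ι → A.carrier
  form : ι → A.carrier →ₗ[k] k
  two_mul_deg_le : ∀ t, 2 * deg t ≤ n
  prim_mem : ∀ t, prim t ∈ A.grading (deg t)
  diff_prim_mem_orphans : ∀ t, A.diff (prim t) ∈ Orphans ε
  form_eq_zero_of_mem : ∀ t i, i ≠ deg t + 1 → ∀ a ∈ A.grading i, form t a = 0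
  form_diff_prim_self : ∀ t, form t (A.diff (prim t)) = 1
  form_diff_prim_ne : ∀ t s, s ≠ t → form s (A.diff (prim t)) = 0
  diff_eq_zero : ∀ i, 2 * i ≤ n → ∀ a ∈ A.grading i, A.diff a ∈ Orphans ε →
    (∀ t, form t (A.diff a) = 0) → A.diff a = 0

attribute [instance] OrphanBoundaryBasis.fintype

namespace OrphanBoundaryBasis

theorem nonempty {A : CDGAPack k} (hA : ∀ i, FiniteDimensional k (A.grading i)) (n : ℕ)
    (ε : A.carrier →ₗ[k] k) : Nonempty (OrphanBoundaryBasis A n ε) := by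
  let W (i : ℕ) : Submodule k A.carrier := (A.grading i).map A.diff ⊓ Orphans ε
  have finite_W (i : ℕ) : FiniteDimensional k (W i) :=
    have := hA i
    Submodule.finiteDimensional_of_le (inf_le_left : W i ≤ (A.grading i).map A.diff)
  choose m w form w_mem form_self form_ne separating using fun i => exists_dual_functionals (W i)
  choose prim prim_mem diff_prim using fun i s => (w_mem i s).1
  have proj_diff_prim (i s) : proj A.grading (i + 1) (A.diff (prim i s)) = w i s := by
    rw [proj_of_mem _ (A.isdiff.grade _ _ (prim_mem i s)), diff_prim]
  exact ⟨{
    ι := Σ i : Fin (n / 2 + 1), Fin (m i)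
    deg t := t.1
    prim t := prim t.1 t.2
    form t := form t.1 t.2 ∘ₗ proj A.grading (t.1 + 1)
    two_mul_deg_le t := by omega
    prim_mem t := prim_mem _ _
    diff_prim_mem_orphans t := diff_prim t.1 t.2 ▸ (w_mem t.1 t.2).2
    form_eq_zero_of_mem t i hi a ha := by
      rw [LinearMap.comp_apply, proj_of_mem_ne _ ha hi, map_zero]
    form_diff_prim_self t := by rw [LinearMap.comp_apply, proj_diff_prim, form_self]
    form_diff_prim_ne := by
      rintro ⟨i, s⟩ ⟨i', s'⟩ hne
      rw [LinearMap.comp_apply]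
      obtain rfl | hii' := eq_or_ne i i'
      · rw [proj_diff_prim]
        exact form_ne i s s' fun h => hne (congrArg (Sigma.mk i) h.symm)
      · rw [proj_of_mem_ne _ (A.isdiff.grade _ _ (prim_mem i s))
          (by simpa [Fin.ext_iff] using hii'), map_zero]
    diff_eq_zero i hi a ha hO hform := by
      refine separating i _ ⟨⟨a, ha, rfl⟩, hO⟩ fun s => ?_
      simpa only [LinearMap.comp_apply, proj_of_mem _ (A.isdiff.grade _ _ ha)]
        using hform ⟨⟨i, by omega⟩, s⟩ }⟩

variable {A : CDGAPack k} {n : ℕ} {ε : A.carrier →ₗ[k] k} (B : OrphanBoundaryBasis A n ε)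

lemma two_le_deg (hA : SimplyConnectedOfFiniteType A.grading) (t : B.ι) : 2 ≤ B.deg t := by
  have diff_ne_zero : A.diff (B.prim t) ≠ 0 := fun h => by
    simpa [h] using B.form_diff_prim_self t
  have hprim := B.prim_mem t
  by_contra hlt
  obtain hdeg | hdeg : B.deg t = 0 ∨ B.deg t = 1 := by omega
  · obtain ⟨c, hc⟩ := hA.eq_smul_one _ (hdeg ▸ hprim)
    exact diff_ne_zero (by rw [hc, map_smul, A.diff_one, smul_zero])
  · rw [hdeg, hA.one_eq_bot, Submodule.mem_bot] at hprim
    exact diff_ne_zero (by rw [hprim, map_zero])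

/-- The degree of the generator that is paired with `d (prim t)` in dimension `n`. -/
def codeg (t : B.ι) : ℕ := n - (B.deg t + 1)

lemma codeg_add (hA : SimplyConnectedOfFiniteType A.grading) (t : B.ι) :
    B.codeg t + (B.deg t + 1) = n := by
  have := B.two_le_deg hA t
  have := B.two_mul_deg_le t
  unfold codeg
  omega

lemma codeg_ne_zero (hA : SimplyConnectedOfFiniteType A.grading) (t : B.ι) : B.codeg t ≠ 0 := by
  have := B.codeg_add hA t
  have := B.two_le_deg hA t
  have := B.two_mul_deg_le t
  omega

lemma le_codeg_add_one (hA : SimplyConnectedOfFiniteType A.grading) {i : ℕ} (hi : 2 * i ≤ n)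
    (t : B.ι) : i ≤ B.codeg t + 1 := by
  have := B.codeg_add hA t
  have := B.two_mul_deg_le t
  omega

end OrphanBoundaryBasis

end OrphanBoundaries

section Contractible

variable {ι : Type} [Finite ι] (e : ι → ℕ) (he : ∀ t, e t ≠ 0)

/-- The contractible square-zero algebra on generators `x t` of degree `e t` and their differentials
`d (x t)`, indexed by the two summands of `ι ⊕ ι`. -/
noncomputable def contractible : CDGAPack k :=
  SquareZero.cdga (deg := Sum.elim e fun t => e t + 1)
    (by rintro (t | t); exacts [he t, Nat.succ_ne_zero _])
    (LinearMap.pi (Sum.elim (fun _ => 0) fun t => LinearMap.proj (Sum.inl t)))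
    (by
      rintro v (t | t) hv
      exacts [rfl, hv (Sum.inl t) rfl])
    (fun v => by ext (t | t) <;> rfl)

namespace contractible

/-- The coefficient of `1`. -/
noncomputable def unitCoeff : (contractible (k := k) e he).carrier →ₗ[k] k :=
  LinearMap.fst k k (ι ⊕ ι → k)

/-- The coefficient of the generator `x t`. -/
noncomputable def genCoeff (t : ι) : (contractible (k := k) e he).carrier →ₗ[k] k :=
  LinearMap.proj (Sum.inl t) ∘ₗ LinearMap.snd k k (ι ⊕ ι → k)

/-- The coefficient of `d (x t)`. -/
noncomputable def diffGenCoeff (t : ι) : (contractible (k := k) e he).carrier →ₗ[k] k :=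
  LinearMap.proj (Sum.inr t) ∘ₗ LinearMap.snd k k (ι ⊕ ι → k)

variable {e he} {v : (contractible (k := k) e he).carrier}

@[simp] lemma unitCoeff_one : unitCoeff e he (1 : (contractible (k := k) e he).carrier) = 1 := rfl

@[simp] lemma genCoeff_one (t : ι) :
    genCoeff e he t (1 : (contractible (k := k) e he).carrier) = 0 := rfl

@[simp] lemma diffGenCoeff_one (t : ι) :
    diffGenCoeff e he t (1 : (contractible (k := k) e he).carrier) = 0 := rfl

@[simp] lemma unitCoeff_diff : unitCoeff e he ((contractible e he).diff v) = 0 := rfl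

@[simp] lemma genCoeff_diff (t : ι) : genCoeff e he t ((contractible e he).diff v) = 0 := rfl

@[simp] lemma diffGenCoeff_diff (t : ι) :
    diffGenCoeff e he t ((contractible e he).diff v) = genCoeff e he t v := rfl

lemma ext {w : (contractible (k := k) e he).carrier} (hunit : unitCoeff e he v = unitCoeff e he w)
    (hgen : ∀ t, genCoeff e he t v = genCoeff e he t w)
    (hdiff : ∀ t, diffGenCoeff e he t v = diffGenCoeff e he t w) : v = w :=
  SquareZero.ext hunit (Sum.rec hgen hdiff)

lemma exists_genCoeff_eq (c : ι → k) : ∃ u : (contractible (k := k) e he).carrier,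
    unitCoeff e he u = 0 ∧ (∀ t, genCoeff e he t u = c t) ∧ ∀ t, diffGenCoeff e he t u = 0 :=
  ⟨TrivSqZeroExt.inr (Sum.elim c 0), rfl, fun _ => rfl, fun _ => rfl⟩

lemma unitCoeff_of_mem {j : ℕ} (hj : j ≠ 0) (hv : v ∈ (contractible e he).grading j) :
    unitCoeff e he v = 0 := hv.1 hj

lemma genCoeff_of_mem {j : ℕ} (hv : v ∈ (contractible e he).grading j) {t : ι} (ht : e t ≠ j) :
    genCoeff e he t v = 0 := hv.2 (Sum.inl t) ht

lemma diffGenCoeff_of_mem {j : ℕ} (hv : v ∈ (contractible e he).grading j) {t : ι}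
    (ht : e t + 1 ≠ j) : diffGenCoeff e he t v = 0 := hv.2 (Sum.inr t) ht

lemma finite_grading (i : ℕ) : FiniteDimensional k ((contractible (k := k) e he).grading i) :=
  have : FiniteDimensional k (contractible (k := k) e he).carrier :=
    SquareZero.finiteDimensional (ι := ι ⊕ ι)
  inferInstance

lemma eq_smul_one (hv : v ∈ (contractible e he).grading 0) : ∃ c : k, v = c • 1 :=
  ⟨unitCoeff e he v, SquareZero.eq_smul_one
    (by rintro (t | t); exacts [he t, Nat.succ_ne_zero _]) hv⟩

lemma grading_eq_bot {j : ℕ} (hj0 : j ≠ 0) (hj : ∀ t, j < e t) :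
    (contractible (k := k) e he).grading j = ⊥ := by
  refine (Submodule.eq_bot_iff _).2 fun v hv => ext ?_ (fun t => ?_) fun t => ?_
  · rw [unitCoeff_of_mem hj0 hv, map_zero]
  · rw [genCoeff_of_mem hv (hj t).ne', map_zero]
  · rw [diffGenCoeff_of_mem hv (by have := hj t; omega), map_zero]

lemma exists_eq_smul_one_add_diff (hgen : ∀ t, genCoeff e he t v = 0) :
    ∃ u, v = unitCoeff e he v • 1 + (contractible e he).diff u := by
  obtain ⟨u, -, hu, -⟩ := exists_genCoeff_eq (he := he) fun t => diffGenCoeff e he t v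
  exact ⟨u, ext (by simp) (by simp [hgen]) (by simp [hu])⟩

end contractible

end Contractible

section ExtendedFunctional

open contractible

variable {A : CDGAPack k} {ι : Type} [Fintype ι] {e : ι → ℕ} {he : ∀ t, e t ≠ 0}
  {ε : A.carrier →ₗ[k] k} {ψ : ι → A.carrier →ₗ[k] k}

/-- The functional `φ ⊗ ξ` on a tensor product. -/
noncomputable def tmulFunctional {X Y : CDGAPack k} (φ : X.carrier →ₗ[k] k)
    (ξ : Y.carrier →ₗ[k] k) : (tensor X Y).carrier →ₗ[k] k :=
  tmulLift ((LinearMap.mul k k).compl₁₂ φ ξ)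

variable (e he ε ψ) in
/-- The extension of `ε` to `A ⊗ contractible e he` whose value on `a ⊗ x t` is `ψ t a`. The last
summand is the one that makes it vanish on boundaries. -/
noncomputable def extendedFunctional : (tensor A (contractible e he)).carrier →ₗ[k] k :=
  tmulFunctional ε (unitCoeff e he) + ∑ t, (tmulFunctional (ψ t) (genCoeff e he t) -
    tmulFunctional (ψ t ∘ₗ A.diff ∘ₗ gradeInvolution A.grading) (diffGenCoeff e he t))

lemma extendedFunctional_tmul (a : A.carrier) (v : (contractible (k := k) e he).carrier) :
    extendedFunctional e he ε ψ (tmul A.grading (contractible e he).grading a v) =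
      ε a * unitCoeff e he v + ∑ t, (ψ t a * genCoeff e he t v -
        ψ t (A.diff (gradeInvolution A.grading a)) * diffGenCoeff e he t v) := by
  rw [extendedFunctional, LinearMap.add_apply, LinearMap.sum_apply]
  rfl

lemma extendedFunctional_tmul_of_mem {i : ℕ} {a : A.carrier} (ha : a ∈ A.grading i)
    (v : (contractible (k := k) e he).carrier) :
    extendedFunctional e he ε ψ (tmul A.grading (contractible e he).grading a v) =
      ε a * unitCoeff e he v + ∑ t, (ψ t a * genCoeff e he t v -
        (-1) ^ i * (ψ t (A.diff a) * diffGenCoeff e he t v)) := by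
  rw [extendedFunctional_tmul, gradeInvolution_of_mem _ ha]
  simp only [map_smul, smul_eq_mul, mul_assoc]

theorem isClosedFunctional_extendedFunctional {n : ℕ} (hε : IsClosedFunctional A n ε) {p : ι → ℕ}
    (hp : ∀ t, e t + p t = n) (hψ : ∀ t i, i ≠ p t → ∀ a ∈ A.grading i, ψ t a = 0) :
    IsClosedFunctional (tensor A (contractible e he)) n (extendedFunctional e he ε ψ) where
  eq_zero_of_mem i hi x hx := by
    induction hx using tensorGrading_induction with
    | zero => exact map_zero _
    | add x y _ _ hx hy => exact (map_add _ x y).trans (by rw [hx, hy, add_zero])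
    | tmul r s hrs a ha v hv =>
      have unit_term : ε a * unitCoeff e he v = 0 := by
        obtain rfl | hs := eq_or_ne s 0
        · rw [hε.eq_zero_of_mem r (by omega) a ha, zero_mul]
        · rw [unitCoeff_of_mem hs hv, mul_zero]
      have gen_term (t) : ψ t a * genCoeff e he t v = 0 := by
        obtain hs | hs := eq_or_ne (e t) s
        · rw [hψ t r (by have := hp t; omega) a ha, zero_mul]
        · rw [genCoeff_of_mem hv hs, mul_zero]
      have diff_term (t) : ψ t (A.diff a) * diffGenCoeff e he t v = 0 := by
        obtain hs | hs := eq_or_ne (e t + 1) s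
        · rw [hψ t (r + 1) (by have := hp t; omega) _ (A.isdiff.grade r a ha), zero_mul]
        · rw [diffGenCoeff_of_mem hv hs, mul_zero]
      refine (extendedFunctional_tmul_of_mem ha v).trans ?_
      simp [unit_term, gen_term, diff_term]
  map_diff x := by
    refine LinearMap.congr_fun (linearMap_ext_tmul (f := extendedFunctional e he ε ψ ∘ₗ
      (tensor A (contractible e he)).diff) (g := 0) fun i j a ha v _ => ?_) x
    change extendedFunctional e he ε ψ ((tensor A _).diff (tmul _ _ a v)) = 0
    rw [tensor.diff_tmul_of_mem ha, map_add, map_smul, extendedFunctional_tmul_of_mem ha,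
      extendedFunctional_tmul_of_mem (A.isdiff.grade i a ha), A.isdiff.d_sq]
    simp [hε.map_diff, Finset.mul_sum, ← mul_assoc, ← mul_pow]

end ExtendedFunctional

section LowDegreeCocycles

open contractible

variable {A : CDGAPack k} {n : ℕ} {ε : A.carrier →ₗ[k] k}

namespace OrphanBoundaryBasis

variable (B : OrphanBoundaryBasis A n ε) (hA : SimplyConnectedOfFiniteType A.grading)

/-- The contractible algebra with one generator `x t` dual to each orphan boundary `d (prim t)`. -/
noncomputable abbrev dualAlgebra : CDGAPack k := contractible B.codeg (B.codeg_ne_zero hA)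

/-- The extension of `ε` to `A ⊗ dualAlgebra` that pairs `d (prim t)` with `x t`, so that
`d (prim t)` is no longer an orphan. -/
noncomputable abbrev functional : (tensor A (B.dualAlgebra hA)).carrier →ₗ[k] k :=
  extendedFunctional B.codeg (B.codeg_ne_zero hA) ε B.form

variable {B hA} {v : (B.dualAlgebra hA).carrier}

lemma functional_tmul_one (a : A.carrier) :
    B.functional hA (tmul A.grading (B.dualAlgebra hA).grading a 1) = ε a := by
  refine (extendedFunctional_tmul a 1).trans ?_
  simp

lemma functional_prim_tmul_diff (t : B.ι) :
    B.functional hA (tmul A.grading (B.dualAlgebra hA).grading (B.prim t)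
      ((B.dualAlgebra hA).diff v)) = -((-1) ^ B.deg t * genCoeff _ _ t v) := by
  refine (extendedFunctional_tmul_of_mem (B.prim_mem t) _).trans ?_
  rw [Finset.sum_eq_single t (fun s _ hst => by simp [B.form_diff_prim_ne t s hst]) (by simp)]
  simp [B.form_diff_prim_self]

lemma genCoeff_eq_zero_of_mem_orphans (hε : IsClosedFunctional A n ε) {i j : ℕ}
    {a : A.carrier} (ha : a ∈ A.grading i) (hv : v ∈ (B.dualAlgebra hA).grading j)
    (hO : tmul A.grading (B.dualAlgebra hA).grading (A.diff a) 1 +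
      tmul A.grading (B.dualAlgebra hA).grading 1 ((B.dualAlgebra hA).diff v) ∈
        Orphans (B.functional hA)) (t : B.ι) :
    genCoeff B.codeg (B.codeg_ne_zero hA) t v = 0 := by
  let prim' := tmul A.grading (B.dualAlgebra hA).grading (B.prim t) 1
  have left_term : B.functional hA
      (tmul A.grading (B.dualAlgebra hA).grading (A.diff a) 1 * prim') = 0 := by
    rw [tmul_one_mul_tmul, functional_tmul_one, hε.map_diff_mul ha,
      hε.map_mul_of_mem_orphans (B.diff_prim_mem_orphans t), mul_zero, neg_zero]
  have right_term : B.functional hA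
      (tmul A.grading (B.dualAlgebra hA).grading 1 ((B.dualAlgebra hA).diff v) * prim') =
      (-1) ^ ((j + 1) * B.deg t) * -((-1) ^ B.deg t * genCoeff _ _ t v) := by
    rw [tmul_mul_tmul 1 ((B.dualAlgebra hA).isdiff.grade j v hv) (B.prim_mem t) 1, one_mul,
      mul_one, map_smul, functional_prim_tmul_diff, smul_eq_mul]
  have h0 := (mem_orphans _ _).1 hO prim'
  rw [add_mul, map_add, left_term, right_term] at h0
  simpa using h0

lemma mem_orphans_of_tmul_one_mem {a : A.carrier}
    (hO : tmul A.grading (B.dualAlgebra hA).grading a 1 ∈ Orphans (B.functional hA)) :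
    a ∈ Orphans ε := by
  refine (mem_orphans ε a).2 fun c => ?_
  rw [← functional_tmul_one (B := B) (hA := hA), ← tmul_one_mul_tmul]
  exact (mem_orphans _ _).1 hO _

lemma form_eq_zero_of_tmul_one_mem {a : A.carrier}
    (hO : tmul A.grading (B.dualAlgebra hA).grading a 1 ∈ Orphans (B.functional hA)) (t : B.ι) :
    B.form t a = 0 := by
  classical
  obtain ⟨u, hu₁, hu₂, hu₃⟩ := exists_genCoeff_eq (he := B.codeg_ne_zero hA)
    (Pi.single (M := fun _ => k) t 1)
  have h0 := (mem_orphans _ _).1 hO (tmul A.grading (B.dualAlgebra hA).grading 1 u)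
  rw [tmul_one_mul_tmul, mul_one, extendedFunctional_tmul] at h0
  simpa [hu₁, hu₂, hu₃, Pi.single_apply] using h0

theorem exists_cocycle_add_diff_of_diff_mem_orphans (hε : IsClosedFunctional A n ε) {i : ℕ}
    (hi : 2 * i ≤ n) {x : (tensor A (B.dualAlgebra hA)).carrier}
    (hx : x ∈ (tensor A (B.dualAlgebra hA)).grading i)
    (hO : (tensor A (B.dualAlgebra hA)).diff x ∈ Orphans (B.functional hA)) :
    ∃ a ∈ A.cocycles i, ∃ y, x = tensor.inl A _ a + (tensor A (B.dualAlgebra hA)).diff y := by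
  let K := B.dualAlgebra hA
  obtain ⟨a, ha, v, hv, rfl⟩ := hA.exists_eq_tmul_one_add_one_tmul (q := i - 1)
    (fun v hv => contractible.eq_smul_one (he := B.codeg_ne_zero hA) hv)
    (fun j hj0 hj => contractible.grading_eq_bot hj0.ne' fun t => by
      have := B.le_codeg_add_one hA hi t
      omega) (by omega) hx
  have diff_eq : (tensor A K).diff (tmul A.grading K.grading a 1 + tmul A.grading K.grading 1 v) =
      tmul A.grading K.grading (A.diff a) 1 + tmul A.grading K.grading 1 (K.diff v) :=
    (map_add _ _ _).trans (congrArg₂ _ ((tensor.inl A K).diff_map a) ((tensor.inr A K).diff_map v))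
  rw [diff_eq] at hO
  have hgen := genCoeff_eq_zero_of_mem_orphans hε ha hv hO
  have diff_v : K.diff v = 0 := contractible.ext rfl (fun _ => rfl) hgen
  rw [diff_v, map_zero, add_zero] at hO
  have diff_a : A.diff a = 0 := B.diff_eq_zero i hi a ha (mem_orphans_of_tmul_one_mem hO)
    (form_eq_zero_of_tmul_one_mem hO)
  obtain ⟨u, hu⟩ := contractible.exists_eq_smul_one_add_diff hgen
  have one_mem : unitCoeff B.codeg (B.codeg_ne_zero hA) v • (1 : A.carrier) ∈ A.cocycles i := by
    obtain rfl | hi0 := eq_or_ne i 0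
    · exact ⟨Submodule.smul_mem _ _ A.one_mem, by simp [A.diff_one]⟩
    · rw [unitCoeff_of_mem hi0 hv, zero_smul]
      exact zero_mem _
  refine ⟨_, add_mem ⟨ha, diff_a⟩ one_mem, tensor.inr A K u, ?_⟩
  rw [(tensor.inr A K).diff_map, tensor.inl_apply, tensor.inr_apply, map_add, LinearMap.add_apply,
    add_assoc, map_smul, LinearMap.smul_apply, ← map_smul, ← map_add, ← hu]

end OrphanBoundaryBasis

end LowDegreeCocycles

/-! ### The common target -/

section QuasiIsomorphism

open GradedAlgebra (proj)

variable {X Y : CDGAPack k} {n : ℕ}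

theorem CDGAPack.Hom.isQuasiIsoMap (F : X.Hom Y)
    (injective : ∀ i, ∀ a ∈ X.cocycles i, F a ∈ LinearMap.range Y.diff → a ∈ LinearMap.range X.diff)
    (surjective : ∀ i, ∀ c ∈ Y.cocycles i, ∃ a ∈ X.cocycles i, ∃ y, c = F a + Y.diff y) :
    IsQuasiIsoMap X Y F.toAlgHom := by
  refine ⟨F.map_mem', F.diff_map', fun a ha hFa => ?_, fun c hc => ?_⟩
  · obtain ⟨b, hb⟩ := hFa
    obtain ⟨a', rfl⟩ := mem_of_forall_proj_mem X.grading (S := LinearMap.range X.diff) (a := a)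
      fun i => injective i _ (X.proj_mem_cocycles i ha) (by
        rw [← F.proj_map]
        exact Y.proj_diff_mem_range i ⟨b, hb.symm⟩)
    exact ⟨a', rfl⟩
  · have hmem := mem_of_forall_proj_mem Y.grading (a := c)
      (S := (LinearMap.ker X.diff).map F.toAlgHom.toLinearMap ⊔ LinearMap.range Y.diff) fun i => by
        obtain ⟨a, ha, y, hy⟩ := surjective i _ (Y.proj_mem_cocycles i hc)
        exact Submodule.mem_sup.2 ⟨F a, ⟨a, ha.2, rfl⟩, Y.diff y, ⟨y, rfl⟩, hy.symm⟩
    obtain ⟨_, ⟨a, ha, rfl⟩, _, ⟨y, rfl⟩, rfl⟩ := Submodule.mem_sup.1 hmem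
    exact ⟨a, y, ha, rfl⟩

theorem CDGAPack.Hom.IsEquivBelow.isQuasiIsoMap {F : X.Hom Y} {M : ℕ} (hF : F.IsEquivBelow M)
    (hX : ∀ i, M < i → X.grading i = ⊥) (hY : ∀ i, M ≤ i → Y.grading i = ⊥) :
    IsQuasiIsoMap X Y F.toAlgHom := by
  refine F.isQuasiIsoMap (fun i a ha hFa => ?_) fun i c hc => ?_
  · obtain hi | hi := le_or_gt i M
    · exact hF.mem_range_diff hi ha hFa
    · have ha0 : a = 0 := (Submodule.mem_bot k).1 (hX i hi ▸ ha.1)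
      exact ha0 ▸ zero_mem _
  · obtain hi | hi := lt_or_ge i M
    · exact hF.exists_cocycle_add_diff hi hc
    · have hc0 : c = 0 := (Submodule.mem_bot k).1 (hY i hi ▸ hc.1)
      exact ⟨0, zero_mem _, 0, by simp [hc0]⟩

namespace IsPoincareDuality

variable {εX : X.carrier →ₗ[k] k} {εY : Y.carrier →ₗ[k] k} {F : X.Hom Y}
  (hX : IsPoincareDuality X n εX) (hY : IsPoincareDuality Y n εY) (hF : ∀ x, εY (F x) = εX x)
include hX

lemma exists_cocycle_represents {i j : ℕ} (hij : i + j = n) (hεY : IsClosedFunctional Y n εY)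
    (F : X.Hom Y) {c : Y.carrier} (hc : c ∈ Y.cocycles i) :
    ∃ x ∈ X.cocycles i, ∀ w ∈ X.grading j, εX (x * w) = εY (c * F w) := by
  obtain ⟨x, hx, hxw⟩ := hX.exists_represents hij
    (εY ∘ₗ LinearMap.mulLeft k c ∘ₗ F.toAlgHom.toLinearMap)
  refine ⟨x, ⟨hx, ?_⟩, hxw⟩
  obtain _ | j := j
  · exact hX.eq_zero_of_lt (by omega) (X.isdiff.grade i x hx)
  refine hX.eq_zero_of_forall_mul (by omega : i + 1 + j = n) (X.isdiff.grade i x hx) fun b hb => ?_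
  have hc' := hεY.map_diff_mul hc.1 (F b)
  rw [show Y.diff c = 0 from hc.2, zero_mul, map_zero, F.diff_map] at hc'
  exact ((hX.map_diff_mul hx b).trans
    (congrArg (-((-1) ^ i * ·)) (hxw _ (X.isdiff.grade j b hb)))).trans hc'.symm

include hF

theorem mem_range_diff_of_map (hεY : IsClosedFunctional Y n εY) {i : ℕ} {a : X.carrier}
    (ha : a ∈ X.cocycles i) (hFa : F a ∈ LinearMap.range Y.diff) : a ∈ LinearMap.range X.diff := by
  obtain hi | hi := le_or_gt i n
  · obtain ⟨b, hb⟩ := hFa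
    refine hX.mem_range_diff_of_forall_cocycles (by omega : i + (n - i) = n) ha.1 fun z hz => ?_
    rw [← hF, map_mul, ← hb, ← Y.diff_mul_of_diff_eq_zero b (F.map_mem_cocycles hz).2, hεY.map_diff]
  · rw [hX.eq_zero_of_lt hi ha.1]
    exact zero_mem _

include hY in
theorem isQuasiIsoMap_of_low_degrees (hlow : ∀ i, 2 * i ≤ n → ∀ c ∈ Y.cocycles i,
      ∃ a ∈ X.cocycles i, ∃ y, c = F a + Y.diff y) : IsQuasiIsoMap X Y F.toAlgHom := by
  refine F.isQuasiIsoMap (fun i a ha hFa => hX.mem_range_diff_of_map hF hY.toIsClosedFunctional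
    ha hFa) fun i c hc => ?_
  obtain hlow_i | hhigh := le_or_gt (2 * i) n
  · exact hlow i hlow_i c hc
  obtain hi | hi := lt_or_ge n i
  · exact ⟨0, zero_mem _, 0, by simp [hY.eq_zero_of_lt hi hc.1]⟩
  obtain ⟨j, hij⟩ := Nat.exists_eq_add_of_le hi
  obtain ⟨x, hx, hxw⟩ := hX.exists_cocycle_represents hij.symm hY.toIsClosedFunctional F hc
  have hsub : c - F x ∈ Y.cocycles i := sub_mem hc (F.map_mem_cocycles hx)
  obtain ⟨y, hy⟩ := hY.mem_range_diff_of_forall_cocycles hij.symm hsub.1 fun z hz => by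
    obtain ⟨w, hw, y, rfl⟩ := hlow j (by omega) z hz
    have diff_term := hY.map_diff_mul hsub.1 y
    rw [show Y.diff (c - F x) = 0 from hsub.2, zero_mul, map_zero, zero_eq_neg,
      mul_eq_zero] at diff_term
    rw [mul_add, map_add, diff_term.resolve_left (by simp), add_zero, sub_mul, map_sub,
      ← hxw w hw.1, ← map_mul, hF, sub_self]
  exact ⟨x, hx, y, by rw [hy, add_sub_cancel]⟩

end IsPoincareDuality

end QuasiIsomorphism

section CommonTarget

theorem IsPoincareDuality.exists_completion {X A : CDGAPack k} {n N : ℕ} {ε : X.carrier →ₗ[k] k}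
    (hX : IsPoincareDuality X n ε) (hA : SimplyConnectedOfFiniteType A.grading) {f : X.Hom A}
    (hf : f.IsEquivBelow N) (hN : n ≤ N) :
    ∃ (C : CDGAPack k) (εC : C.carrier →ₗ[k] k) (ρ : A.Hom C), IsPoincareDuality C n εC ∧
      (∀ x, εC (ρ (f x)) = ε x) ∧
      ∀ i, 2 * i ≤ n → ∀ c ∈ C.cocycles i, ∃ a ∈ A.cocycles i, ∃ y, c = ρ a + C.diff y := by
  obtain ⟨φ, hφ, hφf⟩ := hX.exists_extension hf hN
  obtain ⟨B⟩ := OrphanBoundaryBasis.nonempty hA.finite n φ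
  have closed : IsClosedFunctional (tensor A (B.dualAlgebra hA)) n (B.functional hA) :=
    isClosedFunctional_extendedFunctional hφ (B.codeg_add hA) B.form_eq_zero_of_mem
  refine ⟨closed.orphanQuotient, closed.orphanFunctional, closed.orphanMk.comp (tensor.inl A _),
    closed.isPoincareDuality_orphanFunctional
      (finite_tensorGrading hA.finite contractible.finite_grading),
    fun x => ?_, fun i hi c hc => ?_⟩
  · rw [CDGAPack.Hom.comp_apply, closed.orphanFunctional_orphanMk, tensor.inl_apply,
      OrphanBoundaryBasis.functional_tmul_one, hφf]
  · obtain ⟨x, hx, rfl⟩ := closed.exists_orphanMk_eq hc.1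
    have hO := closed.orphanMk_eq_zero_iff.1 ((closed.orphanMk.diff_map x).symm.trans hc.2)
    obtain ⟨a, ha, y, rfl⟩ :=
      OrphanBoundaryBasis.exists_cocycle_add_diff_of_diff_mem_orphans hφ hi hx hO
    exact ⟨a, ha, closed.orphanMk y, by
      rw [closed.orphanMk.diff_map]; exact map_add closed.orphanMk _ _⟩

theorem IsPoincareDuality.exists_common_target {X Y A : CDGAPack k} {n : ℕ}
    {εX : X.carrier →ₗ[k] k} {εY : Y.carrier →ₗ[k] k} (hX : IsPoincareDuality X n εX)
    (hY : IsPoincareDuality Y n εY) (hA : SimplyConnectedOfFiniteType A.grading) {f : X.Hom A}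
    {g : Y.Hom A} (hf : f.IsEquivBelow (n + 2)) (hg : g.IsEquivBelow (n + 2)) :
    ∃ (C : CDGAPack k) (εC : C.carrier →ₗ[k] k) (F : X.Hom C) (G : Y.Hom C),
      IsPoincareDuality C n εC ∧ IsQuasiIsoMap X C F.toAlgHom ∧ IsQuasiIsoMap Y C G.toAlgHom := by
  obtain ⟨C, εC, ρ, hC, hρ, hlow⟩ := hX.exists_completion hA hf (by omega)
  have hF : IsQuasiIsoMap X C (ρ.comp f).toAlgHom :=
    hX.isQuasiIsoMap_of_low_degrees hC hρ fun i hi c hc => by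
      obtain ⟨a, ha, y, rfl⟩ := hlow i hi c hc
      obtain ⟨x, hx, b, rfl⟩ := hf.exists_cocycle_add_diff (by omega) ha
      exact ⟨x, hx, ρ b + y, by rw [map_add, map_add, ρ.diff_map, add_assoc]; rfl⟩
  have hρ : ρ.IsEquivBelow (n + 1) := .of_comp_right hf (.of_isQuasiIso hF.2.2 _)
  exact ⟨C, εC, ρ.comp f, ρ.comp g, hC, hF,
    (hρ.comp (hg.mono (by omega))).isQuasiIsoMap (fun i hi => hY.grading_eq_bot (by omega))
      fun i hi => hC.grading_eq_bot hi⟩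

/-- The zero map onto the zero algebra. -/
noncomputable def CDGAPack.toZero (X Y : CDGAPack k) [Subsingleton Y.carrier] : X.Hom Y where
  toAlgHom := AlgHom.ofLinearMap 0 (Subsingleton.elim _ _) fun _ _ => Subsingleton.elim _ _
  map_mem' _ _ _ := zero_mem _
  diff_map' _ := Subsingleton.elim _ _

theorem CDGAPack.Hom.isQuasiIsoMap_of_subsingleton {X Y : CDGAPack k} [Subsingleton X.carrier]
    [Subsingleton Y.carrier] (F : X.Hom Y) : IsQuasiIsoMap X Y F.toAlgHom :=
  F.isQuasiIsoMap (fun _ _ _ _ => ⟨0, Subsingleton.elim _ _⟩)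
    fun _ _ _ => ⟨0, zero_mem _, 0, Subsingleton.elim _ _⟩

theorem common_poincare_duality_target_general {n : ℕ} {X Y : CDGAPack k}
    {εX : X.carrier →ₗ[k] k} {εY : Y.carrier →ₗ[k] k}
    (hX : IsPoincareDuality X n εX) (hY : IsPoincareDuality Y n εY)
    (hX0 : ∀ a ∈ X.grading 0, ∃ c : k, a = c • (1 : X.carrier)) (hX1 : X.grading 1 = ⊥)
    (hX2 : X.cocycles 2 = ⊥)
    (hY0 : ∀ a ∈ Y.grading 0, ∃ c : k, a = c • (1 : Y.carrier)) (hY1 : Y.grading 1 = ⊥)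
    (hY2 : Y.cocycles 2 = ⊥) (h : WeaklyEquivalent X Y) :
    ∃ (C : CDGAPack k) (εC : C.carrier →ₗ[k] k) (F : X.Hom C) (G : Y.Hom C),
      IsPoincareDuality C n εC ∧ IsQuasiIsoMap X C F.toAlgHom ∧ IsQuasiIsoMap Y C G.toAlgHom := by
  obtain _ | _ := subsingleton_or_nontrivial X.carrier
  · have : Subsingleton Y.carrier :=
      subsingleton_of_zero_eq_one (h.one_eq_zero_iff.1 (Subsingleton.elim _ _)).symm
    exact ⟨X, εX, .id X, Y.toZero X, hX, CDGAPack.Hom.isQuasiIsoMap_of_subsingleton _,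
      CDGAPack.Hom.isQuasiIsoMap_of_subsingleton _⟩
  · obtain ⟨A, f, g, hA, hf, hg⟩ :=
      h.exists_common_target ⟨hX0, hX1, hX.finite⟩ ⟨hY0, hY1, hY.finite⟩ hX2 hY2 (n + 2)
    exact hX.exists_common_target hY hA hf hg

end CommonTarget

/-- two quasi-isomorphic finite-type differential Poincaré duality
algebras of dimension `n ≥ 7` with `H^{≤3} = k` and trivial degrees `1, 2` admit a
common differential Poincaré duality algebra target via quasi-isomorphisms. -/
theorem common_poincare_duality_target {k : Type} [Field k]
    (n : ℕ) (hn : 7 ≤ n)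
    (X Y : CDGAPack k) (εX : X.carrier →ₗ[k] k) (εY : Y.carrier →ₗ[k] k)
    (hftX : ∀ i : ℕ, FiniteDimensional k (X.grading i))
    (hftY : ∀ i : ℕ, FiniteDimensional k (Y.grading i))
    (hXhom : ∀ i : ℕ, i ≠ n → ∀ a ∈ X.grading i, εX a = 0)
    (hXd : ∀ a : X.carrier, εX (X.diff a) = 0)
    (hXndl : ∀ (i : ℕ) (a : X.carrier), a ∈ X.grading i → a ≠ 0 →
      ∃ (jd : ℕ) (b : X.carrier), i + jd = n ∧ b ∈ X.grading jd ∧ εX (a * b) ≠ 0)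
    (hXndr : ∀ (jd : ℕ) (b : X.carrier), b ∈ X.grading jd → b ≠ 0 →
      ∃ (i : ℕ) (a : X.carrier), i + jd = n ∧ a ∈ X.grading i ∧ εX (a * b) ≠ 0)
    (hYhom : ∀ i : ℕ, i ≠ n → ∀ a ∈ Y.grading i, εY a = 0)
    (hYd : ∀ a : Y.carrier, εY (Y.diff a) = 0)
    (hYndl : ∀ (i : ℕ) (a : Y.carrier), a ∈ Y.grading i → a ≠ 0 →
      ∃ (jd : ℕ) (b : Y.carrier), i + jd = n ∧ b ∈ Y.grading jd ∧ εY (a * b) ≠ 0)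
    (hYndr : ∀ (jd : ℕ) (b : Y.carrier), b ∈ Y.grading jd → b ≠ 0 →
      ∃ (i : ℕ) (a : Y.carrier), i + jd = n ∧ a ∈ Y.grading i ∧ εY (a * b) ≠ 0)
    (hX0 : ∀ a ∈ X.grading 0, ∃ r : k, a = r • (1 : X.carrier))
    (hX1 : X.grading 1 = ⊥) (hX2 : X.grading 2 = ⊥)
    (hY0 : ∀ a ∈ Y.grading 0, ∃ r : k, a = r • (1 : Y.carrier))
    (hY1 : Y.grading 1 = ⊥) (hY2 : Y.grading 2 = ⊥)
    (hXH0 : ∀ a ∈ X.grading 0, X.diff a = 0 → ∃ r : k, a = r • (1 : X.carrier))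
    (hXH13 : ∀ i : ℕ, 1 ≤ i → i ≤ 3 → ∀ a ∈ X.grading i, X.diff a = 0 →
      a ∈ LinearMap.range X.diff)
    (hYH0 : ∀ a ∈ Y.grading 0, Y.diff a = 0 → ∃ r : k, a = r • (1 : Y.carrier))
    (hYH13 : ∀ i : ℕ, 1 ≤ i → i ≤ 3 → ∀ a ∈ Y.grading i, Y.diff a = 0 →
      a ∈ LinearMap.range Y.diff)
    (hwe : WeaklyEquivalent X Y) :
    ∃ (C : CDGAPack k) (εC : C.carrier →ₗ[k] k)
      (f : X.carrier →ₐ[k] C.carrier) (g : Y.carrier →ₐ[k] C.carrier),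
      (∀ i : ℕ, i ≠ n → ∀ a ∈ C.grading i, εC a = 0) ∧
      (∀ a : C.carrier, εC (C.diff a) = 0) ∧
      (∀ i jd : ℕ, i + jd = n → ∀ a ∈ C.grading i, a ≠ 0 →
        ∃ b ∈ C.grading jd, εC (a * b) ≠ 0) ∧
      (∀ i jd : ℕ, i + jd = n → ∀ b ∈ C.grading jd, b ≠ 0 →
        ∃ a ∈ C.grading i, εC (a * b) ≠ 0) ∧
      IsQuasiIsoMap X C f ∧ IsQuasiIsoMap Y C g := by
  obtain ⟨C, εC, F, G, hC, hF, hG⟩ := common_poincare_duality_target_general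
    (n := n) (εX := εX) (εY := εY) ⟨⟨hXhom, hXd⟩, hftX, hXndl⟩ ⟨⟨hYhom, hYd⟩, hftY, hYndl⟩
    hX0 hX1 (X.cocycles_eq_bot hX2) hY0 hY1 (Y.cocycles_eq_bot hY2) hwe
  exact ⟨C, εC, F.toAlgHom, G.toAlgHom, hC.eq_zero_of_mem, hC.map_diff,
    fun i j hij a ha ha0 => hC.exists_mul_ne_zero hij ha ha0,
    fun i j hij b hb hb0 => hC.exists_mul_ne_zero_right hij hb hb0, hF, hG⟩

end PDCDGA
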